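/- arXiv:0805.0349 — 3 statements merged into one kernel-verified Lean document; each statement's English description precedes it below -/
import Mathlib

section
/- Let D ⊆ ℝ^ℓ be a bounded basic open semialgebraic set, i.e. D = {x ∈ ℝ^ℓ | G_1(x) > 0, …, G_q(x) > 0} for polynomials G_1, …, G_q with integer coefficients, and assume D is bounded. Then the Lebesgue volume vol(D) is an elementary real number. -/
/-- The class of elementary functions `ℕ^n → ℕ`: the smallest class containing the
zero function, successor, projections, addition, multiplication and truncated
subtraction, and closed under composition, bounded summation and bounded product. -/
inductive Elem : ∀ {n : ℕ}, ((Fin n → ℕ) → ℕ) → Prop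
  | zero {n : ℕ} : Elem (fun _ : Fin n → ℕ => 0)
  | succ : Elem (fun x : Fin 1 → ℕ => x 0 + 1)
  | proj {n : ℕ} (i : Fin n) : Elem (fun x : Fin n → ℕ => x i)
  | add : Elem (fun x : Fin 2 → ℕ => x 0 + x 1)
  | mul : Elem (fun x : Fin 2 → ℕ => x 0 * x 1)
  | tsub : Elem (fun x : Fin 2 → ℕ => x 0 - x 1)
  | comp {m n : ℕ} {f : (Fin m → ℕ) → ℕ} {g : Fin m → (Fin n → ℕ) → ℕ} :
      Elem f → (∀ i, Elem (g i)) → Elem (fun x => f (fun i => g i x))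
  | bsum {n : ℕ} {f : (Fin (n + 1) → ℕ) → ℕ} : Elem f →
      Elem (fun x : Fin (n + 1) → ℕ =>
        ∑ t ∈ Finset.range (x 0 + 1), f (Fin.cons t (fun i => x i.succ)))
  | bprod {n : ℕ} {f : (Fin (n + 1) → ℕ) → ℕ} : Elem f →
      Elem (fun x : Fin (n + 1) → ℕ =>
        ∏ t ∈ Finset.range (x 0 + 1), f (Fin.cons t (fun i => x i.succ)))

/-- A one-variable function `ℕ → ℕ` is elementary. -/
def Elem1 (f : ℕ → ℕ) : Prop :=
  Elem (fun x : Fin 1 → ℕ => f (x 0))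

/-- A (nonnegative) real number is elementary if it is approximated, with an
elementary modulus, by an elementary rational Cauchy sequence. -/
def ElemReal (α : ℝ) : Prop :=
  ∃ a b c : ℕ → ℕ, Elem1 a ∧ Elem1 b ∧ Elem1 c ∧
    ∀ k : ℕ, 1 ≤ k → ∀ x : ℕ, c k ≤ x →
      |(a x : ℝ) / ((b x : ℝ) + 1) - α| < 1 / (k : ℝ)

/-!
Round the coordinates of a point up to the grid `N⁻¹ℤ`, one coordinate at a time. An axis-parallel
line meets the boundary of a basic open semialgebraic set in at most as many points as the sum of
the degrees of the defining polynomials, and rounding a point of that line along it can only carry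
the point across the boundary if it lies within `1/N` of one of these. By Fubini, each rounding thus
changes the volume by `O(1/N)`. The set of points whose full rounding lies in `D` is a union of grid
cubes, so its volume is `N^{-ℓ}` times the number of grid points in `D`. After clearing denominators
this number is an elementary function of `N`.
-/

open scoped Finset

/-! ### Elementary functions and elementary reals -/

namespace Elem

theorem comp₁ {n : ℕ} {f : ℕ → ℕ} {g : (Fin n → ℕ) → ℕ} (hf : Elem1 f) (hg : Elem g) :
    Elem fun x => f (g x) :=
  comp hf fun _ => hg

theorem comp₂ {n : ℕ} {f : ℕ → ℕ → ℕ} {g h : (Fin n → ℕ) → ℕ}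
    (hf : Elem fun x : Fin 2 → ℕ => f (x 0) (x 1)) (hg : Elem g) (hh : Elem h) :
    Elem fun x => f (g x) (h x) :=
  comp (g := ![g, h]) hf (Fin.forall_fin_two.2 ⟨hg, hh⟩)

variable {n : ℕ} {f g : (Fin n → ℕ) → ℕ}

theorem fun_add (hf : Elem f) (hg : Elem g) : Elem fun x => f x + g x := comp₂ add hf hg

theorem fun_mul (hf : Elem f) (hg : Elem g) : Elem fun x => f x * g x := comp₂ mul hf hg

theorem fun_tsub (hf : Elem f) (hg : Elem g) : Elem fun x => f x - g x := comp₂ tsub hf hg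

theorem const (c : ℕ) : Elem fun _ : Fin n → ℕ => c := by
  induction c with
  | zero => exact zero
  | succ c ih => exact comp succ fun _ => ih

theorem finset_prod {ι : Type*} (s : Finset ι) {f : ι → (Fin n → ℕ) → ℕ}
    (hf : ∀ i, Elem (f i)) : Elem fun x => ∏ i ∈ s, f i x := by
  classical
  induction s using Finset.induction_on with
  | empty => exact const 1
  | insert i s hi ih => simpa only [Finset.prod_insert hi] using (hf i).fun_mul ih

theorem pow (hf : Elem f) (d : ℕ) : Elem fun x => f x ^ d := by
  simpa only [Finset.prod_const, Finset.card_range] using finset_prod (Finset.range d) fun _ => hf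

theorem sum_range {f : (Fin (n + 1) → ℕ) → ℕ} {b : (Fin n → ℕ) → ℕ} (hf : Elem f) (hb : Elem b) :
    Elem fun x => ∑ t ∈ Finset.range (b x + 1), f (Fin.cons t x) := by
  simpa only [Fin.cons_zero, Fin.cons_succ] using
    comp (g := Fin.cons b fun i x => x i) (bsum hf) (Fin.forall_fin_succ.2 ⟨hb, proj⟩)

theorem sum_pi {b : ℕ → ℕ} (hb : Elem1 b) {k : ℕ} {f : (Fin (k + 1) → ℕ) → ℕ} (hf : Elem f) :
    Elem1 fun N => ∑ m : Fin k → Fin (b N + 1),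
      f (Fin.snoc (α := fun _ => ℕ) (fun i => (m i : ℕ)) N) := by
  induction k with
  | zero =>
    simpa [Elem1, Fin.snoc_zero] using comp hf fun _ => proj 0
  | succ k ih =>
    have hsum := ih (hf.sum_range (comp₁ hb (proj (Fin.last k))))
    unfold Elem1 at hsum ⊢
    convert hsum using 2 with x
    generalize x 0 = N
    simp only [Fin.snoc_last]
    rw [← (Fin.consEquiv fun _ : Fin (k + 1) => Fin (b N + 1)).sum_comp,
      Fintype.sum_prod_type_right]
    refine Finset.sum_congr rfl fun m _ => ?_
    rw [Finset.sum_range]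
    refine Finset.sum_congr rfl fun t _ => congrArg f ?_
    rw [Fin.cons_snoc_eq_snoc_cons]
    congr 1
    funext i
    cases i using Fin.cases <;> rfl

end Elem

/-- The integer-valued elementary functions of `n` natural arguments, encoded as the differences
of two elementary functions; they form a ring. -/
def elemIntSubring (n : ℕ) : Subring ((Fin n → ℕ) → ℤ) where
  carrier := {f | ∃ p q : (Fin n → ℕ) → ℕ, Elem p ∧ Elem q ∧ ∀ x, f x = p x - q x}
  zero_mem' := ⟨_, _, .const 0, .const 0, fun _ => rfl⟩
  one_mem' := ⟨_, _, .const 1, .const 0, fun _ => rfl⟩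
  add_mem' := by
    rintro f g ⟨p, q, hp, hq, hf⟩ ⟨p', q', hp', hq', hg⟩
    exact ⟨_, _, hp.fun_add hp', hq.fun_add hq', fun x => by
      rw [Pi.add_apply, hf, hg]; push_cast; ring⟩
  mul_mem' := by
    rintro f g ⟨p, q, hp, hq, hf⟩ ⟨p', q', hp', hq', hg⟩
    exact ⟨_, _, (hp.fun_mul hp').fun_add (hq.fun_mul hq'),
      (hp.fun_mul hq').fun_add (hq.fun_mul hp'), fun x => by
      rw [Pi.mul_apply, hf, hg]; push_cast; ring⟩
  neg_mem' := by
    rintro f ⟨p, q, hp, hq, hf⟩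
    exact ⟨q, p, hq, hp, fun x => by rw [Pi.neg_apply, hf, neg_sub]⟩

namespace Elem

variable {n : ℕ}

theorem natCast_mem_elemIntSubring {f : (Fin n → ℕ) → ℕ} (hf : Elem f) :
    (fun x => (f x : ℤ)) ∈ elemIntSubring n :=
  ⟨f, _, hf, const 0, fun x => by rw [Nat.cast_zero, sub_zero]⟩

theorem toNat {f : (Fin n → ℕ) → ℤ} (hf : f ∈ elemIntSubring n) : Elem fun x => (f x).toNat := by
  obtain ⟨p, q, hp, hq, h⟩ := hf
  simpa only [h, Int.toNat_sub] using hp.fun_tsub hq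

theorem ite_forall_pos {κ : Type*} [Fintype κ] {f : κ → (Fin n → ℕ) → ℤ}
    (hf : ∀ j, f j ∈ elemIntSubring n) : Elem fun x => if ∀ j, 0 < f j x then 1 else 0 := by
  have h := finset_prod Finset.univ fun j => (const 1).fun_tsub ((const 1).fun_tsub (toNat (hf j)))
  convert h using 2 with x
  have hj : ∀ j, 1 - (1 - (f j x).toNat) = if 0 < f j x then 1 else 0 := fun j => by
    split_ifs <;> omega
  simp only [hj, Finset.prod_boole, Finset.mem_univ, true_imp_iff]

end Elem

theorem exists_mem_subring_eq_pow_mul_aeval_div {X σ K : Type*} [Field K]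
    (S : Subring (X → ℤ)) {g : σ → X → ℤ} (hg : ∀ i, g i ∈ S) {b : X → ℤ} (hb : b ∈ S)
    (G : MvPolynomial σ ℤ) :
    ∃ d : ℕ, ∃ h ∈ S, ∀ x, (b x : K) ≠ 0 →
      (h x : K) = (b x : K) ^ d * MvPolynomial.aeval (fun i => (g i x : K) / b x) G := by
  induction G using MvPolynomial.induction_on with
  | C c => exact ⟨0, (c : X → ℤ), intCast_mem S c, fun x _ => by simp⟩
  | add p q hp hq =>
    obtain ⟨d, h, hh, hx⟩ := hp
    obtain ⟨d', h', hh', hx'⟩ := hq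
    refine ⟨d + d', b ^ d' * h + b ^ d * h',
      add_mem (mul_mem (pow_mem hb d') hh) (mul_mem (pow_mem hb d) hh'), fun x hbx => ?_⟩
    simp only [Pi.add_apply, Pi.mul_apply, Pi.pow_apply, Int.cast_add, Int.cast_mul, Int.cast_pow,
      hx x hbx, hx' x hbx, map_add]
    ring
  | mul_X p i hp =>
    obtain ⟨d, h, hh, hx⟩ := hp
    refine ⟨d + 1, h * g i, mul_mem hh (hg i), fun x hbx => ?_⟩
    rw [Pi.mul_apply, Int.cast_mul, hx x hbx, map_mul, MvPolynomial.aeval_X]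
    field_simp
    ring

theorem ElemReal.of_abs_div_pow_sub_le {a : ℕ → ℕ} (ha : Elem1 a) (d : ℕ) {C α : ℝ}
    (h : ∀ N ≠ 0, |a N / (N : ℝ) ^ d - α| ≤ C / N) : ElemReal α := by
  obtain ⟨M, hM⟩ := exists_nat_ge C
  refine ⟨a, fun N => N ^ d - 1, fun k => M * k + 1, ha, ((Elem.proj 0).pow d).fun_tsub (.const 1),
    ((Elem.const M).fun_mul (.proj 0)).fun_add (.const 1), fun k hk N hN => ?_⟩
  have hN0 : N ≠ 0 := Nat.ne_of_gt ((Nat.succ_pos _).trans_le hN)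
  have hden : ((N ^ d - 1 : ℕ) : ℝ) + 1 = (N : ℝ) ^ d := by
    exact_mod_cast Nat.sub_add_cancel (Nat.one_le_pow d N hN0.pos)
  rw [hden]
  refine (h N hN0).trans_lt ?_
  calc C / N ≤ M / N := by gcongr
    _ < 1 / k := by
      rw [div_lt_div_iff₀ (by positivity) (by positivity), one_mul]
      exact_mod_cast hN

open Set MeasureTheory BoxIntegral.unitPartition
open scoped ENNReal symmDiff

/-! ### Rounding to a grid -/

theorem inter_frontier_nonempty_of_isPreconnected {X : Type*} [TopologicalSpace X] {s A : Set X}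
    (hs : IsPreconnected s) (hA : (s ∩ A).Nonempty) (hAc : (s ∩ Aᶜ).Nonempty) :
    (s ∩ frontier A).Nonempty := by
  by_contra hempty
  have hcover : s ⊆ interior A ∪ interior Aᶜ := fun x hx => by
    have hxA : x ∉ frontier A := fun h => hempty ⟨x, hx, h⟩
    rwa [← mem_compl_iff, compl_frontier_eq_union_interior] at hxA
  obtain ⟨x, hxs, hxA⟩ := hA
  obtain ⟨y, hys, hyA⟩ := hAc
  have hsA : s ⊆ interior A := hs.subset_left_of_subset_union isOpen_interior isOpen_interior
    (disjoint_compl_right.mono interior_subset interior_subset) hcover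
    ⟨x, hxs, (hcover hxs).resolve_right fun h => interior_subset h hxA⟩
  exact hyA (interior_subset (hsA hys))

theorem exists_mem_Icc_mem_frontier {A : Set ℝ} {a b : ℝ} (hab : a ≤ b)
    (h : ¬(a ∈ A ↔ b ∈ A)) : ∃ z ∈ Icc a b, z ∈ frontier A := by
  have ha := left_mem_Icc.2 hab
  have hb := right_mem_Icc.2 hab
  by_cases haA : a ∈ A
  · exact inter_frontier_nonempty_of_isPreconnected isPreconnected_Icc
      ⟨a, ha, haA⟩ ⟨b, hb, fun hbA => h (iff_of_true haA hbA)⟩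
  · exact inter_frontier_nonempty_of_isPreconnected isPreconnected_Icc
      ⟨b, hb, by_contra fun hbA => h (iff_of_false haA hbA)⟩ ⟨a, ha, haA⟩

/-- Rounding up to the grid `N⁻¹ℤ`, so that `BoxIntegral.unitPartition.tag N (index N x)` is the
coordinatewise rounding of `x`. -/
noncomputable def gridCeil (N : ℕ) (t : ℝ) : ℝ := ⌈N * t⌉ / N

theorem measurable_gridCeil (N : ℕ) : Measurable (gridCeil N) := by
  unfold gridCeil
  fun_prop

section GridCeil

variable {N : ℕ} [NeZero N]

theorem le_gridCeil (t : ℝ) : t ≤ gridCeil N t := by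
  rw [gridCeil, le_div_iff₀' (Nat.cast_pos.2 N.pos_of_neZero)]
  exact Int.le_ceil _

theorem gridCeil_lt_add_inv (t : ℝ) : gridCeil N t < t + (N : ℝ)⁻¹ := by
  have hN : (N : ℝ) ≠ 0 := NeZero.ne _
  rw [gridCeil, div_lt_iff₀' (Nat.cast_pos.2 N.pos_of_neZero), mul_add, mul_inv_cancel₀ hN]
  exact Int.ceil_lt_add_one _

theorem gridCeil_mem_Ioc_iff {a b : ℤ} {t : ℝ} :
    gridCeil N t ∈ Ioc (a : ℝ) b ↔ t ∈ Ioc (a : ℝ) b := by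
  have hN : (0 : ℝ) < N := Nat.cast_pos.2 N.pos_of_neZero
  have ha : (a : ℝ) < gridCeil N t ↔ a < t := by
    rw [gridCeil, lt_div_iff₀' hN, ← mul_lt_mul_iff_right₀ hN (b := (a : ℝ))]
    exact_mod_cast Int.lt_ceil (z := N * a)
  have hb : gridCeil N t ≤ b ↔ t ≤ b := by
    rw [gridCeil, div_le_iff₀' hN, ← mul_le_mul_iff_right₀ hN (c := (b : ℝ))]
    exact_mod_cast Int.ceil_le (z := N * b)
  rw [mem_Ioc, mem_Ioc, ha, hb]

theorem volume_symmDiff_preimage_gridCeil_le {A : Set ℝ} {c : ℕ} (hA : (frontier A).encard ≤ c) :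
    volume (A ∆ (gridCeil N ⁻¹' A)) ≤ c / N := by
  obtain ⟨Z, hZ⟩ := (finite_of_encard_le_coe hA).exists_finset_coe
  have hcover : A ∆ (gridCeil N ⁻¹' A) ⊆ ⋃ z ∈ Z, Icc (z - (N : ℝ)⁻¹) z := by
    intro t ht
    obtain ⟨z, ⟨htz, hzt⟩, hz⟩ : ∃ z ∈ Icc t (gridCeil N t), z ∈ frontier A :=
      exists_mem_Icc_mem_frontier (le_gridCeil t) fun h => by grind
    rw [← hZ] at hz
    exact mem_biUnion hz ⟨by linarith [gridCeil_lt_add_inv (N := N) t], htz⟩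
  calc volume (A ∆ (gridCeil N ⁻¹' A))
      ≤ ∑ z ∈ Z, volume (Icc (z - (N : ℝ)⁻¹) z) :=
        (measure_mono hcover).trans (measure_biUnion_finset_le _ _)
    _ = (Z.card : ℝ≥0∞) / N := by
        simp [ENNReal.ofReal_inv_of_pos, Nat.cast_pos.2 N.pos_of_neZero, div_eq_mul_inv]
    _ ≤ c / N := by
        rw [← hZ, encard_coe_eq_coe_finsetCard, Nat.cast_le] at hA
        gcongr

end GridCeil

theorem measure_pi_mul_le_of_section_le {ι : Type*} [Fintype ι] [DecidableEq ι] {α : ι → Type*}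
    [∀ i, MeasurableSpace (α i)] (μ : ∀ i, Measure (α i)) [∀ i, SigmaFinite (μ i)]
    {E : Set (∀ i, α i)} (hE : MeasurableSet E) {S : ∀ i, Set (α i)}
    (hS : ∀ i, MeasurableSet (S i)) (hES : E ⊆ univ.pi S) (i : ι) {ε : ℝ≥0∞}
    (hε : ∀ x, μ i {t | Function.update x i t ∈ E} ≤ ε) :
    Measure.pi μ E * μ i (S i) ≤ ε * Measure.pi μ (univ.pi S) := by
  have hT : MeasurableSet (univ.pi S) := .univ_pi hS
  rw [mul_comm, ← lintegral_indicator_const hE, ← lintegral_indicator_const hT]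
  refine lintegral_le_of_lmarginal_le {i} (measurable_const.indicator hE)
    (measurable_const.indicator hT) fun x => ?_
  have hsec : Measurable (Function.update x i) := measurable_update x
  simp only [lmarginal_singleton]
  change ∫⁻ t, (Function.update x i ⁻¹' E).indicator (fun _ => μ i (S i)) t ∂μ i ≤
    ∫⁻ t, (Function.update x i ⁻¹' univ.pi S).indicator (fun _ => ε) t ∂μ i
  rw [lintegral_indicator_const (hsec hE), lintegral_indicator_const (hsec hT)]
  rcases (Function.update x i ⁻¹' E).eq_empty_or_nonempty with hempty | ⟨t, ht⟩
  · simp [hempty]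
  · have hSi : Function.update x i ⁻¹' univ.pi S = S i :=
      update_preimage_pi (mem_univ i) fun j _ hj => by
        simpa only [Function.update_of_ne hj] using hES ht j (mem_univ j)
    rw [hSi, mul_comm]
    gcongr
    exact hε x

theorem one_le_volume_Ioc_of_hasIntegralVertices {ι : Type*} {B : BoxIntegral.Box ι}
    (hB : BoxIntegral.hasIntegralVertices B) (i : ι) :
    1 ≤ volume (Ioc (B.lower i) (B.upper i)) := by
  obtain ⟨a, b, ha, hb⟩ := hB
  have hab : a i < b i := by
    exact_mod_cast ha i ▸ hb i ▸ B.lower_lt_upper i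
  rw [ha, hb, Real.volume_Ioc, ENNReal.one_le_ofReal, le_sub_iff_add_le']
  exact_mod_cast hab

theorem finite_setOf_tag_mem {ι : Type*} [Finite ι] {N : ℕ} [NeZero N] {A : Set (ι → ℝ)}
    (hA : Bornology.IsBounded A) : {ν : ι → ℤ | tag N ν ∈ A}.Finite := by
  cases nonempty_fintype ι
  obtain ⟨B, hB, hAB⟩ := BoxIntegral.le_hasIntegralVertices_of_isBounded hA
  refine (admissibleIndex N B).finite_toSet.subset fun ν hν => ?_
  simpa only [Finset.mem_coe, index_tag] using mem_admissibleIndex_of_mem_box N hB (hAB hν)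

section GridCeilOn

variable {ι : Type*} [DecidableEq ι] {N : ℕ}

/-- Rounding up to the grid `N⁻¹ℤ` in the coordinates belonging to `s`. -/
noncomputable def gridCeilOn (N : ℕ) (s : Finset ι) (x : ι → ℝ) : ι → ℝ :=
  s.piecewise (fun i => gridCeil N (x i)) x

theorem measurable_gridCeilOn (N : ℕ) (s : Finset ι) : Measurable (gridCeilOn N s) := by
  refine measurable_pi_lambda _ fun i => ?_
  by_cases hi : i ∈ s
  · simpa only [gridCeilOn, Finset.piecewise_eq_of_mem _ _ _ hi, Function.comp_def] using
      (measurable_gridCeil N).comp (measurable_pi_apply i)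
  · simpa only [gridCeilOn, Finset.piecewise_eq_of_notMem _ _ _ hi] using measurable_pi_apply i

theorem gridCeilOn_empty (x : ι → ℝ) : gridCeilOn N ∅ x = x :=
  Finset.piecewise_empty _ _

theorem gridCeilOn_univ [Fintype ι] (x : ι → ℝ) :
    gridCeilOn N Finset.univ x = tag N (index N x) := by
  funext i
  simp [gridCeilOn, gridCeil, tag_apply, index_apply]

theorem gridCeilOn_update_of_notMem {s : Finset ι} {i : ι} (hi : i ∉ s) (x : ι → ℝ) (t : ℝ) :
    gridCeilOn N s (Function.update x i t) = Function.update (gridCeilOn N s x) i t := by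
  funext j
  rcases eq_or_ne j i with rfl | hj <;> simp_all [gridCeilOn, Finset.piecewise]

theorem gridCeilOn_insert_update (s : Finset ι) (i : ι) (x : ι → ℝ) (t : ℝ) :
    gridCeilOn N (insert i s) (Function.update x i t) =
      Function.update (gridCeilOn N s x) i (gridCeil N t) := by
  funext j
  rcases eq_or_ne j i with rfl | hj <;> simp_all [gridCeilOn, Finset.piecewise]

variable [NeZero N] {B : BoxIntegral.Box ι}

theorem gridCeilOn_mem_box_iff (hB : BoxIntegral.hasIntegralVertices B) {s : Finset ι}
    {x : ι → ℝ} : gridCeilOn N s x ∈ B ↔ x ∈ B := by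
  obtain ⟨a, b, ha, hb⟩ := hB
  simp only [BoxIntegral.Box.mem_def, ha, hb]
  refine forall_congr' fun i => ?_
  by_cases hi : i ∈ s
  · rw [gridCeilOn, Finset.piecewise_eq_of_mem _ _ _ hi, gridCeil_mem_Ioc_iff]
  · rw [gridCeilOn, Finset.piecewise_eq_of_notMem _ _ _ hi]

variable [Fintype ι] {A : Set (ι → ℝ)} {c : ℕ}

theorem volume_symmDiff_preimage_gridCeilOn_insert_le (hB : BoxIntegral.hasIntegralVertices B)
    (hA : MeasurableSet A) (hAB : A ⊆ B)
    (hc : ∀ x i, (frontier {t | Function.update x i t ∈ A}).encard ≤ c)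
    {s : Finset ι} {i : ι} (hi : i ∉ s) :
    volume ((gridCeilOn N s ⁻¹' A) ∆ (gridCeilOn N (insert i s) ⁻¹' A)) ≤
      c / N * volume (B : Set (ι → ℝ)) := by
  set E := (gridCeilOn N s ⁻¹' A) ∆ (gridCeilOn N (insert i s) ⁻¹' A) with hE
  have hEB : E ⊆ univ.pi fun j => Ioc (B.lower j) (B.upper j) := by
    rw [← B.coe_eq_pi]
    exact symmDiff_subset_union.trans <| union_subset
      (fun x hx => (gridCeilOn_mem_box_iff hB).1 (hAB hx))
      (fun x hx => (gridCeilOn_mem_box_iff hB).1 (hAB hx))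
  have hEm : MeasurableSet E :=
    (measurable_gridCeilOn N _ hA).symmDiff (measurable_gridCeilOn N _ hA)
  have hsec : ∀ x, volume {t | Function.update x i t ∈ E} ≤ c / N := fun x => by
    convert volume_symmDiff_preimage_gridCeil_le (N := N) (hc (gridCeilOn N s x) i) using 2
    ext t
    simp only [hE, mem_symmDiff, mem_ofPred_eq, mem_preimage, gridCeilOn_insert_update,
      gridCeilOn_update_of_notMem hi]
  calc volume E
      ≤ volume E * volume (Ioc (B.lower i) (B.upper i)) :=
        le_mul_of_one_le_right' (one_le_volume_Ioc_of_hasIntegralVertices hB i)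
    _ ≤ c / N * volume (B : Set (ι → ℝ)) := by
        rw [B.coe_eq_pi]
        exact measure_pi_mul_le_of_section_le (fun _ => volume) hEm
          (fun _ => measurableSet_Ioc) hEB i hsec

theorem volume_symmDiff_preimage_gridCeilOn_le (hB : BoxIntegral.hasIntegralVertices B)
    (hA : MeasurableSet A) (hAB : A ⊆ B)
    (hc : ∀ x i, (frontier {t | Function.update x i t ∈ A}).encard ≤ c) (s : Finset ι) :
    volume (A ∆ (gridCeilOn N s ⁻¹' A)) ≤ #s * (c / N * volume (B : Set (ι → ℝ))) := by
  induction s using Finset.induction_on with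
  | empty => simp [preimage, gridCeilOn_empty]
  | insert i s hi ih =>
    refine (measure_symmDiff_le _ (gridCeilOn N s ⁻¹' A) _).trans ?_
    rw [Finset.card_insert_of_notMem hi, Nat.cast_succ, add_one_mul]
    exact add_le_add ih (volume_symmDiff_preimage_gridCeilOn_insert_le hB hA hAB hc hi)

theorem volume_real_preimage_gridCeilOn_univ (hA : Bornology.IsBounded A) :
    volume.real (gridCeilOn N Finset.univ ⁻¹' A) =
      {ν : ι → ℤ | tag N ν ∈ A}.ncard / (N : ℝ) ^ Fintype.card ι := by
  have hfin := finite_setOf_tag_mem (N := N) hA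
  have hcells : gridCeilOn N Finset.univ ⁻¹' A =
      ⋃ ν ∈ hfin.toFinset, (box N ν : Set (ι → ℝ)) := by
    ext x
    simp only [mem_preimage, gridCeilOn_univ, Finite.mem_toFinset, mem_ofPred_eq, mem_iUnion,
      exists_prop, BoxIntegral.Box.mem_coe, mem_box_iff_index, exists_eq_right']
  rw [hcells, measureReal_biUnion_finset (fun ν _ ν' _ h => disjoint.1 h)
    (fun ν _ => (box N ν).measurableSet_coe)
    fun ν _ => (box N ν).isBounded.measure_lt_top.ne, ncard_eq_toFinset_card _ hfin]
  simp [measureReal_def, div_eq_mul_inv]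

theorem exists_abs_ncard_tag_mem_div_pow_sub_volume_le (hA : MeasurableSet A)
    (hbdd : Bornology.IsBounded A)
    (hc : ∀ x i, (frontier {t | Function.update x i t ∈ A}).encard ≤ c) :
    ∃ C : ℝ, ∀ (N : ℕ) [NeZero N],
      |{ν : ι → ℤ | tag N ν ∈ A}.ncard / (N : ℝ) ^ Fintype.card ι - volume.real A| ≤ C / N := by
  obtain ⟨B, hB, hAB⟩ := BoxIntegral.le_hasIntegralVertices_of_isBounded hbdd
  refine ⟨Fintype.card ι * c * volume.real (B : Set (ι → ℝ)), fun N _ => ?_⟩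
  set A' := gridCeilOn N Finset.univ ⁻¹' A
  have hA'B : A' ⊆ B := fun x hx => (gridCeilOn_mem_box_iff hB).1 (hAB hx)
  have hBfin : volume (B : Set (ι → ℝ)) ≠ ∞ := B.isBounded.measure_lt_top.ne
  have hcN : (c / N : ℝ≥0∞) ≠ ∞ := ENNReal.div_ne_top (ENNReal.natCast_ne_top c) (NeZero.ne _)
  have hbound : volume (A ∆ A') ≤
      Fintype.card ι * (c / N * volume (B : Set (ι → ℝ))) :=
    volume_symmDiff_preimage_gridCeilOn_le hB hA hAB hc Finset.univ
  rw [← volume_real_preimage_gridCeilOn_univ hbdd, abs_sub_comm]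
  calc |volume.real A - volume.real A'|
      ≤ volume.real (A ∆ A') := abs_measureReal_sub_le_measureReal_symmDiff'
        hA.nullMeasurableSet (measurable_gridCeilOn N _ hA).nullMeasurableSet
        (measure_ne_top_of_subset hAB hBfin) (measure_ne_top_of_subset hA'B hBfin)
    _ ≤ (Fintype.card ι * (c / N * volume (B : Set (ι → ℝ)))).toReal :=
        ENNReal.toReal_mono (by finiteness [hcN]) hbound
    _ = Fintype.card ι * c * volume.real (B : Set (ι → ℝ)) / N := by
        simp only [ENNReal.toReal_mul, ENNReal.toReal_div, ENNReal.toReal_natCast, measureReal_def]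
        ring

end GridCeilOn

/-! ### Semialgebraic sets -/

theorem isOpen_setOf_forall_pos {X κ : Type*} [TopologicalSpace X] [Finite κ] {f : κ → X → ℝ}
    (hf : ∀ j, Continuous (f j)) : IsOpen {x | ∀ j, 0 < f j x} := by
  rw [ofPred_forall]
  exact isOpen_iInter_of_finite fun j => isOpen_lt continuous_const (hf j)

/-- The basic open semialgebraic set on which all the polynomials `G j` are positive. -/
def basicOpenSemialgebraic {σ κ : Type*} (G : κ → MvPolynomial σ ℝ) : Set (σ → ℝ) :=
  {x | ∀ j, 0 < MvPolynomial.eval x (G j)}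

theorem isOpen_basicOpenSemialgebraic {σ κ : Type*} [Finite κ] (G : κ → MvPolynomial σ ℝ) :
    IsOpen (basicOpenSemialgebraic G) :=
  isOpen_setOf_forall_pos fun j => MvPolynomial.continuous_eval (G j)

theorem encard_frontier_setOf_forall_eval_pos_le {κ : Type*} [Fintype κ] (p : κ → Polynomial ℝ) :
    (frontier {t | ∀ j, 0 < (p j).eval t}).encard ≤ (∑ j, (p j).natDegree : ℕ) := by
  classical
  have hroots : frontier {t | ∀ j, 0 < (p j).eval t} ⊆
      (Finset.univ.biUnion fun j => (p j).roots.toFinset : Finset ℝ) := by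
    rw [(isOpen_setOf_forall_pos fun j => (p j).continuous).frontier_eq]
    rintro t ⟨htcl, ht⟩
    obtain ⟨j, hj⟩ := not_forall.1 ht
    obtain ⟨s, hs⟩ := closure_nonempty_iff.1 ⟨t, htcl⟩
    have hnonneg : 0 ≤ (p j).eval t :=
      closure_minimal (fun s hs => (hs j).le) (isClosed_le continuous_const (p j).continuous) htcl
    have hp : p j ≠ 0 := fun h => by simpa [h] using hs j
    have hroot : (p j).IsRoot t := le_antisymm (not_lt.1 hj) hnonneg
    simpa using ⟨j, hp, hroot⟩
  refine (encard_le_encard hroots).trans ?_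
  rw [encard_coe_eq_coe_finsetCard, Nat.cast_le]
  exact Finset.card_biUnion_le.trans <| Finset.sum_le_sum fun j _ =>
    (Multiset.toFinset_card_le _).trans (p j).card_roots'

theorem exists_natDegree_le_eval_eq_eval_update {σ R : Type*} [DecidableEq σ] [CommSemiring R]
    (G : MvPolynomial σ R) (x : σ → R) (i : σ) :
    ∃ p : Polynomial R, p.natDegree ≤ G.totalDegree ∧
      ∀ t, p.eval t = MvPolynomial.eval (Function.update x i t) G := by
  refine ⟨MvPolynomial.aeval (Function.update (fun j => Polynomial.C (x j)) i Polynomial.X) G,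
    ?_, fun t => ?_⟩
  · refine (MvPolynomial.aeval_natDegree_le G le_rfl _ (n := 1) fun j => ?_).trans_eq (mul_one _)
    rcases eq_or_ne j i with rfl | hj
    · simpa using Polynomial.natDegree_X_le
    · simp [hj]
  · rw [← Polynomial.coe_aeval_eq_eval, MvPolynomial.comp_aeval_apply, MvPolynomial.aeval_eq_eval]
    congr 2
    funext j
    rcases eq_or_ne j i with rfl | hj <;> simp [*]

theorem encard_frontier_section_basicOpenSemialgebraic_le {σ κ : Type*} [DecidableEq σ] [Fintype κ]
    (G : κ → MvPolynomial σ ℝ) (x : σ → ℝ) (i : σ) :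
    (frontier {t | Function.update x i t ∈ basicOpenSemialgebraic G}).encard ≤
      (∑ j, (G j).totalDegree : ℕ) := by
  choose p hdeg hp using fun j => exists_natDegree_le_eval_eq_eval_update (G j) x i
  simp only [basicOpenSemialgebraic, mem_ofPred_eq, ← hp]
  refine (encard_frontier_setOf_forall_eval_pos_le p).trans ?_
  exact_mod_cast Finset.sum_le_sum fun j _ => hdeg j

/-! ### Counting grid points -/

theorem ncard_setOf_tag_mem_eq_sum {k N R : ℕ} [NeZero N] {A : Set (Fin k → ℝ)}
    [DecidablePred (· ∈ A)] (hA : A ⊆ Metric.closedBall 0 R) :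
    {ν : Fin k → ℤ | tag N ν ∈ A}.ncard =
      ∑ m : Fin k → Fin (2 * R * N + 1),
        if (fun i => ((m i : ℝ) - R * N) / N) ∈ A then 1 else 0 := by
  have hN : (0 : ℝ) < N := Nat.cast_pos.2 N.pos_of_neZero
  let e : (Fin k → Fin (2 * R * N + 1)) → Fin k → ℤ := fun m i => m i - R * N - 1
  have he : Function.Injective e := fun m m' h => by
    funext i
    have := congrFun h i
    simp only [e] at this
    omega
  have htag : ∀ m, tag N (e m) = fun i => ((m i : ℝ) - R * N) / N := fun m => by
    funext i
    simp [e]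
  have hrange : {ν : Fin k → ℤ | tag N ν ∈ A} ⊆ range e := fun ν hν => by
    have hbound : ∀ i, -(R * N : ℤ) ≤ ν i + 1 ∧ ν i + 1 ≤ (R * N : ℤ) := fun i => by
      have h := (norm_le_pi_norm (tag N ν) i).trans (mem_closedBall_zero_iff.1 (hA hν))
      rw [tag_apply, Real.norm_eq_abs, abs_div, Nat.abs_cast, div_le_iff₀ hN, abs_le] at h
      exact_mod_cast h
    exact ⟨fun i => ⟨(ν i + 1 + R * N).toNat, by grind⟩, funext fun i => by grind⟩
  calc {ν : Fin k → ℤ | tag N ν ∈ A}.ncard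
      = (e ⁻¹' {ν | tag N ν ∈ A}).ncard := (ncard_preimage_of_injective_subset_range he hrange).symm
    _ = #{m | tag N (e m) ∈ A} := by
      rw [← ncard_coe_finset]
      congr 1
      ext m
      simp
    _ = ∑ m : Fin k → Fin (2 * R * N + 1),
          if (fun i => ((m i : ℝ) - R * N) / N) ∈ A then 1 else 0 := by
      simp only [htag, Finset.sum_boole, Nat.cast_id]

theorem exists_elem1_eq_ncard_setOf_tag_mem {k : ℕ} {κ : Type*} [Finite κ]
    (G : κ → MvPolynomial (Fin k) ℤ) {A : Set (Fin k → ℝ)}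
    (hA : A = {x | ∀ j, 0 < MvPolynomial.aeval x (G j)}) (hbdd : Bornology.IsBounded A) :
    ∃ a, Elem1 a ∧ ∀ (N : ℕ) [NeZero N], a N = {ν : Fin k → ℤ | tag N ν ∈ A}.ncard := by
  classical
  cases nonempty_fintype κ
  obtain ⟨r, hr⟩ := hbdd.subset_closedBall 0
  obtain ⟨R, hrR⟩ := exists_nat_ge r
  have hproj : ∀ i, (fun x : Fin (k + 1) → ℕ => (x i : ℤ)) ∈ elemIntSubring (k + 1) :=
    fun i => (Elem.proj i).natCast_mem_elemIntSubring
  have hnode : ∀ i : Fin k, (fun x : Fin (k + 1) → ℕ =>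
      (x i.castSucc : ℤ) - R * x (Fin.last k)) ∈ elemIntSubring (k + 1) := fun i =>
    sub_mem (hproj _) (mul_mem (natCast_mem _ R) (hproj _))
  choose d h hmem hh using fun j =>
    exists_mem_subring_eq_pow_mul_aeval_div (K := ℝ) _ hnode (hproj (Fin.last k)) (G j)
  refine ⟨_, Elem.sum_pi ((Elem.const (2 * R)).fun_mul (.proj 0)) (Elem.ite_forall_pos hmem),
    fun N _ => ?_⟩
  have hN : (N : ℝ) ≠ 0 := NeZero.ne _
  rw [ncard_setOf_tag_mem_eq_sum (hr.trans (Metric.closedBall_subset_closedBall hrR))]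
  refine Finset.sum_congr rfl fun m _ => if_congr ?_ rfl rfl
  rw [hA, mem_ofPred_eq]
  refine forall_congr' fun j => ?_
  have hj := hh j (Fin.snoc (α := fun _ => ℕ) (fun i => (m i : ℕ)) N)
  simp only [Fin.snoc_last, Fin.snoc_castSucc, Int.cast_natCast, Int.cast_sub, Int.cast_mul] at hj
  rw [← Int.cast_pos (R := ℝ), hj hN, mul_pos_iff_of_pos_left (by positivity)]

/-- The volume of a bounded basic open semialgebraic set
`D = {x ∈ ℝ^ℓ | G₁(x) > 0, …, G_q(x) > 0}` (with `Gᵢ` integer-coefficient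
polynomials) is an elementary real number. -/
theorem volume_basicOpenSemialgebraic_elemReal
    (ℓ q : ℕ) (G : Fin q → MvPolynomial (Fin ℓ) ℤ)
    (D : Set (Fin ℓ → ℝ))
    (hD : D = {x : Fin ℓ → ℝ | ∀ i, 0 < MvPolynomial.aeval x (G i)})
    (hbdd : Bornology.IsBounded D) :
    ElemReal (MeasureTheory.volume D).toReal := by
  have hDG : D = basicOpenSemialgebraic fun j => (G j).map (algebraMap ℤ ℝ) := by
    simp only [hD, basicOpenSemialgebraic, MvPolynomial.eval_map, MvPolynomial.aeval_def]
  obtain ⟨C, hC⟩ := exists_abs_ncard_tag_mem_div_pow_sub_volume_le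
    (hDG ▸ (isOpen_basicOpenSemialgebraic _).measurableSet) hbdd
    (hDG ▸ encard_frontier_section_basicOpenSemialgebraic_le _)
  obtain ⟨a, ha, haD⟩ := exists_elem1_eq_ncard_setOf_tag_mem G hD hbdd
  refine .of_abs_div_pow_sub_le ha ℓ (C := C) fun N hN => ?_
  have : NeZero N := ⟨hN⟩
  simpa only [haD, measureReal_def, Fintype.card_fin] using hC N
end

section
/- Let D = {x ∈ ℝ^ℓ | G_1(x) > 0, …, G_q(x) > 0} where G_1, …, G_q are polynomials with rational coefficients, let P, Q be polynomials in ℓ variables with rational coefficients such that Q(x) ≠ 0 for all x ∈ D, and suppose the integral ∫_D P(x)/Q(x) dx is absolutely convergent with nonnegative value α. Then α is an elementary real number. -/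
open SignType

namespace ElementaryPeriods

section Sequences

variable {α : Type*}

/-- The sequence `a, x 0, x 1, …`. -/
def cons (a : α) (x : ℕ → α) : ℕ → α := fun n => Nat.casesOn n a x

/-- The sequence `x 1, x 2, …`. -/
def tail (x : ℕ → α) : ℕ → α := fun n => x (n + 1)

@[simp] theorem cons_zero (a : α) (x : ℕ → α) : cons a x 0 = a := rfl

@[simp] theorem cons_succ (a : α) (x : ℕ → α) (n : ℕ) : cons a x (n + 1) = x n := rfl

@[simp] theorem tail_apply (x : ℕ → α) (n : ℕ) : tail x n = x (n + 1) := rfl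

@[simp] theorem tail_cons (a : α) (x : ℕ → α) : tail (cons a x) = x := rfl

/-- The sequence `u 0, …, u (n - 1), x 0, x 1, …`. -/
def append : {n : ℕ} → (Fin n → α) → (ℕ → α) → ℕ → α
  | 0, _, x => x
  | _ + 1, u, x => cons (u 0) (append (Fin.tail u) x)

@[simp] theorem append_zero (u : Fin 0 → α) (x : ℕ → α) : append u x = x := rfl

theorem append_cons {n : ℕ} (a : α) (u : Fin n → α) (x : ℕ → α) :
    append (Fin.cons a u : Fin (n + 1) → α) x = cons a (append u x) := rfl

@[simp] theorem append_add {n : ℕ} (u : Fin n → α) (x : ℕ → α) (k : ℕ) :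
    append u x (k + n) = x k := by
  induction n with
  | zero => rfl
  | succ n ih => exact ih (Fin.tail u)

@[simp] theorem append_self {n : ℕ} (u : Fin n → α) (x : ℕ → α) : append u x n = x 0 := by
  simpa using append_add u x 0

@[simp] theorem append_val {n : ℕ} (u : Fin n → α) (x : ℕ → α) (i : Fin n) :
    append u x i = u i := by
  induction n with
  | zero => exact i.elim0
  | succ n ih =>
    cases i using Fin.cases with
    | zero => rfl
    | succ i => exact ih (Fin.tail u) i

theorem measurable_cons [MeasurableSpace α] :
    Measurable fun p : α × (ℕ → α) => cons p.1 p.2 := by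
  refine measurable_pi_iff.mpr fun n => ?_
  cases n with
  | zero => exact measurable_fst
  | succ n => exact (measurable_pi_apply n).comp measurable_snd

theorem measurable_append [MeasurableSpace α] (n : ℕ) :
    Measurable fun p : (Fin n → α) × (ℕ → α) => append p.1 p.2 := by
  induction n with
  | zero => exact measurable_snd
  | succ n ih =>
    have htail : Measurable fun p : (Fin (n + 1) → α) × (ℕ → α) => (Fin.tail p.1, p.2) :=
      (measurable_pi_lambda _ fun i =>
        (measurable_pi_apply i.succ).comp measurable_fst).prodMk measurable_snd
    exact measurable_cons.comp
      (((measurable_pi_apply 0).comp measurable_fst).prodMk (ih.comp htail))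

end Sequences

section Semialgebraic

open MvPolynomial

theorem continuous_aeval {σ : Type*} (f : MvPolynomial σ ℚ) :
    Continuous fun x : σ → ℝ => aeval x f := by
  simpa only [aeval_def, eval₂_eq_eval_map] using continuous_eval (map (algebraMap ℚ ℝ) f)

variable {σ τ : Type*}

/-- Real functions given by a polynomial with rational coefficients. -/
def IsPoly (a : (σ → ℝ) → ℝ) : Prop := ∃ f : MvPolynomial σ ℚ, ∀ x, a x = aeval x f

namespace IsPoly

variable {a b : (σ → ℝ) → ℝ}

theorem aeval (f : MvPolynomial σ ℚ) : IsPoly fun x => MvPolynomial.aeval x f :=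
  ⟨f, fun _ => rfl⟩

theorem coord (i : σ) : IsPoly fun x => x i := ⟨X i, fun x => by simp⟩

theorem natCast (n : ℕ) : IsPoly fun _ : σ → ℝ => (n : ℝ) := ⟨n, fun x => by simp⟩

theorem zero : IsPoly fun _ : σ → ℝ => 0 := ⟨0, fun x => by simp⟩

theorem one : IsPoly fun _ : σ → ℝ => 1 := ⟨1, fun x => by simp⟩

theorem add : IsPoly a → IsPoly b → IsPoly fun x => a x + b x := by
  rintro ⟨f, hf⟩ ⟨g, hg⟩
  exact ⟨f + g, fun x => by simp [hf, hg]⟩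

theorem mul : IsPoly a → IsPoly b → IsPoly fun x => a x * b x := by
  rintro ⟨f, hf⟩ ⟨g, hg⟩
  exact ⟨f * g, fun x => by simp [hf, hg]⟩

theorem neg : IsPoly a → IsPoly fun x => -a x := by
  rintro ⟨f, hf⟩
  exact ⟨-f, fun x => by simp [hf]⟩

theorem sub : IsPoly a → IsPoly b → IsPoly fun x => a x - b x := by
  rintro ⟨f, hf⟩ ⟨g, hg⟩
  exact ⟨f - g, fun x => by simp [hf, hg]⟩

theorem pow (n : ℕ) : IsPoly a → IsPoly fun x => a x ^ n := by
  rintro ⟨f, hf⟩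
  exact ⟨f ^ n, fun x => by simp [hf]⟩

theorem comp {a : (τ → ℝ) → ℝ} {e : τ → (σ → ℝ) → ℝ} (ha : IsPoly a) (he : ∀ i, IsPoly (e i)) :
    IsPoly fun x => a fun i => e i x := by
  obtain ⟨f, hf⟩ := ha
  choose g hg using he
  refine ⟨bind₁ g f, fun x => ?_⟩
  simp only [hf, hg, aeval_bind₁]

end IsPoly

/-- The polynomials in `s` have the same signs at `x` and at `y`. -/
def SignEq (s : Finset (MvPolynomial σ ℚ)) (x y : σ → ℝ) : Prop :=
  ∀ f ∈ s, sign (aeval x f) = sign (aeval y f)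

theorem SignEq.mono {s t : Finset (MvPolynomial σ ℚ)} (h : s ⊆ t) {x y : σ → ℝ}
    (hxy : SignEq t x y) : SignEq s x y :=
  fun f hf => hxy f (h hf)

/-- Predicates definable without parameters by a Boolean combination of polynomial inequalities,
encoded as those that depend only on the signs of finitely many polynomials. -/
def IsSemialg (p : (σ → ℝ) → Prop) : Prop :=
  ∃ s : Finset (MvPolynomial σ ℚ), ∀ x y, SignEq s x y → (p x ↔ p y)

theorem IsPoly.pos {a : (σ → ℝ) → ℝ} (ha : IsPoly a) : IsSemialg fun x => 0 < a x := by
  obtain ⟨f, hf⟩ := ha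
  refine ⟨{f}, fun x y h => ?_⟩
  simp only [hf, ← sign_eq_one_iff, h f (Finset.mem_singleton_self f)]

namespace IsSemialg

variable {p q : (σ → ℝ) → Prop}

theorem map₂ (φ : Prop → Prop → Prop) (hp : IsSemialg p) (hq : IsSemialg q) :
    IsSemialg fun x => φ (p x) (q x) := by
  classical
  obtain ⟨s, hs⟩ := hp
  obtain ⟨t, ht⟩ := hq
  refine ⟨s ∪ t, fun x y h => ?_⟩
  simp only [hs x y (h.mono Finset.subset_union_left), ht x y (h.mono Finset.subset_union_right)]

theorem not (hp : IsSemialg p) : IsSemialg fun x => ¬p x := hp.map₂ (fun P _ => ¬P) hp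

theorem and (hp : IsSemialg p) (hq : IsSemialg q) : IsSemialg fun x => p x ∧ q x := hp.map₂ And hq

theorem imp (hp : IsSemialg p) (hq : IsSemialg q) : IsSemialg fun x => p x → q x :=
  hp.map₂ (fun P Q => P → Q) hq

theorem all {ι : Type*} [Finite ι] {p : ι → (σ → ℝ) → Prop} (hp : ∀ i, IsSemialg (p i)) :
    IsSemialg fun x => ∀ i, p i x := by
  classical
  cases nonempty_fintype ι
  choose s hs using hp
  refine ⟨Finset.univ.biUnion s, fun x y h => forall_congr' fun i => hs i x y (h.mono ?_)⟩
  exact Finset.subset_biUnion_of_mem s (Finset.mem_univ i)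

theorem lt {a b : (σ → ℝ) → ℝ} (ha : IsPoly a) (hb : IsPoly b) : IsSemialg fun x => a x < b x := by
  simpa only [sub_pos] using (hb.sub ha).pos

theorem le {a b : (σ → ℝ) → ℝ} (ha : IsPoly a) (hb : IsPoly b) : IsSemialg fun x => a x ≤ b x := by
  simpa only [not_lt] using (lt hb ha).not

theorem eq {a b : (σ → ℝ) → ℝ} (ha : IsPoly a) (hb : IsPoly b) : IsSemialg fun x => a x = b x := by
  simpa only [le_antisymm_iff] using (le ha hb).and (le hb ha)

theorem comp {p : (τ → ℝ) → Prop} {e : τ → (σ → ℝ) → ℝ} (hp : IsSemialg p)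
    (he : ∀ i, IsPoly (e i)) : IsSemialg fun x => p fun i => e i x := by
  classical
  obtain ⟨s, hs⟩ := hp
  choose g hg using fun f => (IsPoly.aeval f).comp he
  refine ⟨s.image g, fun x y h => hs _ _ fun f hf => ?_⟩
  simpa only [← hg] using h _ (Finset.mem_image_of_mem g hf)

/-- A predicate that depends on the signs of `f` and of the polynomials in `s` splits, according to
the sign of `f`, into three predicates that depend on the signs of the polynomials in `s` only. -/
theorem induction {motive : ((σ → ℝ) → Prop) → Prop}
    (pos : ∀ f : MvPolynomial σ ℚ, motive fun x => 0 < aeval x f)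
    (not : ∀ p, motive p → motive fun x => ¬p x)
    (and : ∀ p q, motive p → motive q → motive fun x => p x ∧ q x) (hp : IsSemialg p) :
    motive p := by
  classical
  obtain ⟨s, hs⟩ := hp
  induction s using Finset.induction_on generalizing p with
  | empty =>
    have hfalse : motive fun _ => False := by simpa using pos 0
    obtain hp | hp : p = (fun _ => False) ∨ p = (fun _ => ¬False) := by
      by_cases h : p 0
      · exact .inr (funext fun x => by simpa [h] using hs x 0 (by simp [SignEq]))
      · exact .inl (funext fun x => by simpa [h] using hs x 0 (by simp [SignEq]))
    · exact hp ▸ hfalse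
    · exact hp ▸ not _ hfalse
  | insert f s _ ih =>
    let slice (ε : SignType) (x : σ → ℝ) : Prop :=
      ∃ y, sign (aeval y f) = ε ∧ SignEq s x y ∧ p y
    have hslice (ε : SignType) : motive (slice ε) := by
      refine ih fun x y hxy => exists_congr fun z => and_congr_right fun _ => and_congr_left' ?_
      exact ⟨fun h g hg => (hxy g hg).symm.trans (h g hg), fun h g hg => (hxy g hg).trans (h g hg)⟩
    have hp_iff (x : σ → ℝ) : p x ↔ slice (sign (aeval x f)) x := by
      refine ⟨fun hx => ⟨x, rfl, fun _ _ => rfl, hx⟩, fun ⟨y, hy, hxy, hpy⟩ => ?_⟩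
      refine (hs x y fun g hg => ?_).mpr hpy
      rcases Finset.mem_insert.mp hg with rfl | hg
      exacts [hy.symm, hxy g hg]
    have hp_eq : p = fun x =>
        ¬(¬(0 < aeval x f ∧ slice 1 x) ∧ ¬(0 < aeval x (-f) ∧ slice (-1) x) ∧
          ¬((¬0 < aeval x f ∧ ¬0 < aeval x (-f)) ∧ slice 0 x)) := by
      funext x
      rw [hp_iff x]
      rcases lt_trichotomy (aeval x f : ℝ) 0 with h | h | h
      · simp [h, h.le]
      · simp [h]
      · simp [h, h.le]
    rw [hp_eq]
    exact not _ (and _ _ (not _ (and _ _ (pos f) (hslice 1))) (and _ _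
      (not _ (and _ _ (pos (-f)) (hslice (-1))))
      (not _ (and _ _ (and _ _ (not _ (pos f)) (not _ (pos (-f)))) (hslice 0)))))

theorem measurableSet [Countable σ] (hp : IsSemialg p) : MeasurableSet {x | p x} := by
  refine IsSemialg.induction (motive := fun p => MeasurableSet {x | p x}) (fun f => ?_)
    (fun p hp => hp.compl) (fun p q hp hq => hp.inter hq) hp
  exact measurableSet_lt measurable_const (continuous_aeval f).measurable

end IsSemialg

end Semialgebraic

section OrderIso

open Set Filter

theorem exists_orderIso_apply_eq_of_le {a b u v : ℝ} (hu : u ∈ Ioo a b) (huv : u ≤ v)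
    (hv : v < b) : ∃ k : ℝ ≃o ℝ, k u = v ∧ ∀ t ∉ Ioo a b, k t = t := by
  obtain ⟨hau, hub⟩ := hu
  let left (t : ℝ) : ℝ := v + (v - a) / (u - a) * (t - u)
  let right (t : ℝ) : ℝ := v + (b - v) / (b - u) * (t - u)
  let k (t : ℝ) : ℝ := max t (min (left t) (right t))
  have hslope_left : 1 ≤ (v - a) / (u - a) := (one_le_div (by linarith)).mpr (by linarith)
  have hslope_right : 0 < (b - v) / (b - u) := div_pos (by linarith) (by linarith)
  have hslope_right_le : (b - v) / (b - u) ≤ 1 := (div_le_one (by linarith)).mpr (by linarith)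
  have hleft : left a = a := by simp only [left]; field_simp [(sub_pos.mpr hau).ne']; ring
  have hright : right b = b := by simp only [right]; field_simp [(sub_pos.mpr hub).ne']; ring
  have hk_le (t : ℝ) (ht : t ≤ a) : k t = t := by
    refine max_eq_left ((min_le_left _ _).trans ?_)
    have : left t - t = left a - a + ((v - a) / (u - a) - 1) * (t - a) := by simp only [left]; ring
    nlinarith
  have hk_ge (t : ℝ) (ht : b ≤ t) : k t = t := by
    refine max_eq_left ((min_le_right _ _).trans ?_)
    have : right t - t = right b - b - (1 - (b - v) / (b - u)) * (t - b) := by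
      simp only [right]; ring
    nlinarith
  have hk_mono : StrictMono k := by
    intro s t hst
    have hleft : left s < left t := by simp only [left]; nlinarith
    have hright : right s < right t := by simp only [right]; nlinarith
    exact max_lt_max hst (min_lt_min hleft hright)
  have hk_cont : Continuous k := by fun_prop
  have hk_surj : Function.Surjective k :=
    hk_cont.surjective (tendsto_atTop_mono (fun t => le_max_left _ _) tendsto_id)
      (tendsto_id.congr' ((eventually_le_atBot a).mono fun t ht => (hk_le t ht).symm))
  refine ⟨hk_mono.orderIsoOfSurjective k hk_surj, ?_, fun t ht => ?_⟩
  · simpa [k, left, right] using huv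
  · rcases le_or_gt t a with hta | hta
    · exact hk_le t hta
    · exact hk_ge t (not_lt.mp fun htb => ht ⟨hta, htb⟩)

theorem exists_orderIso_apply_eq {a b u v : ℝ} (hu : u ∈ Ioo a b) (hv : v ∈ Ioo a b) :
    ∃ k : ℝ ≃o ℝ, k u = v ∧ ∀ t ∉ Ioo a b, k t = t := by
  rcases le_total u v with huv | hvu
  · exact exists_orderIso_apply_eq_of_le hu huv hv.2
  · obtain ⟨k, hk, hfix⟩ := exists_orderIso_apply_eq_of_le hv hvu hu.2
    exact ⟨k.symm, k.symm_apply_eq.mpr hk.symm, fun t ht => k.symm_apply_eq.mpr (hfix t ht).symm⟩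

end OrderIso

section SignMatching

open Set

theorem sign_eq_of_ne_zero {X : Type*} [TopologicalSpace X] {s : Set X} (hs : IsPreconnected s)
    {f : X → ℝ} (hf : ContinuousOn f s) (h0 : ∀ x ∈ s, f x ≠ 0) {x y : X} (hx : x ∈ s)
    (hy : y ∈ s) : sign (f x) = sign (f y) :=
  hs.constant (fun z hz => (continuousAt_sign_of_ne_zero (h0 z hz)).comp_continuousWithinAt
    (hf z hz)) hx hy

/-- `a` and `b` are consecutive elements of `S`. -/
structure IsGap (S : Finset ℝ) (a b : ℝ) : Prop where
  left_mem : a ∈ S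
  right_mem : b ∈ S
  notMem_Ioo : ∀ c ∈ S, c ∉ Ioo a b

theorem mem_or_forall_lt_or_forall_gt_or_gap (S : Finset ℝ) (t : ℝ) :
    t ∈ S ∨ (∀ c ∈ S, c < t) ∨ (∀ c ∈ S, t < c) ∨ ∃ a b, IsGap S a b ∧ t ∈ Ioo a b := by
  by_cases hS : t ∈ S
  · exact .inl hS
  have hne (c) (hc : c ∈ S) : c ≠ t := fun h => hS (h ▸ hc)
  rcases (S.filter (· < t)).eq_empty_or_nonempty with hlow | hlow
  · refine .inr (.inr (.inl fun c hc => (hne c hc).lt_or_gt.resolve_left fun h => ?_))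
    exact Finset.notMem_empty c (hlow ▸ Finset.mem_filter.mpr ⟨hc, h⟩)
  rcases (S.filter (t < ·)).eq_empty_or_nonempty with hupp | hupp
  · refine .inr (.inl fun c hc => (hne c hc).lt_or_gt.resolve_right fun h => ?_)
    exact Finset.notMem_empty c (hupp ▸ Finset.mem_filter.mpr ⟨hc, h⟩)
  obtain ⟨ha, hat⟩ := Finset.mem_filter.mp (Finset.max'_mem _ hlow)
  obtain ⟨hb, htb⟩ := Finset.mem_filter.mp (Finset.min'_mem _ hupp)
  refine .inr (.inr (.inr ⟨_, _, ⟨ha, hb, fun c hc hcI => ?_⟩, hat, htb⟩))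
  rcases (hne c hc).lt_or_gt with h | h
  · exact hcI.1.not_ge (Finset.le_max' _ c (Finset.mem_filter.mpr ⟨hc, h⟩))
  · exact hcI.2.not_ge (Finset.min'_le _ c (Finset.mem_filter.mpr ⟨hc, h⟩))

theorem sign_eq_of_strictMonoOn {p q : ℝ → ℝ} {a b t : ℝ} (hp : StrictMonoOn p (Icc a b))
    (hq : StrictMonoOn q (Icc a b)) (hcont : ContinuousOn p (Icc a b))
    (ha : sign (p a) = sign (q a)) (hb : sign (p b) = sign (q b))
    (hzero : ∀ z ∈ Ioo a b, p z = 0 → q z = 0) (ht : t ∈ Icc a b) : sign (p t) = sign (q t) := by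
  have hab : a ≤ b := ht.1.trans ht.2
  have hzero' (z) (hz : z ∈ Icc a b) (hpz : p z = 0) : q z = 0 := by
    rcases eq_endpoints_or_mem_Ioo_of_mem_Icc hz with rfl | rfl | hz
    · rwa [hpz, sign_zero, eq_comm, sign_eq_zero_iff] at ha
    · rwa [hpz, sign_zero, eq_comm, sign_eq_zero_iff] at hb
    · exact hzero z hz hpz
  by_cases hex : ∃ z ∈ Icc a b, p z = 0
  · obtain ⟨z, hz, hpz⟩ := hex
    have hqz := hzero' z hz hpz
    rcases lt_trichotomy t z with h | rfl | h
    · rw [sign_neg (hpz ▸ hp ht hz h), sign_neg (hqz ▸ hq ht hz h)]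
    · rw [hpz, hqz]
    · rw [sign_pos (hpz ▸ hp hz ht h), sign_pos (hqz ▸ hq hz ht h)]
  · push Not at hex
    have hsign {u v : ℝ} (hu : u ∈ Icc a b) (hv : v ∈ Icc a b) : sign (p u) = sign (p v) :=
      sign_eq_of_ne_zero isPreconnected_Icc hcont hex hu hv
    have hleft : a ∈ Icc a b := left_mem_Icc.mpr hab
    have hright : b ∈ Icc a b := right_mem_Icc.mpr hab
    rcases (hex t ht).lt_or_gt with hpt | hpt
    · have hqb : q b < 0 := by
        rwa [← sign_eq_neg_one_iff, ← hb, ← hsign ht hright, sign_eq_neg_one_iff]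
      rw [sign_neg hpt, sign_neg ((hq.monotoneOn ht hright ht.2).trans_lt hqb)]
    · have hqa : 0 < q a := by rwa [← sign_eq_one_iff, ← ha, ← hsign ht hleft, sign_eq_one_iff]
      rw [sign_pos hpt, sign_pos (hqa.trans_le (hq.monotoneOn hleft ht ht.1))]

theorem exists_zero_of_strictMonoOn {p q : ℝ → ℝ} {a b z : ℝ} (hp : StrictMonoOn p (Icc a b))
    (hcont : Continuous q) (ha : sign (p a) = sign (q a)) (hb : sign (p b) = sign (q b))
    (hz : z ∈ Ioo a b) (hpz : p z = 0) : ∃ w ∈ Ioo a b, q w = 0 := by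
  have hab : a ≤ b := (hz.1.trans hz.2).le
  have hpa : p a < 0 := hpz ▸ hp (left_mem_Icc.mpr hab) (Ioo_subset_Icc_self hz) hz.1
  have hpb : 0 < p b := hpz ▸ hp (Ioo_subset_Icc_self hz) (right_mem_Icc.mpr hab) hz.2
  rw [sign_neg hpa, eq_comm, sign_eq_neg_one_iff] at ha
  rw [sign_pos hpb, eq_comm, sign_eq_one_iff] at hb
  exact intermediate_value_Ioo hab hcont.continuousOn ⟨ha, hb⟩

/-- Both functions are strictly increasing, or both strictly decreasing, on `s`. -/
def StrictlyCoMonotoneOn (p q : ℝ → ℝ) (s : Set ℝ) : Prop :=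
  StrictMonoOn p s ∧ StrictMonoOn q s ∨ StrictAntiOn p s ∧ StrictAntiOn q s

/-- The data that determine the arrangement of the signs of `p` and of `q` relative to `S`: on each
gap of `S` both functions are strictly monotone in the same direction, their signs agree on `S`,
and they agree and are constant above `S` and below `S`. -/
structure SameShape (S : Finset ℝ) (p q : ℝ → ℝ) : Prop where
  coMonotone : ∀ a b, IsGap S a b → StrictlyCoMonotoneOn p q (Icc a b)
  sign_eq : ∀ c ∈ S, sign (p c) = sign (q c)
  sign_above : ∀ t u, (∀ c ∈ S, c < t) → (∀ c ∈ S, c < u) → sign (p t) = sign (q u)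
  sign_below : ∀ t u, (∀ c ∈ S, t < c) → (∀ c ∈ S, u < c) → sign (p t) = sign (q u)

namespace SameShape

variable {S : Finset ℝ} {p q : ℝ → ℝ}

theorem exists_zero_mem_gap (h : SameShape S p q) (hcont : Continuous q) {a b z : ℝ}
    (hab : IsGap S a b) (hz : z ∈ Ioo a b) (hpz : p z = 0) : ∃ w ∈ Ioo a b, q w = 0 := by
  have ha := h.sign_eq a hab.left_mem
  have hb := h.sign_eq b hab.right_mem
  rcases h.coMonotone a b hab with ⟨hp, -⟩ | ⟨hp, -⟩
  · exact exists_zero_of_strictMonoOn hp hcont ha hb hz hpz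
  · obtain ⟨w, hw, hqw⟩ := exists_zero_of_strictMonoOn (p := -p) (q := -q) hp.neg hcont.neg
      (by simp only [Pi.neg_apply, Left.sign_neg, ha])
      (by simp only [Pi.neg_apply, Left.sign_neg, hb]) hz (by simp [hpz])
    exact ⟨w, hw, by simpa using hqw⟩

theorem eq_of_zero_mem_gap (h : SameShape S p q) {a b z w : ℝ} (hab : IsGap S a b)
    (hz : z ∈ Ioo a b) (hw : w ∈ Ioo a b) (hpz : p z = 0) (hpw : p w = 0) : z = w := by
  have hinj : InjOn p (Icc a b) := (h.coMonotone a b hab).elim (·.1.injOn) (·.1.injOn)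
  exact hinj (Ioo_subset_Icc_self hz) (Ioo_subset_Icc_self hw) (hpz.trans hpw.symm)

theorem exists_orderIso_zeros (h : SameShape S p q) (hcont : Continuous q) (Z : Finset ℝ)
    (hZ : ∀ z ∈ Z, p z = 0) :
    ∃ k : ℝ ≃o ℝ, (∀ c ∈ S, k c = c) ∧ ∀ z ∈ Z, q (k z) = 0 := by
  classical
  induction Z using Finset.induction_on with
  | empty => exact ⟨OrderIso.refl ℝ, fun c _ => rfl, by simp⟩
  | insert z Z hzZ ih =>
    obtain ⟨k, hkS, hkZ⟩ := ih fun w hw => hZ w (Finset.mem_insert_of_mem hw)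
    have hpz : p z = 0 := hZ z (Finset.mem_insert_self z Z)
    suffices hmove : q (k z) = 0 ∨ ∃ a b, IsGap S a b ∧ z ∈ Ioo a b by
      obtain hqz | ⟨a, b, hab, hz⟩ := hmove
      · exact ⟨k, hkS, Finset.forall_mem_insert _ _ _ |>.mpr ⟨hqz, hkZ⟩⟩
      have hk_mem (t : ℝ) : k t ∈ Ioo a b ↔ t ∈ Ioo a b := by
        have hlt := and_congr (k.lt_iff_lt (x := a) (y := t)) (k.lt_iff_lt (x := t) (y := b))
        rwa [hkS a hab.left_mem, hkS b hab.right_mem] at hlt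
      obtain ⟨w, hw, hqw⟩ := h.exists_zero_mem_gap hcont hab hz hpz
      obtain ⟨m, hmz, hm⟩ := exists_orderIso_apply_eq ((hk_mem z).mpr hz) hw
      refine ⟨k.trans m, fun c hc => ?_, Finset.forall_mem_insert _ _ _ |>.mpr ⟨?_, fun y hy => ?_⟩⟩
      · simp only [OrderIso.trans_apply, hkS c hc, hm c (hab.notMem_Ioo c hc)]
      · simp only [OrderIso.trans_apply, hmz, hqw]
      · have hy' : k y ∉ Ioo a b := fun hy' => hzZ <| by
          rwa [h.eq_of_zero_mem_gap hab hz ((hk_mem y).mp hy') hpz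
            (hZ y (Finset.mem_insert_of_mem hy))]
        simp only [OrderIso.trans_apply, hm _ hy', hkZ y hy]
    have hsign (hsign : sign (p z) = sign (q (k z))) : q (k z) = 0 := by
      rwa [hpz, sign_zero, eq_comm, sign_eq_zero_iff] at hsign
    rcases mem_or_forall_lt_or_forall_gt_or_gap S z with hz | hz | hz | hz
    · exact .inl (hsign (by rw [hkS z hz, h.sign_eq z hz]))
    · exact .inl (hsign (h.sign_above z _ hz fun c hc => hkS c hc ▸ k.lt_iff_lt.mpr (hz c hc)))
    · exact .inl (hsign (h.sign_below z _ hz fun c hc => hkS c hc ▸ k.lt_iff_lt.mpr (hz c hc)))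
    · exact .inr hz

theorem sign_eq_on_gap (h : SameShape S p q) (hcont : Continuous p) {k : ℝ ≃o ℝ}
    (hkS : ∀ c ∈ S, k c = c) (hk : ∀ z, p z = 0 → q (k z) = 0) {a b t : ℝ} (hab : IsGap S a b)
    (ht : t ∈ Ioo a b) : sign (p t) = sign (q (k t)) := by
  have hka := hkS a hab.left_mem
  have hkb := hkS b hab.right_mem
  have hmaps : MapsTo k (Icc a b) (Icc a b) := fun u hu =>
    ⟨hka ▸ k.monotone hu.1, hkb ▸ k.monotone hu.2⟩
  have ha : sign (p a) = sign (q (k a)) := by rw [hka, h.sign_eq a hab.left_mem]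
  have hb : sign (p b) = sign (q (k b)) := by rw [hkb, h.sign_eq b hab.right_mem]
  have ht' := Ioo_subset_Icc_self ht
  rcases h.coMonotone a b hab with ⟨hp, hq⟩ | ⟨hp, hq⟩
  · exact sign_eq_of_strictMonoOn hp (hq.comp (k.strictMono.strictMonoOn _) hmaps)
      hcont.continuousOn ha hb (fun z _ => hk z) ht'
  · have := sign_eq_of_strictMonoOn hp.neg (hq.comp_strictMonoOn (k.strictMono.strictMonoOn _)
      hmaps).neg hcont.neg.continuousOn (by simp [Left.sign_neg, ha]) (by simp [Left.sign_neg, hb])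
      (fun z _ hz => by simpa using hk z (by simpa using hz)) ht'
    simpa [Left.sign_neg] using this

theorem exists_orderIso (h : SameShape S p q) (hp : Continuous p) (hq : Continuous q)
    (hfin : {z | p z = 0}.Finite) :
    ∃ k : ℝ ≃o ℝ, (∀ c ∈ S, k c = c) ∧ ∀ t, sign (p t) = sign (q (k t)) := by
  obtain ⟨k, hkS, hkZ⟩ := h.exists_orderIso_zeros hq hfin.toFinset (by simp)
  refine ⟨k, hkS, fun t => ?_⟩
  rcases mem_or_forall_lt_or_forall_gt_or_gap S t with ht | ht | ht | ⟨a, b, hab, ht⟩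
  · rw [hkS t ht, h.sign_eq t ht]
  · exact h.sign_above t _ ht fun c hc => hkS c hc ▸ k.lt_iff_lt.mpr (ht c hc)
  · exact h.sign_below t _ ht fun c hc => hkS c hc ▸ k.lt_iff_lt.mpr (ht c hc)
  · exact h.sign_eq_on_gap hp hkS (fun z hz => hkZ z (by simpa using hz)) hab ht

end SameShape

end SignMatching

section SignDiagrams

open Polynomial Set Filter

theorem eventually_sign_eval_eq (p : ℝ[X]) :
    ∀ᶠ t in Bornology.cobounded ℝ,
      sign (p.eval t) = sign p.leadingCoeff * sign t ^ p.natDegree := by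
  obtain ⟨φ, hφ, heq⟩ := p.isEquivalent_cobounded_leading_monomial.exists_eq_mul
  filter_upwards [heq, hφ.eventually (lt_mem_nhds one_pos)] with t ht hφt
  rw [ht, Pi.mul_apply, sign_mul, sign_pos hφt, one_mul, sign_mul, sign_pow]

theorem natDegree_eq_of_sign_coeff_eq {p q : ℝ[X]}
    (h : ∀ j, sign (p.coeff j) = sign (q.coeff j)) : p.natDegree = q.natDegree := by
  have hzero (j : ℕ) : p.coeff j = 0 ↔ q.coeff j = 0 := by
    rw [← sign_eq_zero_iff, h, sign_eq_zero_iff]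
  refine le_antisymm (natDegree_le_iff_coeff_eq_zero.mpr fun j hj => ?_)
    (natDegree_le_iff_coeff_eq_zero.mpr fun j hj => ?_)
  · exact (hzero j).mpr (coeff_eq_zero_of_natDegree_lt hj)
  · exact (hzero j).mp (coeff_eq_zero_of_natDegree_lt hj)

theorem exists_eventually_sign_eval_eq {p q : ℝ[X]}
    (hcoeff : ∀ j, sign (p.coeff j) = sign (q.coeff j)) {l : Filter ℝ} {ε : SignType} {h : ℝ → ℝ}
    (hl : l ≤ Bornology.cobounded ℝ) (hε : ∀ᶠ t in l, sign t = ε) (hh : Tendsto h l l) :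
    ∃ τ, ∀ᶠ t in l, sign (p.eval t) = τ ∧ sign (q.eval (h t)) = τ := by
  have hdeg := natDegree_eq_of_sign_coeff_eq hcoeff
  refine ⟨sign p.leadingCoeff * ε ^ p.natDegree, ?_⟩
  filter_upwards [hl (eventually_sign_eval_eq p), hε,
    hh.eventually (hl (eventually_sign_eval_eq q)), hh.eventually hε] with t hp ht hq hht
  rw [hp, hq, ht, hht, leadingCoeff, leadingCoeff, hcoeff, hdeg]
  exact ⟨rfl, rfl⟩

theorem strictMonoOn_comp_of_derivative_pos {q : ℝ[X]} {h : ℝ ≃o ℝ} {a b : ℝ}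
    (hpos : ∀ t ∈ Ioo a b, 0 < q.derivative.eval (h t)) :
    StrictMonoOn (fun t => q.eval (h t)) (Icc a b) := by
  have hq : StrictMonoOn (fun t => q.eval t) (Icc (h a) (h b)) := by
    refine strictMonoOn_of_deriv_pos (convex_Icc _ _) q.continuous.continuousOn fun t ht => ?_
    rw [interior_Icc] at ht
    rw [Polynomial.deriv, ← h.apply_symm_apply t]
    exact hpos _ ⟨h.lt_symm_apply.mpr ht.1, h.symm_apply_lt.mpr ht.2⟩
  exact hq.comp (h.strictMono.strictMonoOn _) fun t ht => ⟨h.monotone ht.1, h.monotone ht.2⟩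

theorem strictlyCoMonotoneOn_of_sign_derivative_eq {p q : ℝ[X]} {h : ℝ ≃o ℝ} {a b : ℝ}
    (hsign : ∀ t, sign (p.derivative.eval t) = sign (q.derivative.eval (h t)))
    (h0 : ∀ t ∈ Ioo a b, p.derivative.eval t ≠ 0) :
    StrictlyCoMonotoneOn (fun t => p.eval t) (fun t => q.eval (h t)) (Icc a b) := by
  rcases (Ioo a b).eq_empty_or_nonempty with hempty | ⟨c, hc⟩
  · have hsub : (Icc a b).Subsingleton :=
      subsingleton_Icc_of_ge (not_lt.mp (Ioo_eq_empty_iff.mp hempty))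
    exact .inl ⟨hsub.strictMonoOn _, hsub.strictMonoOn _⟩
  have hconst (t : ℝ) (ht : t ∈ Ioo a b) :
      sign (p.derivative.eval t) = sign (p.derivative.eval c) :=
    sign_eq_of_ne_zero isPreconnected_Ioo p.derivative.continuous.continuousOn h0 ht hc
  rcases (h0 c hc).lt_or_gt with hneg | hpos
  · have hp (t) (ht : t ∈ Ioo a b) : p.derivative.eval t < 0 := by
      rw [← sign_eq_neg_one_iff, hconst t ht, sign_neg hneg]
    have hq (t) (ht : t ∈ Ioo a b) : q.derivative.eval (h t) < 0 := by
      rw [← sign_eq_neg_one_iff, ← hsign, sign_neg (hp t ht)]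
    refine .inr ⟨?_, ?_⟩
    · simpa using (strictMonoOn_comp_of_derivative_pos (q := -p) (h := OrderIso.refl ℝ)
        (by simpa using hp)).neg
    · simpa using (strictMonoOn_comp_of_derivative_pos (q := -q) (h := h) (by simpa using hq)).neg
  · have hp (t) (ht : t ∈ Ioo a b) : 0 < p.derivative.eval t := by
      rw [← sign_eq_one_iff, hconst t ht, sign_pos hpos]
    have hq (t) (ht : t ∈ Ioo a b) : 0 < q.derivative.eval (h t) := by
      rw [← sign_eq_one_iff, ← hsign, sign_pos (hp t ht)]
    exact .inl ⟨strictMonoOn_comp_of_derivative_pos (h := OrderIso.refl ℝ) hp,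
      strictMonoOn_comp_of_derivative_pos hq⟩

theorem sign_eval_apply_of_fixes_roots {f : ℝ[X]} {k : ℝ ≃o ℝ} (hk : ∀ t ∈ f.roots, k t = t)
    (t : ℝ) : sign (f.eval (k t)) = sign (f.eval t) := by
  rcases eq_or_ne f 0 with rfl | hf
  · simp
  have hroot (z : ℝ) (hz : f.eval z = 0) : k z = z := hk z ((mem_roots hf).mpr hz)
  by_cases ht : f.eval t = 0
  · rw [hroot t ht]
  refine sign_eq_of_ne_zero isPreconnected_uIcc f.continuous.continuousOn (fun z hz hfz => ?_)
    right_mem_uIcc left_mem_uIcc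
  have htz : t ≠ z := fun h => ht (h ▸ hfz)
  have hkz := hroot z hfz
  rcases mem_uIcc.mp hz with ⟨h₁, h₂⟩ | ⟨h₁, h₂⟩
  · exact (k.lt_iff_lt.mpr (h₁.lt_of_ne htz)).not_ge (hkz.trans_le h₂)
  · exact (k.lt_iff_lt.mpr (h₂.lt_of_ne htz.symm)).not_ge (h₁.trans_eq hkz.symm)

/-- The order isomorphism `h` of the line carries the signs of each `f i` to those of `g i`. -/
def MatchesSigns {ι : Type*} (h : ℝ ≃o ℝ) (f g : ι → ℝ[X]) : Prop :=
  ∀ i t, sign ((f i).eval t) = sign ((g i).eval (h t))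

variable {ι : Type*} [Finite ι] {h : ℝ ≃o ℝ} {f g : ι → ℝ[X]} {p q : ℝ[X]} {k : ι}

theorem MatchesSigns.exists_sameShape (hfg : MatchesSigns h f g) (hp : f k = derivative p)
    (hq : g k = derivative q) (hp0 : derivative p ≠ 0)
    (hcoeff : ∀ j, sign (p.coeff j) = sign (q.coeff j))
    (hroots : ∀ i, ∀ t ∈ (f i).roots, sign (p.eval t) = sign (q.eval (h t))) :
    ∃ S : Finset ℝ, (∀ i, ∀ t ∈ (f i).roots, t ∈ S) ∧
      SameShape S (fun t => p.eval t) (fun t => q.eval (h t)) := by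
  classical
  cases nonempty_fintype ι
  have hcob := IsOrderBornology.cobounded_eq (α := ℝ)
  obtain ⟨τ, hτ⟩ := exists_eventually_sign_eval_eq hcoeff (hcob.symm ▸ le_sup_right)
    ((eventually_gt_atTop 0).mono fun t => sign_pos) h.tendsto_atTop
  obtain ⟨τ', hτ'⟩ := exists_eventually_sign_eval_eq hcoeff (hcob.symm ▸ le_sup_left)
    ((eventually_lt_atBot 0).mono fun t => sign_neg) h.tendsto_atBot
  obtain ⟨hi, hhi⟩ := eventually_atTop.mp hτ
  obtain ⟨lo, hlo⟩ := eventually_atBot.mp hτ'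
  let S : Finset ℝ := (Finset.univ.biUnion fun i => (f i).roots.toFinset) ∪ {lo, hi}
  have hloS : lo ∈ S := by simp [S]
  have hhiS : hi ∈ S := by simp [S]
  have hrootsS (i) (t) (ht : t ∈ (f i).roots) : t ∈ S :=
    Finset.mem_union_left _ (Finset.mem_biUnion.mpr
      ⟨i, Finset.mem_univ i, Multiset.mem_toFinset.mpr ht⟩)
  refine ⟨S, hrootsS, fun a b hab => ?_, fun c hc => ?_, fun t u ht hu => ?_, fun t u ht hu => ?_⟩
  · refine strictlyCoMonotoneOn_of_sign_derivative_eq (fun t => hp ▸ hq ▸ hfg k t)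
      fun t ht ht0 => ?_
    exact hab.notMem_Ioo t (hrootsS k t (hp ▸ (mem_roots hp0).mpr ht0)) ht
  · simp only [S, Finset.mem_union, Finset.mem_biUnion, Finset.mem_univ, true_and,
      Multiset.mem_toFinset, Finset.mem_insert, Finset.mem_singleton] at hc
    rcases hc with ⟨i, hc⟩ | rfl | rfl
    · exact hroots i c hc
    · rw [(hlo _ le_rfl).1, (hlo _ le_rfl).2]
    · rw [(hhi _ le_rfl).1, (hhi _ le_rfl).2]
  · rw [(hhi t (ht hi hhiS).le).1, (hhi u (hu hi hhiS).le).2]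
  · rw [(hlo t (ht lo hloS).le).1, (hlo u (hu lo hloS).le).2]

theorem MatchesSigns.exists_extension (hfg : MatchesSigns h f g) (hp : f k = derivative p)
    (hq : g k = derivative q) (hcoeff : ∀ j, sign (p.coeff j) = sign (q.coeff j))
    (hroots : ∀ i, ∀ t ∈ (f i).roots, sign (p.eval t) = sign (q.eval (h t))) :
    ∃ h', MatchesSigns h' f g ∧ ∀ t, sign (p.eval t) = sign (q.eval (h' t)) := by
  rcases eq_or_ne (derivative p) 0 with hp0 | hp0
  · have hpdeg := derivative_eq_zero.mp hp0
    have hqdeg := natDegree_eq_of_sign_coeff_eq hcoeff ▸ hpdeg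
    refine ⟨h, hfg, fun t => ?_⟩
    rw [eq_C_of_natDegree_eq_zero hpdeg, eq_C_of_natDegree_eq_zero hqdeg, eval_C, eval_C, hcoeff]
  obtain ⟨S, hrootsS, hS⟩ := hfg.exists_sameShape hp hq hp0 hcoeff hroots
  have hpne : p ≠ 0 := fun h => hp0 (by simp [h])
  obtain ⟨m, hmS, hm⟩ := hS.exists_orderIso p.continuous (q.continuous.comp h.continuous)
    (finite_setOfPred_isRoot hpne)
  refine ⟨m.trans h, fun i t => ?_, hm⟩
  rw [OrderIso.trans_apply, ← hfg i,
    sign_eval_apply_of_fixes_roots fun t ht => hmS t (hrootsS i t ht)]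

end SignDiagrams

section PseudoDivision

open Polynomial

theorem natDegree_le_of_le_succ_of_coeff_eq_zero {R : Type*} [Semiring R] {p : R[X]} {n : ℕ}
    (hp : p.natDegree ≤ n + 1) (h0 : p.coeff (n + 1) = 0) : p.natDegree ≤ n := by
  refine natDegree_le_iff_coeff_eq_zero.mpr fun N hN => ?_
  rcases (Nat.succ_le_of_lt hN).eq_or_lt with rfl | hN
  exacts [h0, coeff_eq_zero_of_natDegree_lt (hp.trans_lt hN)]

theorem exists_pseudoRemainder {R : Type*} [CommRing R] (p : R[X]) {f : R[X]} {j : ℕ}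
    (hf : f.natDegree ≤ j + 1) :
    ∃ m, ∃ r : R[X], r.natDegree ≤ j ∧ f ∣ C (f.coeff (j + 1) ^ (2 * m)) * p - r := by
  set c := f.coeff (j + 1)
  suffices key : ∀ n, ∀ p : R[X], p.natDegree ≤ j + n →
      ∃ m, ∃ r : R[X], r.natDegree ≤ j ∧ f ∣ C (c ^ (2 * m)) * p - r from
    key p.natDegree p le_add_self
  intro n
  induction n with
  | zero => exact fun p hp => ⟨0, p, hp, by simp⟩
  | succ n ih =>
    intro p (hp : p.natDegree ≤ j + n + 1)
    let u : R[X] := C (c * p.coeff (j + n + 1)) * X ^ n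
    have hu : (u * f).natDegree ≤ j + n + 1 := by
      refine (natDegree_mul_le_of_le (natDegree_C_mul_X_pow_le _ _) hf).trans ?_
      omega
    have hp' : (C (c ^ 2) * p - u * f).natDegree ≤ j + n := by
      refine natDegree_le_of_le_succ_of_coeff_eq_zero
        ((natDegree_sub_le_of_le ((natDegree_C_mul_le _ _).trans hp) hu).trans_eq
          (max_self _)) ?_
      have : (u * f).coeff (j + n + 1) = c * p.coeff (j + n + 1) * c := by
        rw [mul_assoc, coeff_C_mul, show j + n + 1 = (j + 1) + n by ring, coeff_X_pow_mul]
      rw [coeff_sub, coeff_C_mul, this]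
      ring
    obtain ⟨m, r, hr, v, hv⟩ := ih _ hp'
    refine ⟨m + 1, r, hr, v + C (c ^ (2 * m)) * u, ?_⟩
    have : C (c ^ (2 * (m + 1))) = C (c ^ (2 * m)) * C (c ^ 2) := by
      rw [← C_mul, ← pow_add, mul_add_one]
    rw [this]
    linear_combination hv

end PseudoDivision

section QuantifierElimination

open Polynomial

variable {σ : Type*}

/-- The real polynomial obtained by evaluating the coefficients of a univariate polynomial at the
point `x`. -/
noncomputable def specialize (x : σ → ℝ) : (MvPolynomial σ ℚ)[X] →+* ℝ[X] :=
  mapRingHom (MvPolynomial.aeval x : MvPolynomial σ ℚ →ₐ[ℚ] ℝ).toRingHom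

@[simp] theorem coeff_specialize (x : σ → ℝ) (f : (MvPolynomial σ ℚ)[X]) (j : ℕ) :
    (specialize x f).coeff j = MvPolynomial.aeval x (f.coeff j) := by
  simp [specialize]

theorem natDegree_specialize_le (x : σ → ℝ) (f : (MvPolynomial σ ℚ)[X]) :
    (specialize x f).natDegree ≤ f.natDegree :=
  natDegree_map_le

theorem specialize_derivative (x : σ → ℝ) (f : (MvPolynomial σ ℚ)[X]) :
    specialize x (derivative f) = derivative (specialize x f) :=
  (derivative_map f _).symm

theorem specialize_C (x : σ → ℝ) (c : MvPolynomial σ ℚ) :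
    specialize x (C c) = C (MvPolynomial.aeval x c) := by
  simp [specialize]

/-- Two families of polynomials whose zeros and signs are arranged in the same way on the line. -/
def SameDiagram {ι : Type*} (f g : ι → ℝ[X]) : Prop := ∃ h : ℝ ≃o ℝ, MatchesSigns h f g

theorem exists_sign_remainder (p g : (MvPolynomial σ ℚ)[X]) (e : ℕ) :
    ∃ r : (MvPolynomial σ ℚ)[X], r.natDegree ≤ e ∧
      ∀ x : σ → ℝ, (specialize x g).natDegree = e + 1 → ∀ t ∈ (specialize x g).roots,
        sign ((specialize x p).eval t) = sign ((specialize x r).eval t) := by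
  let f := g %ₘ X ^ (e + 2)
  have hX : (X ^ (e + 2) : (MvPolynomial σ ℚ)[X]).Monic := monic_X_pow _
  have hf : f.natDegree ≤ e + 1 := by
    have := natDegree_modByMonic_lt g hX fun h => by simpa using congrArg natDegree h
    rw [natDegree_X_pow] at this
    exact Nat.le_of_lt_succ this
  obtain ⟨m, r, hr, u, hu⟩ := exists_pseudoRemainder p hf
  refine ⟨r, hr, fun x hdeg t ht => ?_⟩
  have hspec : specialize x f = specialize x g := by
    rw [specialize, coe_mapRingHom, map_modByMonic _ hX, Polynomial.map_pow, map_X,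
      modByMonic_eq_self_iff (monic_X_pow _), degree_X_pow, degree_lt_iff_coeff_zero]
    exact fun j hj => coeff_eq_zero_of_natDegree_lt (hdeg.trans_lt hj)
  have hc : MvPolynomial.aeval x (f.coeff (e + 1)) ≠ 0 := by
    rw [← coeff_specialize, hspec, ← hdeg]
    exact leadingCoeff_ne_zero.mpr (mem_roots'.mp ht).1
  have heval := congrArg (fun w => (specialize x w).eval t) hu
  simp only [map_sub, map_mul, specialize_C, eval_sub, eval_mul, eval_C, hspec,
    (mem_roots'.mp ht).2.eq_zero, zero_mul, sub_eq_zero] at heval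
  rw [← heval, map_pow, sign_mul, sign_pos (Even.pow_pos ⟨m, two_mul m⟩ hc), one_mul]

theorem specialize_sign_eq_of_remainder {x y : σ → ℝ} {p g : (MvPolynomial σ ℚ)[X]} {d : ℕ}
    {r : Fin (d + 1) → (MvPolynomial σ ℚ)[X]} (hg : g.natDegree ≤ d + 1)
    (hr : ∀ (e : Fin (d + 1)) (x : σ → ℝ), (specialize x g).natDegree = e + 1 →
      ∀ t ∈ (specialize x g).roots,
        sign ((specialize x p).eval t) = sign ((specialize x (r e)).eval t))
    (hcoeff : ∀ j, sign ((specialize x g).coeff j) = sign ((specialize y g).coeff j))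
    {h : ℝ ≃o ℝ}
    (hg_match : ∀ t, sign ((specialize x g).eval t) = sign ((specialize y g).eval (h t)))
    (hr_match : ∀ e t, sign ((specialize x (r e)).eval t) = sign ((specialize y (r e)).eval (h t)))
    {t : ℝ} (ht : t ∈ (specialize x g).roots) :
    sign ((specialize x p).eval t) = sign ((specialize y p).eval (h t)) := by
  obtain ⟨hg0, hroot⟩ := mem_roots'.mp ht
  have hdeg := natDegree_eq_of_sign_coeff_eq hcoeff
  have hpos : 0 < (specialize x g).natDegree :=
    natDegree_pos_iff_degree_pos.mpr (degree_pos_of_root hg0 hroot)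
  have hle := (natDegree_specialize_le x g).trans hg
  obtain ⟨e, he⟩ : ∃ e : Fin (d + 1), (specialize x g).natDegree = e + 1 :=
    ⟨⟨(specialize x g).natDegree - 1, by omega⟩, by simp; omega⟩
  have hyt : h t ∈ (specialize y g).roots := by
    refine (mem_roots fun h0 => ?_).mpr ?_
    · rw [hdeg, h0, natDegree_zero] at hpos
      exact hpos.false
    · rw [IsRoot, ← sign_eq_zero_iff, ← hg_match, hroot.eq_zero, sign_zero]
  rw [hr e x he t ht, hr_match, hr e y (hdeg ▸ he) _ hyt]

universe u

variable {ι : Type u} [Finite ι]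

theorem SignEq.sign_coeff_eq {s : Finset (MvPolynomial σ ℚ)} {x y : σ → ℝ} (h : SignEq s x y)
    {g : (MvPolynomial σ ℚ)[X]} (hg : g.coeffs ⊆ s) (j : ℕ) :
    sign ((specialize x g).coeff j) = sign ((specialize y g).coeff j) := by
  rw [coeff_specialize, coeff_specialize]
  by_cases h0 : g.coeff j = 0
  · simp [h0]
  · exact h _ (hg (coeff_mem_coeffs h0))

theorem sameDiagram_of_derivative_of_remainder [DecidableEq ι] {x y : σ → ℝ}
    {F : ι → (MvPolynomial σ ℚ)[X]} {i : ι} {d : ℕ}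
    {r : ι → Fin (d + 1) → (MvPolynomial σ ℚ)[X]}
    (hdeg : ∀ k, (Function.update F i (derivative (F i)) k).natDegree ≤ d + 1)
    (hr : ∀ k (e : Fin (d + 1)) (x : σ → ℝ),
      (specialize x (Function.update F i (derivative (F i)) k)).natDegree = e + 1 →
      ∀ t ∈ (specialize x (Function.update F i (derivative (F i)) k)).roots,
        sign ((specialize x (F i)).eval t) = sign ((specialize x (r k e)).eval t))
    {s : Finset (MvPolynomial σ ℚ)} (hxy : SignEq s x y) (hFs : (F i).coeffs ⊆ s)
    (hGs : ∀ k, (Function.update F i (derivative (F i)) k).coeffs ⊆ s)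
    (h : SameDiagram
      (fun a => specialize x (Sum.elim (Function.update F i (derivative (F i))) r.uncurry a))
      (fun a => specialize y (Sum.elim (Function.update F i (derivative (F i))) r.uncurry a))) :
    SameDiagram (fun k => specialize x (F k)) (fun k => specialize y (F k)) := by
  set G := Function.update F i (derivative (F i))
  obtain ⟨h, hmatch⟩ := h
  have hG : MatchesSigns h (fun k => specialize x (G k)) (fun k => specialize y (G k)) :=
    fun k => hmatch (.inl k)
  have hderiv (x : σ → ℝ) : specialize x (G i) = derivative (specialize x (F i)) := by
    simp only [G, ← specialize_derivative, Function.update_self]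
  obtain ⟨h', hG', hF'⟩ := hG.exists_extension (hderiv x) (hderiv y) (hxy.sign_coeff_eq hFs)
    fun k t ht => specialize_sign_eq_of_remainder (hdeg k) (hr k) (hxy.sign_coeff_eq (hGs k))
      (hG k) (fun e => hmatch (.inr (k, e))) ht
  refine ⟨h', fun k => ?_⟩
  rcases eq_or_ne k i with rfl | hk
  · exact hF'
  · simpa only [G, Function.update_of_ne hk] using hG' k

theorem card_filter_derivative_lt {ι : Type*} [Fintype ι] [DecidableEq ι] {κ : Type*} [Fintype κ]
    {F : ι → (MvPolynomial σ ℚ)[X]} {i : ι} {d : ℕ} (hi : (F i).natDegree = d + 1)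
    {r : κ → (MvPolynomial σ ℚ)[X]} (hr : ∀ a, (r a).natDegree ≤ d) :
    (Finset.univ.filter fun a =>
        (Sum.elim (Function.update F i (derivative (F i))) r a).natDegree = d + 1).card <
      (Finset.univ.filter fun k => (F k).natDegree = d + 1).card := by
  classical
  have hderiv : (derivative (F i)).natDegree < d + 1 := hi ▸ natDegree_derivative_lt (by omega)
  refine lt_of_le_of_lt (Finset.card_le_card (t := ((Finset.univ.filter fun k =>
    (F k).natDegree = d + 1).erase i).map ⟨Sum.inl, Sum.inl_injective⟩) fun a ha => ?_) ?_
  · rw [Finset.mem_filter_univ] at ha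
    rcases a with k | a
    · rcases eq_or_ne k i with rfl | hk
      · simp only [Sum.elim_inl, Function.update_self] at ha
        omega
      · simpa [hk] using ha
    · exact absurd ha ((hr a).trans_lt d.lt_succ_self).ne
  · rw [Finset.card_map]
    exact Finset.card_erase_lt_of_mem (Finset.mem_filter.mpr ⟨Finset.mem_univ i, hi⟩)

theorem exists_finset_sameDiagram_of_natDegree_le (d : ℕ) :
    ∀ {ι : Type u} [Finite ι] (F : ι → (MvPolynomial σ ℚ)[X]), (∀ i, (F i).natDegree ≤ d) →
      ∃ s : Finset (MvPolynomial σ ℚ), ∀ x y, SignEq s x y →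
        SameDiagram (fun i => specialize x (F i)) (fun i => specialize y (F i)) := by
  classical
  induction d with
  | zero =>
    intro ι _ F hF
    cases nonempty_fintype ι
    refine ⟨Finset.univ.biUnion fun i => (F i).coeffs, fun x y hxy => ⟨.refl ℝ, fun i t => ?_⟩⟩
    have hconst (x : σ → ℝ) : specialize x (F i) = C ((specialize x (F i)).coeff 0) :=
      eq_C_of_natDegree_le_zero ((natDegree_specialize_le x _).trans (hF i))
    change sign ((specialize x (F i)).eval t) = sign ((specialize y (F i)).eval t)
    rw [hconst x, hconst y, eval_C, eval_C]
    exact hxy.sign_coeff_eq (Finset.subset_biUnion_of_mem (fun i => (F i).coeffs)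
      (Finset.mem_univ i)) 0
  | succ d ih =>
    intro ι _ F hF
    cases nonempty_fintype ι
    induction hn : (Finset.univ.filter fun k => (F k).natDegree = d + 1).card
      using Nat.strong_induction_on generalizing ι with
    | _ n ihn =>
    by_cases hlow : ∀ i, (F i).natDegree ≤ d
    · exact ih F hlow
    push Not at hlow
    obtain ⟨i, hi⟩ := hlow
    have hi : (F i).natDegree = d + 1 := (hF i).antisymm hi
    let G := Function.update F i (derivative (F i))
    choose r hrdeg hr using fun k (e : Fin (d + 1)) => exists_sign_remainder (σ := σ) (F i) (G k) e
    have hGdeg (k) : (G k).natDegree ≤ d + 1 := by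
      rcases eq_or_ne k i with rfl | hk
      · simpa only [G, Function.update_self] using (natDegree_derivative_le _).trans (by omega)
      · simpa only [G, Function.update_of_ne hk] using hF k
    have hrdeg' (a : ι × Fin (d + 1)) : (r.uncurry a).natDegree ≤ d :=
      (hrdeg a.1 a.2).trans (Nat.le_of_lt_succ a.2.isLt)
    obtain ⟨s, hs⟩ := ihn _ (hn ▸ card_filter_derivative_lt hi hrdeg') (Sum.elim G r.uncurry)
      (Sum.forall.mpr ⟨hGdeg, fun a => (hrdeg' a).trans d.le_succ⟩) inferInstance rfl
    refine ⟨s ∪ ((F i).coeffs ∪ Finset.univ.biUnion fun k => (G k).coeffs), fun x y hxy => ?_⟩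
    refine sameDiagram_of_derivative_of_remainder hGdeg hr hxy
      (Finset.subset_union_left.trans Finset.subset_union_right) (fun k => ?_)
      (hs x y (hxy.mono Finset.subset_union_left))
    exact (Finset.subset_biUnion_of_mem (fun k => (G k).coeffs) (Finset.mem_univ k)).trans
      (Finset.subset_union_right.trans Finset.subset_union_right)

theorem exists_finset_sameDiagram (F : ι → (MvPolynomial σ ℚ)[X]) :
    ∃ s : Finset (MvPolynomial σ ℚ), ∀ x y, SignEq s x y →
      SameDiagram (fun i => specialize x (F i)) (fun i => specialize y (F i)) := by
  cases nonempty_fintype ι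
  exact exists_finset_sameDiagram_of_natDegree_le (Finset.univ.sup fun i => (F i).natDegree) F
    fun i => Finset.le_sup (f := fun i => (F i).natDegree) (Finset.mem_univ i)

/-- The polynomial `f` seen as a polynomial in its first variable, with the other variables in the
coefficients. -/
noncomputable def asUnivariate (f : MvPolynomial ℕ ℚ) : (MvPolynomial ℕ ℚ)[X] :=
  MvPolynomial.aeval (cons X fun i => C (MvPolynomial.X i)) f

theorem eval_specialize_asUnivariate (f : MvPolynomial ℕ ℚ) (t : ℝ) (x : ℕ → ℝ) :
    (specialize x (asUnivariate f)).eval t = MvPolynomial.aeval (cons t x) f := by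
  let φ : (MvPolynomial ℕ ℚ)[X] →+* ℝ := (evalRingHom t).comp (specialize x)
  suffices φ.comp (MvPolynomial.aeval (cons X fun i => C (MvPolynomial.X i))).toRingHom =
      (MvPolynomial.aeval (cons t x)).toRingHom from RingHom.congr_fun this f
  refine MvPolynomial.ringHom_ext (fun q => by simp [φ, specialize_C]) fun i => ?_
  cases i with
  | zero => simp [φ, specialize]
  | succ i => simp [φ, specialize_C]

namespace IsSemialg

variable {p : (ℕ → ℝ) → Prop}

theorem exists_cons (hp : IsSemialg p) : IsSemialg fun x => ∃ t, p (cons t x) := by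
  obtain ⟨s, hs⟩ := hp
  obtain ⟨s', hs'⟩ := exists_finset_sameDiagram fun f : s => asUnivariate f
  have htransfer (x y : ℕ → ℝ) (hxy : SignEq s' x y) : (∃ t, p (cons t x)) → ∃ t, p (cons t y) := by
    rintro ⟨t, ht⟩
    obtain ⟨h, hmatch⟩ := hs' x y hxy
    refine ⟨h t, (hs _ _ fun f hf => ?_).mp ht⟩
    simpa only [eval_specialize_asUnivariate] using hmatch ⟨f, hf⟩ t
  exact ⟨s', fun x y hxy => ⟨htransfer x y hxy, htransfer y x fun f hf => (hxy f hf).symm⟩⟩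

theorem forall_cons (hp : IsSemialg p) : IsSemialg fun x => ∀ t, p (cons t x) := by
  simpa only [not_exists, not_not] using hp.not.exists_cons.not

theorem forall_append {n : ℕ} (hp : IsSemialg p) :
    IsSemialg fun x => ∀ u : Fin n → ℝ, p (append u x) := by
  induction n generalizing p with
  | zero => simpa [Unique.forall_iff] using hp
  | succ n ih =>
    simpa only [Fin.forall_fin_succ_pi, append_cons, forall_comm (α := ℝ)] using ih hp.forall_cons

end IsSemialg

end QuantifierElimination

section OneVariable

open Polynomial Filter Set

theorem IsSemialg.exists_uniform_breakpoints {p : (ℕ → ℝ) → Prop} (hp : IsSemialg p) :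
    ∃ K : ℕ, ∀ x, ∃ S : Finset ℝ, S.card ≤ K ∧ ∀ I : Set ℝ, I.OrdConnected → Disjoint I S →
      ∀ t ∈ I, ∀ u ∈ I, p (cons t x) ↔ p (cons u x) := by
  classical
  obtain ⟨s, hs⟩ := hp
  let F (x : ℕ → ℝ) (f : MvPolynomial ℕ ℚ) : ℝ[X] := specialize x (asUnivariate f)
  refine ⟨∑ f ∈ s, (asUnivariate f).natDegree, fun x =>
    ⟨s.biUnion fun f => (F x f).roots.toFinset, ?_, fun I hI hdisj t ht u hu => ?_⟩⟩
  · exact Finset.card_biUnion_le.trans (Finset.sum_le_sum fun f _ =>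
      (Multiset.toFinset_card_le _).trans ((card_roots' _).trans (natDegree_specialize_le x _)))
  · refine hs _ _ fun f hf => ?_
    rw [← eval_specialize_asUnivariate, ← eval_specialize_asUnivariate]
    rcases eq_or_ne (F x f) 0 with h0 | h0
    · simp only [F] at h0
      simp only [h0, eval_zero]
    · refine sign_eq_of_ne_zero hI.isPreconnected (F x f).continuous.continuousOn
        (fun z hz hfz => ?_) ht hu
      refine Set.disjoint_left.mp hdisj hz (Finset.mem_biUnion.mpr ⟨f, hf, ?_⟩)
      exact Multiset.mem_toFinset.mpr ((mem_roots h0).mpr hfz)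

theorem exists_eventually_one_le_mul_eval {a : ℝ[X]} (ha : a ≠ 0) :
    ∃ ε : ℝ, ∀ᶠ s in atTop, 1 ≤ ε * a.eval s := by
  have hlc : a.leadingCoeff ≠ 0 := leadingCoeff_ne_zero.mpr ha
  obtain ⟨φ, hφ, heq⟩ := a.isEquivalent_atTop_lead.exists_eq_mul
  refine ⟨2 / a.leadingCoeff, ?_⟩
  filter_upwards [heq, hφ.eventually (lt_mem_nhds one_half_lt_one), eventually_ge_atTop 1]
    with s hs hφs h1s
  have hpow : 1 ≤ s ^ a.natDegree := one_le_pow₀ h1s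
  calc 1 ≤ 2 * φ s * s ^ a.natDegree := by nlinarith
    _ = 2 / a.leadingCoeff * a.eval s := by rw [hs, Pi.mul_apply]; field_simp

theorem exists_eventually_abs_eval_le_pow (a : ℝ[X]) :
    ∃ M : ℕ, ∀ᶠ s in atTop, |a.eval s| ≤ s ^ M := by
  refine ⟨a.natDegree + 1, ?_⟩
  have hdeg : a.degree < (X ^ (a.natDegree + 1) : ℝ[X]).degree := by
    rw [degree_X_pow]
    exact degree_le_natDegree.trans_lt (by exact_mod_cast a.natDegree.lt_succ_self)
  filter_upwards [(isLittleO_atTop_of_degree_lt a _ hdeg).bound one_pos, eventually_ge_atTop 0]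
    with s hs h0
  simpa only [eval_pow, eval_X, norm_pow, Real.norm_eq_abs, abs_of_nonneg h0, one_mul] using hs

/-- Beyond a suitable power of `s`, the term of highest degree in `R` dominates. -/
theorem exists_eventually_one_le_mul_evalEval {F : ℝ[X][X]} (hF : F ≠ 0) :
    ∃ (N : ℕ) (ε : ℝ), ∀ᶠ s in atTop, ∀ R, s ^ N ≤ R → 1 ≤ ε * F.evalEval s R := by
  induction hn : F.natDegree using Nat.strong_induction_on generalizing F with
  | _ n ih =>
  rcases eq_or_ne F.divX 0 with hG | hG
  · have hFC : F = C (F.coeff 0) := by rw [← F.divX_mul_X_add, hG]; simp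
    obtain ⟨ε, hε⟩ := exists_eventually_one_le_mul_eval fun h : F.coeff 0 = 0 =>
      hF (by rw [hFC, h, C_0])
    exact ⟨0, ε, hε.mono fun s hs R _ => by rwa [hFC, evalEval_C]⟩
  · have hdeg : F.divX.natDegree < n := by
      have hpos : F.natDegree ≠ 0 :=
        fun h => hG (divX_eq_zero_iff.mpr (eq_C_of_natDegree_eq_zero h))
      rw [natDegree_divX_eq_natDegree_tsub_one]
      omega
    obtain ⟨N, ε, hε⟩ := ih _ hdeg hG rfl
    obtain ⟨M, hM⟩ := exists_eventually_abs_eval_le_pow (C ε * F.coeff 0)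
    refine ⟨N + (M + 1), ε, ?_⟩
    filter_upwards [hε, hM, eventually_ge_atTop 2] with s hεs hMs h2 R hR
    have h1 : 1 ≤ s := one_le_two.trans h2
    have hN : s ^ N ≤ R := (pow_le_pow_right₀ h1 (Nat.le_add_right _ _)).trans hR
    have hM : s ^ M * s ≤ R :=
      (pow_succ s M).symm.trans_le ((pow_le_pow_right₀ h1 (Nat.le_add_left _ _)).trans hR)
    have hpow : 1 ≤ s ^ M := one_le_pow₀ h1
    have hcoeff : -s ^ M ≤ ε * (F.coeff 0).eval s := by
      simpa using neg_le_of_abs_le hMs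
    have hlead : R ≤ ε * F.divX.evalEval s R * R :=
      le_mul_of_one_le_left ((pow_nonneg (zero_le_one.trans h1) N).trans hN) (hεs R hN)
    calc 1 ≤ s ^ M * s - s ^ M := by nlinarith
      _ ≤ ε * F.divX.evalEval s R * R + ε * (F.coeff 0).eval s := by linarith
      _ = ε * F.evalEval s R := by
        conv_rhs => rw [← F.divX_mul_X_add]
        simp only [evalEval_add, evalEval_mul, evalEval_X, evalEval_C]
        ring

theorem exists_eventually_sign_evalEval_eq (F : ℝ[X][X]) :
    ∃ (N : ℕ) (τ : SignType), ∀ᶠ s in atTop, ∀ R, s ^ N ≤ R → sign (F.evalEval s R) = τ := by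
  rcases eq_or_ne F 0 with rfl | hF
  · exact ⟨0, 0, .of_forall fun s R _ => by simp⟩
  obtain ⟨N, ε, hε⟩ := exists_eventually_one_le_mul_evalEval hF
  refine ⟨N, sign ε, hε.mono fun s hs R hR => ?_⟩
  rcases pos_and_pos_or_neg_and_neg_of_mul_pos (one_pos.trans_le (hs R hR)) with ⟨h, h'⟩ | ⟨h, h'⟩
  · rw [sign_pos h, sign_pos h']
  · rw [sign_neg h, sign_neg h']

theorem IsSemialg.exists_pow_threshold {p : (ℕ → ℝ) → Prop} (hp : IsSemialg p)
    (h : ∀ s > 0, ∀ᶠ R in atTop, p (cons R fun _ => s)) :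
    ∃ N : ℕ, ∀ᶠ s in atTop, ∀ R, s ^ N ≤ R → p (cons R fun _ => s) := by
  obtain ⟨t, ht⟩ := hp
  let F (f : MvPolynomial ℕ ℚ) : ℝ[X][X] := MvPolynomial.aeval (cons X fun _ => C X) f
  have hF (f : MvPolynomial ℕ ℚ) (s R : ℝ) :
      (F f).evalEval s R = MvPolynomial.aeval (cons R fun _ => s) f := by
    induction f using MvPolynomial.induction_on with
    | C q => simp [F]
    | add f g hf hg => simpa [F] using congr_arg₂ (· + ·) hf hg
    | mul_X f i hf => cases i <;> simp_all [F, evalEval_C]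
  choose N τ hN using fun f => exists_eventually_sign_evalEval_eq (F f)
  have hall : ∀ᶠ s in atTop, ∀ f ∈ t, ∀ R, s ^ N f ≤ R → sign ((F f).evalEval s R) = τ f :=
    (eventually_all_finset t).mpr fun f _ => hN f
  refine ⟨t.sup N, ?_⟩
  filter_upwards [hall, eventually_ge_atTop 1] with s hs h1 R hR
  have hsign (R : ℝ) (hR : s ^ t.sup N ≤ R) (f) (hf : f ∈ t) :
      sign (MvPolynomial.aeval (cons R fun _ => s) f) = τ f := by
    rw [← hF]
    exact hs f hf R ((pow_le_pow_right₀ h1 (Finset.le_sup hf)).trans hR)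
  obtain ⟨R', hpR', hR'⟩ :=
    ((h s (one_pos.trans_le h1)).and (eventually_ge_atTop (s ^ t.sup N))).exists
  exact (ht _ _ fun f hf => (hsign R' hR' f hf).trans (hsign R hR f hf).symm).mp hpR'

end OneVariable

section Integration

open MeasureTheory Set
open scoped ENNReal NNReal

theorem le_add_sum_dyadic {M y : ℝ≥0∞} (hy : y ≤ M) (L : ℕ) :
    y ≤ M * 2⁻¹ ^ L +
      ∑ i ∈ Finset.range L, if M * 2⁻¹ ^ (i + 1) < y then M * 2⁻¹ ^ i else 0 := by
  induction L with
  | zero => simpa using hy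
  | succ L ih =>
    rw [Finset.sum_range_succ]
    split_ifs with h
    · exact ih.trans (by rw [add_comm (M * _)]; exact le_add_self)
    · exact (not_lt.mp h).trans le_self_add

theorem lintegral_le_of_forall_mul_measure_lt_le {α : Type*} [MeasurableSpace α] {μ : Measure α}
    {f : α → ℝ≥0∞} (hf : Measurable f) {M A : ℝ≥0∞} (hM : ∀ x, f x ≤ M)
    (hA : ∀ l, l * μ {x | l < f x} ≤ A) (L : ℕ) :
    ∫⁻ x, f x ∂μ ≤ M * 2⁻¹ ^ L * μ univ + L * (2 * A) := by
  have hlevel (l : ℝ≥0∞) : MeasurableSet {x | l < f x} := measurableSet_lt measurable_const hf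
  have hdouble (i : ℕ) : M * 2⁻¹ ^ i = 2 * (M * 2⁻¹ ^ (i + 1)) := by
    rw [pow_succ', mul_left_comm 2, ← mul_assoc 2, ENNReal.mul_inv_cancel two_ne_zero
      ENNReal.ofNat_ne_top, one_mul]
  calc ∫⁻ x, f x ∂μ
      ≤ ∫⁻ x, (M * 2⁻¹ ^ L +
          ∑ i ∈ Finset.range L, if M * 2⁻¹ ^ (i + 1) < f x then M * 2⁻¹ ^ i else 0) ∂μ :=
        lintegral_mono fun x => le_add_sum_dyadic (hM x) L
    _ = M * 2⁻¹ ^ L * μ univ +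
          ∑ i ∈ Finset.range L, M * 2⁻¹ ^ i * μ {x | M * 2⁻¹ ^ (i + 1) < f x} := by
        rw [lintegral_add_left measurable_const, lintegral_const, lintegral_finsetSum _ fun i _ =>
          Measurable.ite (hlevel _) measurable_const measurable_const]
        congr! with i
        rw [← lintegral_indicator_const (hlevel _)]
        simp only [indicator_apply, mem_ofPred_eq]
    _ ≤ M * 2⁻¹ ^ L * μ univ + ∑ _i ∈ Finset.range L, 2 * A := by
        refine add_le_add_right (Finset.sum_le_sum fun i _ => ?_) _
        rw [hdouble, mul_assoc]
        exact mul_le_mul_right (hA _) _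
    _ = M * 2⁻¹ ^ L * μ univ + L * (2 * A) := by
        rw [Finset.sum_const, Finset.card_range, nsmul_eq_mul]

theorem volume_inter_Ioo_le_of_breakpoints {p : ℝ → Prop} {l : ℝ≥0∞} (S : Finset ℝ) {a b : ℝ}
    (hS : ∀ I ⊆ Ioo a b, I.OrdConnected → Disjoint I S → ∀ t ∈ I, ∀ u ∈ I, p t ↔ p u)
    (hl : ∀ c d, a ≤ c → d ≤ b → (∀ u ∈ Ioo c d, p u) → volume (Ioo c d) ≤ l) :
    volume ({u | p u} ∩ Ioo a b) ≤ 2 ^ S.card * l := by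
  induction S using Finset.induction_on generalizing a b with
  | empty =>
    rw [Finset.card_empty, pow_zero, one_mul]
    rcases ({u | p u} ∩ Ioo a b).eq_empty_or_nonempty with h | ⟨t, hpt, ht⟩
    · simp [h]
    · refine (measure_mono inter_subset_right).trans (hl a b le_rfl le_rfl fun u hu => ?_)
      exact (hS _ Subset.rfl ordConnected_Ioo (by simp) t ht u hu).mp hpt
  | insert s S hs ih =>
    have hside {c d : ℝ} (hc : a ≤ c) (hd : d ≤ b) (hsI : s ∉ Ioo c d) :
        volume ({u | p u} ∩ Ioo c d) ≤ 2 ^ S.card * l := by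
      refine ih (fun I hI hconn hdisj => hS I (hI.trans (Ioo_subset_Ioo hc hd)) hconn ?_)
        fun c' d' hc' hd' => hl c' d' (hc.trans hc') (hd'.trans hd)
      rw [Finset.coe_insert]
      exact disjoint_insert_right.mpr ⟨fun h => hsI (hI h), hdisj⟩
    have hcover : {u | p u} ∩ Ioo a b ⊆
        {s} ∪ ({u | p u} ∩ Ioo a (min b s) ∪ {u | p u} ∩ Ioo (max a s) b) := by
      rintro u ⟨hu, hau, hub⟩
      rcases lt_trichotomy u s with h | h | h
      · exact .inr (.inl ⟨hu, hau, lt_min hub h⟩)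
      · exact .inl h
      · exact .inr (.inr ⟨hu, max_lt hau h, hub⟩)
    calc volume ({u | p u} ∩ Ioo a b)
        ≤ volume {s} + (volume ({u | p u} ∩ Ioo a (min b s)) +
            volume ({u | p u} ∩ Ioo (max a s) b)) :=
          (measure_mono hcover).trans ((measure_union_le _ _).trans
            (by gcongr; exact measure_union_le _ _))
      _ ≤ 0 + (2 ^ S.card * l + 2 ^ S.card * l) := by
          gcongr
          · exact Real.volume_singleton.le
          · exact hside le_rfl (min_le_left b s) fun h => (h.2.trans_le (min_le_right b s)).false
          · exact hside (le_max_left a s) le_rfl fun h => ((le_max_right a s).trans_lt h.1).false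
      _ = 2 ^ (insert s S).card * l := by
          rw [Finset.card_insert_of_notMem hs]
          ring

/-- The function `g` on sequences has a subgraph definable by polynomial inequalities. -/
def HasSemialgSubgraph (g : (ℕ → ℝ) → ℝ≥0∞) : Prop :=
  IsSemialg fun z => ENNReal.ofReal (z 0) < g (tail z)

/-- Lebesgue measure on the interval `(-1, 1)`. -/
noncomputable def fibreMeasure : Measure ℝ := volume.restrict (Ioo (-1) 1)

instance : IsFiniteMeasure fibreMeasure := by unfold fibreMeasure; infer_instance

theorem fibreMeasure_univ : fibreMeasure univ = 2 := by
  rw [fibreMeasure, Measure.restrict_apply_univ, Real.volume_Ioo]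
  norm_num

/-- The integral of `g` over the initial coordinate, taken over `(-1, 1)`. -/
noncomputable def fibreIntegral (g : (ℕ → ℝ) → ℝ≥0∞) (x : ℕ → ℝ) : ℝ≥0∞ :=
  ∫⁻ u, g (cons u x) ∂fibreMeasure

/-- The rectangle `(a, b) × (0, l]` lies in the subgraph of `g` over the fibre above `x`. -/
def IsInscribed (g : (ℕ → ℝ) → ℝ≥0∞) (x : ℕ → ℝ) (l a b : ℝ) : Prop :=
  0 < l ∧ a < b ∧ -1 ≤ a ∧ b ≤ 1 ∧ ∀ u, a < u → u < b → ENNReal.ofReal l < g (cons u x)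

/-- The supremum of the areas of the rectangles inscribed in the subgraph of `g` over the fibre
above `x`: a substitute for `fibreIntegral` that does not leave the semialgebraic functions. -/
noncomputable def inscribedArea (g : (ℕ → ℝ) → ℝ≥0∞) (x : ℕ → ℝ) : ℝ≥0∞ :=
  ⨆ (l : ℝ) (a : ℝ) (b : ℝ) (_ : IsInscribed g x l a b), ENNReal.ofReal (l * (b - a))

variable {g : (ℕ → ℝ) → ℝ≥0∞}

theorem HasSemialgSubgraph.measurable (hg : HasSemialgSubgraph g) : Measurable g := by
  refine measurable_of_Ioi fun a => ?_
  rcases eq_or_ne a ⊤ with rfl | ha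
  · simp
  have hpre : g ⁻¹' Ioi a = cons a.toReal ⁻¹' {z | ENNReal.ofReal (z 0) < g (tail z)} := by
    ext x
    simp [ENNReal.ofReal_toReal ha]
  rw [hpre]
  exact (measurable_cons.comp measurable_prodMk_left) hg.measurableSet

theorem measurable_fibreIntegral (hg : Measurable g) : Measurable (fibreIntegral g) :=
  Measurable.lintegral_prod_right' (f := fun p : (ℕ → ℝ) × ℝ => g (cons p.2 p.1))
    (hg.comp (measurable_cons.comp measurable_swap))

theorem fibreIntegral_mono {h : (ℕ → ℝ) → ℝ≥0∞} (hgh : ∀ x, g x ≤ h x) (x : ℕ → ℝ) :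
    fibreIntegral g x ≤ fibreIntegral h x :=
  lintegral_mono fun _ => hgh _

theorem fibreIntegral_le {M : ℝ≥0∞} (hM : ∀ x, g x ≤ M) (x : ℕ → ℝ) :
    fibreIntegral g x ≤ M * 2 :=
  (lintegral_mono fun _ => hM _).trans_eq (by rw [lintegral_const, fibreMeasure_univ])

theorem iterate_fibreIntegral (hg : Measurable g) (n : ℕ) (x : ℕ → ℝ) :
    fibreIntegral^[n] g x =
      ∫⁻ u : Fin n → ℝ, g (append u x) ∂Measure.pi fun _ => fibreMeasure := by
  induction n generalizing g with
  | zero => simp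
  | succ n ih =>
    have hmeas : Measurable fun p : ℝ × (Fin n → ℝ) => g (cons p.1 (append p.2 x)) :=
      hg.comp (measurable_cons.comp (measurable_fst.prodMk
        ((measurable_append n).comp (measurable_snd.prodMk measurable_const))))
    calc fibreIntegral^[n + 1] g x
        = ∫⁻ u : Fin n → ℝ, ∫⁻ t, g (cons t (append u x)) ∂fibreMeasure
            ∂Measure.pi fun _ => fibreMeasure := ih (measurable_fibreIntegral hg)
      _ = ∫⁻ p : ℝ × (Fin n → ℝ), g (cons p.1 (append p.2 x))
            ∂fibreMeasure.prod (Measure.pi fun _ => fibreMeasure) :=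
          (lintegral_prod_symm' _ hmeas).symm
      _ = ∫⁻ u : Fin (n + 1) → ℝ, g (append u x) ∂Measure.pi fun _ => fibreMeasure :=
          ((measurePreserving_piFinSuccAbove (fun _ : Fin (n + 1) => fibreMeasure)
            0).lintegral_comp hmeas).symm

theorem inscribedArea_le_fibreIntegral (g : (ℕ → ℝ) → ℝ≥0∞) (x : ℕ → ℝ) :
    inscribedArea g x ≤ fibreIntegral g x := by
  refine iSup_le fun l => iSup_le fun a => iSup_le fun b => iSup_le ?_
  rintro ⟨hl, -, ha, hb, h⟩
  calc ENNReal.ofReal (l * (b - a)) = ∫⁻ _u in Ioo a b, ENNReal.ofReal l := by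
        rw [setLIntegral_const, Real.volume_Ioo, ENNReal.ofReal_mul hl.le]
    _ ≤ ∫⁻ u in Ioo a b, g (cons u x) :=
        setLIntegral_mono' measurableSet_Ioo fun u hu => (h u hu.1 hu.2).le
    _ ≤ fibreIntegral g x := lintegral_mono_set (Ioo_subset_Ioo ha hb)

theorem mul_volume_Ioo_le_inscribedArea {x : ℕ → ℝ} {l : ℝ≥0} {a b : ℝ} (ha : -1 ≤ a) (hb : b ≤ 1)
    (h : ∀ u ∈ Ioo a b, l < g (cons u x)) : l * volume (Ioo a b) ≤ inscribedArea g x := by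
  rcases eq_zero_or_pos l with rfl | hl
  · simp
  rcases le_or_gt b a with hba | hab
  · simp [Ioo_eq_empty hba.not_gt]
  rw [Real.volume_Ioo, ← ENNReal.ofReal_coe_nnreal, ← ENNReal.ofReal_mul l.coe_nonneg]
  refine le_iSup₂_of_le (l : ℝ) a (le_iSup₂_of_le b ⟨hl, hab, ha, hb, fun u hau hub => ?_⟩ le_rfl)
  simpa using h u ⟨hau, hub⟩

theorem iterate_inscribedArea_le_iterate_fibreIntegral (g : (ℕ → ℝ) → ℝ≥0∞) (n : ℕ) (x : ℕ → ℝ) :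
    inscribedArea^[n] g x ≤ fibreIntegral^[n] g x := by
  induction n generalizing x with
  | zero => rfl
  | succ n ih =>
    rw [Function.iterate_succ_apply', Function.iterate_succ_apply']
    exact (inscribedArea_le_fibreIntegral _ x).trans (fibreIntegral_mono ih x)

theorem iterate_inscribedArea_le (hg : ∀ x, g x ≤ 1) (n : ℕ) (x : ℕ → ℝ) :
    inscribedArea^[n] g x ≤ 2 ^ n := by
  induction n generalizing x with
  | zero => simpa using hg x
  | succ n ih =>
    rw [Function.iterate_succ_apply', pow_succ]
    exact (inscribedArea_le_fibreIntegral _ x).trans (fibreIntegral_le ih x)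

theorem hasSemialgSubgraph_inscribedArea (hg : HasSemialgSubgraph g) :
    HasSemialgSubgraph (inscribedArea g) := by
  have hbelow : IsSemialg fun z : ℕ → ℝ =>
      ENNReal.ofReal (z 3) < g (cons (z 0) fun i => z (i + 5)) :=
    hg.comp (e := fun i z => cons (z 3) (cons (z 0) fun i => z (i + 5)) i) fun
      | 0 => .coord 3
      | 1 => .coord 0
      | i + 2 => .coord (i + 5)
  have hfits : IsSemialg fun z : ℕ → ℝ =>
      ∀ u, z 1 < u → u < z 0 → ENNReal.ofReal (z 2) < g (cons u fun i => z (i + 4)) :=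
    ((IsSemialg.lt (.coord 2) (.coord 0)).imp
      ((IsSemialg.lt (.coord 0) (.coord 1)).imp hbelow)).forall_cons
  have harea : IsSemialg fun z : ℕ → ℝ => z 3 < z 2 * (z 0 - z 1) :=
    .lt (.coord 3) ((IsPoly.coord 2).mul ((IsPoly.coord 0).sub (.coord 1)))
  have hinscribed : IsSemialg fun z : ℕ → ℝ =>
      IsInscribed g (fun i => z (i + 4)) (z 2) (z 1) (z 0) ∧ z 3 < z 2 * (z 0 - z 1) :=
    .and (.and (.lt .zero (.coord 2)) (.and (.lt (.coord 1) (.coord 0))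
      (.and (.le IsPoly.one.neg (.coord 1)) (.and (.le (.coord 0) .one) hfits)))) harea
  have hexists : IsSemialg fun z : ℕ → ℝ =>
      ∃ l a b, IsInscribed g (tail z) l a b ∧ z 0 < l * (b - a) :=
    hinscribed.exists_cons.exists_cons.exists_cons
  unfold HasSemialgSubgraph
  convert hexists using 2 with z
  simp only [inscribedArea, lt_iSup_iff, exists_prop]
  refine exists₃_congr fun l a b => and_congr_right fun h => ENNReal.ofReal_lt_ofReal_iff ?_
  exact mul_pos h.1 (sub_pos.mpr h.2.1)

theorem hasSemialgSubgraph_iterate_inscribedArea (hg : HasSemialgSubgraph g) (n : ℕ) :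
    HasSemialgSubgraph (inscribedArea^[n] g) := by
  induction n with
  | zero => exact hg
  | succ n ih =>
    rw [Function.iterate_succ_apply']
    exact hasSemialgSubgraph_inscribedArea ih

/-- A level set in a fibre consists of boundedly many intervals and null sets, and over each of
them there is an inscribed rectangle. -/
theorem HasSemialgSubgraph.exists_mul_measure_lt_le (hg : HasSemialgSubgraph g) :
    ∃ K : ℝ≥0, ∀ x l,
      l * fibreMeasure {u | l < g (cons u x)} ≤ K * inscribedArea g x := by
  have hlevel : IsSemialg fun z : ℕ → ℝ =>
      ENNReal.ofReal (z 1) < g (cons (z 0) fun i => z (i + 2)) :=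
    hg.comp (e := fun i z => cons (z 1) (cons (z 0) fun i => z (i + 2)) i) fun
      | 0 => .coord 1
      | 1 => .coord 0
      | i + 2 => .coord (i + 2)
  obtain ⟨K, hK⟩ := hlevel.exists_uniform_breakpoints
  refine ⟨2 ^ K, fun x l => ?_⟩
  rcases eq_zero_or_pos l with rfl | hl
  · simp
  rcases eq_or_ne l ⊤ with rfl | hl_top
  · simp
  lift l to ℝ≥0 using hl_top
  obtain ⟨S, hcard, hS⟩ := hK (cons l x)
  have hvol : fibreMeasure {u | l < g (cons u x)} ≤
      2 ^ S.card * (inscribedArea g x / l) := by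
    rw [fibreMeasure, Measure.restrict_apply' measurableSet_Ioo]
    refine volume_inter_Ioo_le_of_breakpoints S (fun I _ hI hdisj t ht u hu => ?_)
      fun c d hc hd hcd => ?_
    · simpa using hS I hI hdisj t ht u hu
    · rw [ENNReal.le_div_iff_mul_le (.inl hl.ne') (.inl ENNReal.coe_ne_top), mul_comm]
      exact mul_volume_Ioo_le_inscribedArea hc hd hcd
  calc l * fibreMeasure {u | l < g (cons u x)}
      ≤ l * (2 ^ K * (inscribedArea g x / l)) := by
        gcongr
        exact hvol.trans (by gcongr; norm_num)
    _ = 2 ^ K * (l * (inscribedArea g x / l)) := by ring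
    _ ≤ ((2 ^ K : ℝ≥0) : ℝ≥0∞) * inscribedArea g x := by
        push_cast
        gcongr
        exact ENNReal.mul_div_le

theorem HasSemialgSubgraph.exists_fibreIntegral_le (hg : HasSemialgSubgraph g) {M : ℝ≥0}
    (hM : ∀ x, g x ≤ M) :
    ∃ K : ℝ≥0, ∀ x (L : ℕ),
      fibreIntegral g x ≤ K * (2⁻¹ ^ L + L * inscribedArea g x) := by
  obtain ⟨K, hK⟩ := hg.exists_mul_measure_lt_le
  refine ⟨2 * M + 2 * K, fun x L => ?_⟩
  have hfibre : Measurable fun u => g (cons u x) :=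
    hg.measurable.comp (measurable_cons.comp measurable_prodMk_right)
  set A := inscribedArea g x
  calc fibreIntegral g x ≤ M * 2⁻¹ ^ L * fibreMeasure univ + L * (2 * (K * A)) :=
        lintegral_le_of_forall_mul_measure_lt_le hfibre (fun u => hM _) (fun l => hK x l) L
    _ ≤ M * 2⁻¹ ^ L * 2 + L * (2 * (K * A)) + (2 * K * 2⁻¹ ^ L + 2 * M * (L * A)) := by
        rw [fibreMeasure_univ]
        exact le_self_add
    _ = ((2 * M + 2 * K : ℝ≥0) : ℝ≥0∞) * (2⁻¹ ^ L + L * A) := by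
        push_cast
        ring

theorem HasSemialgSubgraph.exists_iterate_fibreIntegral_le (hg : HasSemialgSubgraph g)
    (hg_le : ∀ x, g x ≤ 1) (n : ℕ) :
    ∃ C : ℝ≥0, ∀ x (L : ℕ), fibreIntegral^[n] g x ≤
      C * (L + 1) ^ n * (2⁻¹ ^ L + inscribedArea^[n] g x) := by
  induction n with
  | zero => exact ⟨1, fun x L => by simp⟩
  | succ n ih =>
    obtain ⟨C, hC⟩ := ih
    have hh := hasSemialgSubgraph_iterate_inscribedArea hg n
    obtain ⟨K, hK⟩ := hh.exists_fibreIntegral_le (M := 2 ^ n)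
      (by simpa using iterate_inscribedArea_le hg_le n)
    refine ⟨C * (2 + K), fun x L => ?_⟩
    rw [Function.iterate_succ_apply', Function.iterate_succ_apply']
    set h := inscribedArea^[n] g
    set A := inscribedArea h x
    calc fibreIntegral (fibreIntegral^[n] g) x
        ≤ ∫⁻ u, C * (L + 1) ^ n * (2⁻¹ ^ L + h (cons u x)) ∂fibreMeasure :=
          lintegral_mono fun u => hC _ L
      _ = C * (L + 1) ^ n * (2⁻¹ ^ L * 2 + fibreIntegral h x) := by
          rw [lintegral_const_mul' _ _ (by finiteness), lintegral_add_left measurable_const,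
            lintegral_const, fibreMeasure_univ, fibreIntegral]
      _ ≤ C * (L + 1) ^ n * (2⁻¹ ^ L * 2 + K * (2⁻¹ ^ L + L * A) +
            ((2 * L + K * L) * 2⁻¹ ^ L + (2 + K + 2 * L) * A)) := by
          refine mul_le_mul_right (le_add_right (add_le_add_right (hK x L) _)) _
      _ = ((C * (2 + K) : ℝ≥0) : ℝ≥0∞) * (L + 1) ^ (n + 1) * (2⁻¹ ^ L + A) := by
          push_cast
          ring

end Integration

section Exhaustion

open MeasureTheory Filter Topology
open scoped ENNReal NNReal

variable {n : ℕ} {D : Set (Fin n → ℝ)}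

/-- The points of the open box of radius `R` whose closed neighbourhood of radius `1 / R` is
contained in `D`; these sets exhaust an open set `D` as `R` tends to infinity. -/
def core (D : Set (Fin n → ℝ)) (R : ℝ) : Set (Fin n → ℝ) :=
  {x | (∀ i, |x i| < R) ∧ ∀ y : Fin n → ℝ, (∀ i, |R * (y i - x i)| ≤ 1) → y ∈ D}

/-- The part of `D` exhausted when the radius passes from `R` to `2 * R`. -/
def shell (D : Set (Fin n → ℝ)) (R : ℝ) : Set (Fin n → ℝ) := core D (2 * R) \ core D R

theorem core_subset (D : Set (Fin n → ℝ)) (R : ℝ) : core D R ⊆ D :=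
  fun x hx => hx.2 x fun i => by simp

theorem eventually_mem_core (hD : IsOpen D) {x : Fin n → ℝ} (hx : x ∈ D) :
    ∀ᶠ R in atTop, x ∈ core D R := by
  obtain ⟨ε, hε, hball⟩ := Metric.isOpen_iff.mp hD x hx
  filter_upwards [eventually_all.mpr fun i => eventually_gt_atTop |x i|,
    eventually_gt_atTop ε⁻¹] with R hbox hR
  have hR0 : 0 < R := (inv_pos.mpr hε).trans hR
  refine ⟨hbox, fun y hy => hball ((dist_pi_lt_iff hε).mpr fun i => ?_)⟩
  have hyi : R * |y i - x i| ≤ 1 := by simpa only [abs_mul, abs_of_pos hR0] using hy i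
  exact ((le_inv_mul_iff₀ hR0).mpr hyi).trans_lt (by rwa [mul_one, inv_lt_comm₀ hR0 hε])

theorem IsSemialg.mem_core (hD : IsSemialg (· ∈ D)) {r : (ℕ → ℝ) → ℝ} {e : Fin n → (ℕ → ℝ) → ℝ}
    (hr : IsPoly r) (he : ∀ i, IsPoly (e i)) :
    IsSemialg fun z => (fun i => e i z) ∈ core D (r z) := by
  have hshift {a : (ℕ → ℝ) → ℝ} (ha : IsPoly a) : IsPoly fun z => a fun k => z (k + n) :=
    ha.comp fun k => .coord (k + n)
  have hdist (i : Fin n) : IsPoly fun z : ℕ → ℝ =>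
      r (fun k => z (k + n)) * (z i - e i fun k => z (k + n)) :=
    (hshift hr).mul (.sub (.coord (i : ℕ)) (hshift (he i)))
  have hball : IsSemialg fun z : ℕ → ℝ =>
      (∀ i : Fin n, |r (fun k => z (k + n)) * (z i - e i fun k => z (k + n))| ≤ 1) →
        (fun i : Fin n => z i) ∈ D := by
    refine .imp (.all fun i => ?_) (hD.comp fun i => .coord (i : ℕ))
    simpa only [abs_le] using (IsSemialg.le IsPoly.one.neg (hdist i)).and (.le (hdist i) .one)
  refine .and (.all fun i => ?_) ?_
  · simpa only [abs_lt] using (IsSemialg.lt hr.neg (he i)).and (.lt (he i) hr)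
  · simpa only [append_add, append_val] using hball.forall_append (n := n)

theorem measurableSet_core (hD : IsSemialg (· ∈ D)) (R : ℝ) : MeasurableSet (core D R) := by
  have h := (hD.mem_core (r := fun z => z n) (.coord n) fun i => .coord (i : ℕ)).measurableSet
  have hslice : Measurable fun u : Fin n → ℝ => append u fun _ => R :=
    (measurable_append n).comp measurable_prodMk_right
  have hpre := hslice h
  simp only [Set.preimage_ofPred_eq, append_self, append_val] at hpre
  exact hpre

theorem measurableSet_shell (hD : IsSemialg (· ∈ D)) (R : ℝ) : MeasurableSet (shell D R) :=
  (measurableSet_core hD _).diff (measurableSet_core hD _)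

theorem tendsto_volume_core (hD : IsSemialg (· ∈ D)) (hopen : IsOpen D) (hfin : volume D ≠ ⊤) :
    Tendsto (fun R => volume (core D R)) atTop (𝓝 (volume D)) := by
  refine tendsto_measure_of_tendsto_indicator atTop (measurableSet_core hD) hopen.measurableSet
    hfin (.of_forall (core_subset D)) fun x => ?_
  by_cases hx : x ∈ D
  · filter_upwards [eventually_mem_core hopen hx] with R hR using iff_of_true hR hx
  · exact .of_forall fun R => iff_of_false (fun h => hx (core_subset D R h)) hx

theorem tendsto_volume_shell (hD : IsSemialg (· ∈ D)) (hopen : IsOpen D) (hfin : volume D ≠ ⊤) :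
    Tendsto (fun R => volume (shell D R)) atTop (𝓝 0) := by
  rw [← measure_empty (μ := (volume : Measure (Fin n → ℝ)))]
  refine tendsto_measure_of_tendsto_indicator atTop (measurableSet_shell hD) hopen.measurableSet
    hfin (.of_forall fun R => Set.sdiff_subset.trans (core_subset D _)) fun x => ?_
  by_cases hx : x ∈ D
  · filter_upwards [eventually_mem_core hopen hx] with R hR
      using iff_of_false (fun h => h.2 hR) id
  · exact .of_forall fun R => iff_of_false (fun h => hx (core_subset D _ h.1)) id

/-- The indicator function of `shell D R` with coordinates rescaled by `2 * R`, which maps the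
cube `(-1, 1) ^ n` onto a box containing the shell. The radius `R` is the coordinate number `n`. -/
noncomputable def shellIndicator (D : Set (Fin n → ℝ)) (z : ℕ → ℝ) : ℝ≥0∞ :=
  (shell D (z n)).indicator 1 fun i => 2 * z n * z i

theorem shellIndicator_le_one (D : Set (Fin n → ℝ)) (z : ℕ → ℝ) : shellIndicator D z ≤ 1 :=
  Set.indicator_le_self' (fun _ _ => zero_le) _

theorem hasSemialgSubgraph_shellIndicator (hD : IsSemialg (· ∈ D)) :
    HasSemialgSubgraph (shellIndicator D) := by
  have hscale : IsPoly fun z : ℕ → ℝ => 2 * z (n + 1) := (IsPoly.natCast 2).mul (.coord _)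
  have hcoord (i : Fin n) : IsPoly fun z : ℕ → ℝ => 2 * z (n + 1) * z (i + 1) :=
    hscale.mul (.coord _)
  have hmem : IsSemialg fun z : ℕ → ℝ =>
      (fun i : Fin n => 2 * z (n + 1) * z (i + 1)) ∈ shell D (z (n + 1)) :=
    (hD.mem_core hscale hcoord).and (hD.mem_core (.coord _) hcoord).not
  unfold HasSemialgSubgraph
  convert (IsSemialg.lt (.coord 0) .one).and hmem using 2 with z
  by_cases h : (fun i : Fin n => 2 * z (n + 1) * z (i + 1)) ∈ shell D (z (n + 1))
  · simp [shellIndicator, h]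
  · simp [shellIndicator, h]

theorem volume_shell (hD : IsSemialg (· ∈ D)) {x : ℕ → ℝ} (hx : 0 < x 0) :
    volume (shell D (x 0)) =
      ENNReal.ofReal ((2 * x 0) ^ n) * fibreIntegral^[n] (shellIndicator D) x := by
  let E : Set (Fin n → ℝ) := (fun u => (2 * x 0) • u) ⁻¹' shell D (x 0)
  have hE : MeasurableSet E := measurable_const_smul (2 * x 0) (measurableSet_shell hD _)
  have hbox : E ⊆ Set.univ.pi fun _ => Set.Ioo (-1) 1 := by
    refine fun u hu i _ => abs_lt.mp ?_
    have hui : 2 * x 0 * |u i| < 2 * x 0 := by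
      simpa [abs_mul, abs_of_pos hx] using hu.1.1 i
    nlinarith
  have hindicator : (fun u : Fin n → ℝ => shellIndicator D (append u x)) = E.indicator 1 := by
    funext u
    simp only [shellIndicator, append_self, append_val]
    rfl
  have hintegral : fibreIntegral^[n] (shellIndicator D) x = volume E := by
    rw [iterate_fibreIntegral (hasSemialgSubgraph_shellIndicator hD).measurable, hindicator,
      lintegral_indicator_one hE]
    simp only [fibreMeasure]
    rw [← Measure.restrict_pi_pi, ← volume_pi, Measure.restrict_eq_self _ hbox]
  rw [hintegral, Measure.addHaar_preimage_smul _ (by positivity), Module.finrank_fin_fun,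
    abs_of_pos (by positivity), ← mul_assoc, ← ENNReal.ofReal_mul (by positivity),
    mul_inv_cancel₀ (by positivity), ENNReal.ofReal_one, one_mul]

theorem exists_iterate_inscribedArea_shellIndicator_le (hD : IsSemialg (· ∈ D)) (hopen : IsOpen D)
    (hfin : volume D ≠ ⊤) :
    ∃ N : ℕ, ∀ᶠ s in atTop, ∀ R, s ^ N ≤ R →
      ENNReal.ofReal ((2 * R) ^ n) * inscribedArea^[n] (shellIndicator D) (cons R fun _ => s) ≤
        ENNReal.ofReal s⁻¹ := by
  let A := inscribedArea^[n] (shellIndicator D)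
  let bound (z : ℕ → ℝ) : Prop := ∀ l, l * (z 1 * (2 * z 0) ^ n) = 1 → ¬ENNReal.ofReal l < A z
  have hbound : IsSemialg bound := by
    refine IsSemialg.forall_cons (p := fun z =>
      z 0 * (z 2 * (2 * z 1) ^ n) = 1 → ¬ENNReal.ofReal (z 0) < A (tail z)) (.imp (.eq ?_ .one) ?_)
    · exact (IsPoly.coord 0).mul ((IsPoly.coord 2).mul (((IsPoly.natCast 2).mul (.coord 1)).pow n))
    · exact (hasSemialgSubgraph_iterate_inscribedArea
        (hasSemialgSubgraph_shellIndicator hD) n).not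
  have hbound_iff {s R : ℝ} (hs : 0 < s) (hR : 0 < R) : bound (cons R fun _ => s) ↔
      ENNReal.ofReal ((2 * R) ^ n) * A (cons R fun _ => s) ≤ ENNReal.ofReal s⁻¹ := by
    have hV : 0 < (2 * R) ^ n := by positivity
    have hs_inv : s⁻¹ = (2 * R) ^ n * (s * (2 * R) ^ n)⁻¹ := by field_simp
    rw [hs_inv, ENNReal.ofReal_mul hV.le,
      ENNReal.mul_le_mul_iff_right (by simpa using hV) ENNReal.ofReal_ne_top, ← not_lt]
    exact ⟨fun h => h _ (inv_mul_cancel₀ (by positivity)),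
      fun h l hl => eq_inv_of_mul_eq_one_left hl ▸ h⟩
  obtain ⟨N, hN⟩ := hbound.exists_pow_threshold fun s hs => by
    filter_upwards [(tendsto_volume_shell hD hopen hfin).eventually_le_const
      (ENNReal.ofReal_pos.mpr (inv_pos.mpr hs)), eventually_gt_atTop 0] with R hshell hR
    refine (hbound_iff hs hR).mpr (le_trans ?_ hshell)
    refine le_trans ?_ (volume_shell hD (x := cons R fun _ => s) hR).ge
    exact mul_le_mul_right (iterate_inscribedArea_le_iterate_fibreIntegral _ n _) _
  refine ⟨N, ?_⟩
  filter_upwards [hN, eventually_gt_atTop 0] with s h hs R hR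
  exact (hbound_iff hs ((pow_pos hs N).trans_le hR)).mp (h R hR)

theorem exists_volume_shell_le (hD : IsSemialg (· ∈ D)) (hopen : IsOpen D) (hfin : volume D ≠ ⊤) :
    ∃ (C : ℝ≥0) (N : ℕ), ∀ᶠ s in atTop, ∀ R, s ^ N ≤ R → ∀ L : ℕ, volume (shell D R) ≤
      ENNReal.ofReal (C * (L + 1) ^ n * ((2 * R) ^ n * 2⁻¹ ^ L + s⁻¹)) := by
  obtain ⟨C, hC⟩ := (hasSemialgSubgraph_shellIndicator hD).exists_iterate_fibreIntegral_le
    (shellIndicator_le_one D) n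
  obtain ⟨N, hN⟩ := exists_iterate_inscribedArea_shellIndicator_le hD hopen hfin
  refine ⟨C, N, ?_⟩
  filter_upwards [hN, eventually_gt_atTop 0] with s h hs R hR L
  have hR0 : 0 < R := (pow_pos hs N).trans_le hR
  let V := ENNReal.ofReal ((2 * R) ^ n)
  calc volume (shell D R)
      = V * fibreIntegral^[n] (shellIndicator D) (cons R fun _ => s) :=
        volume_shell hD (x := cons R fun _ => s) hR0
    _ ≤ V * (C * (L + 1) ^ n *
          (2⁻¹ ^ L + inscribedArea^[n] (shellIndicator D) (cons R fun _ => s))) := by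
        gcongr
        exact hC _ L
    _ = C * (L + 1) ^ n *
          (V * 2⁻¹ ^ L + V * inscribedArea^[n] (shellIndicator D) (cons R fun _ => s)) := by ring
    _ ≤ C * (L + 1) ^ n * (V * 2⁻¹ ^ L + ENNReal.ofReal s⁻¹) := by
        gcongr
        exact h R hR
    _ = ENNReal.ofReal (C * (L + 1) ^ n * ((2 * R) ^ n * 2⁻¹ ^ L + s⁻¹)) := by
        rw [ENNReal.ofReal_mul (by positivity), ENNReal.ofReal_mul (by positivity),
          ENNReal.ofReal_add (by positivity) (by positivity), ENNReal.ofReal_mul (by positivity)]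
        rw [ENNReal.ofReal_pow (by positivity), ENNReal.ofReal_add (by positivity) zero_le_one]
        simp [ENNReal.ofReal_pow, ENNReal.ofReal_inv_of_pos, ENNReal.inv_pow, V]

theorem eventually_natCast_pow_le_two_pow (k : ℕ) : ∀ᶠ j : ℕ in atTop, (j : ℝ) ^ k ≤ 2 ^ j := by
  filter_upwards [(tendsto_pow_const_div_const_pow_of_one_lt k one_lt_two).eventually_le_const
    one_pos] with j hj
  rwa [div_le_one (by positivity)] at hj

/-- The threshold lemma is applied with a polynomial `s` in `j`, small compared to `2 ^ j`. -/
theorem exists_volume_shell_two_pow_le (hD : IsSemialg (· ∈ D)) (hopen : IsOpen D)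
    (hfin : volume D ≠ ⊤) :
    ∃ C : ℝ≥0, ∀ᶠ j : ℕ in atTop,
      volume (shell D (2 ^ j)) ≤ ENNReal.ofReal (C * ((j : ℝ) ^ 2)⁻¹) := by
  obtain ⟨C, N, h⟩ := exists_volume_shell_le hD hopen hfin
  refine ⟨C * (n + 2) ^ n * (2 ^ n + 1), ?_⟩
  have hs : Tendsto (fun j : ℕ => (j : ℝ) ^ (n + 2)) atTop atTop :=
    (tendsto_pow_atTop (by omega)).comp tendsto_natCast_atTop_atTop
  filter_upwards [hs.eventually h, eventually_natCast_pow_le_two_pow ((n + 2) * N),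
    eventually_natCast_pow_le_two_pow (n + 2), eventually_ge_atTop 1] with j hj hN hpow hj1
  refine (hj (2 ^ j) (by rwa [← pow_mul]) ((n + 1) * j)).trans (ENNReal.ofReal_le_ofReal ?_)
  have hj0 : (1 : ℝ) ≤ j := by exact_mod_cast hj1
  have hscale : ((2 : ℝ) * 2 ^ j) ^ n * 2⁻¹ ^ ((n + 1) * j) = 2 ^ n * (2 ^ j)⁻¹ := by
    rw [mul_comm _ j, pow_mul, pow_succ, inv_pow, mul_pow, inv_pow]
    field_simp
  calc (C : ℝ) * (((n + 1) * j : ℕ) + 1) ^ n *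
        ((2 * 2 ^ j) ^ n * 2⁻¹ ^ ((n + 1) * j) + ((j : ℝ) ^ (n + 2))⁻¹)
      ≤ C * ((n + 2) * j) ^ n * (2 ^ n * ((j : ℝ) ^ (n + 2))⁻¹ + ((j : ℝ) ^ (n + 2))⁻¹) := by
        rw [hscale]
        gcongr
        push_cast
        linarith
    _ = ((C * (n + 2) ^ n * (2 ^ n + 1) : ℝ≥0) : ℝ) * ((j : ℝ) ^ 2)⁻¹ := by
        push_cast
        rw [mul_pow, pow_add]
        field_simp

theorem volume_core_two_pow_le {j m : ℕ} (hjm : j ≤ m) :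
    volume (core D (2 ^ m)) ≤
      volume (core D (2 ^ j)) + ∑ i ∈ Finset.Ico j m, volume (shell D (2 ^ i)) := by
  induction m, hjm using Nat.le_induction with
  | base => simp
  | succ m hjm ih =>
    calc volume (core D (2 ^ (m + 1)))
        ≤ volume (core D (2 ^ m)) + volume (shell D (2 ^ m)) := by
          rw [pow_succ', add_comm]
          exact tsub_le_iff_right.mp (le_measure_sdiff ..)
      _ ≤ _ := by
          rw [Finset.sum_Ico_succ_top hjm, ← add_assoc]
          gcongr

theorem exists_volume_le_volume_core_add (hD : IsSemialg (· ∈ D)) (hopen : IsOpen D)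
    (hfin : volume D ≠ ⊤) :
    ∃ C : ℝ≥0, ∀ᶠ j : ℕ in atTop,
      volume D ≤ volume (core D (2 ^ j)) + ENNReal.ofReal (C / j) := by
  obtain ⟨C, hC⟩ := exists_volume_shell_two_pow_le hD hopen hfin
  obtain ⟨j₀, hj₀⟩ := eventually_atTop.mp hC
  refine ⟨2 * C, ?_⟩
  filter_upwards [eventually_ge_atTop (max 1 j₀)] with j hj
  have hlim : Tendsto (fun m : ℕ => volume (core D (2 ^ m))) atTop (𝓝 (volume D)) :=
    (tendsto_volume_core hD hopen hfin).comp (tendsto_pow_atTop_atTop_of_one_lt one_lt_two)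
  refine le_of_tendsto hlim ((eventually_ge_atTop j).mono fun m hjm => ?_)
  refine (volume_core_two_pow_le hjm).trans (add_le_add_right ?_ _)
  calc ∑ i ∈ Finset.Ico j m, volume (shell D (2 ^ i))
      ≤ ∑ i ∈ Finset.Ico j m, ENNReal.ofReal (C * ((i : ℝ) ^ 2)⁻¹) :=
        Finset.sum_le_sum fun i hi =>
          hj₀ i ((le_max_right 1 j₀).trans (hj.trans (Finset.mem_Ico.mp hi).1))
    _ = ENNReal.ofReal (C * ∑ i ∈ Finset.Ico j m, ((i : ℝ) ^ 2)⁻¹) := by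
        rw [Finset.mul_sum, ENNReal.ofReal_sum_of_nonneg fun i _ => by positivity]
    _ ≤ ENNReal.ofReal ((2 * C : ℝ≥0) / j) := by
        obtain ⟨k, rfl⟩ := Nat.exists_eq_add_of_le' ((le_max_left 1 j₀).trans hj)
        have hsum := sum_Ioo_inv_sq_le (α := ℝ) k m
        rw [← Finset.Ico_add_one_left_eq_Ioo] at hsum
        refine ENNReal.ofReal_le_ofReal ((mul_le_mul_of_nonneg_left hsum C.coe_nonneg).trans_eq ?_)
        push_cast
        ring

end Exhaustion

section Grid

open MeasureTheory Filter
open scoped ENNReal NNReal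

variable {n : ℕ}

/-- The half-open cube of side `1 / N` with index `k`, where the index `0` belongs to the cube with
corner `(-N, …, -N)`. The scale and the index are real so that membership is semialgebraic in them
as well. -/
def gridCell (N : ℝ) (k : Fin n → ℝ) : Set (Fin n → ℝ) :=
  {y | ∀ i, k i ≤ N * (y i + N) ∧ N * (y i + N) < k i + 1}

open Classical in
/-- The indices of the cells of the grid of scale `1 / N` on `[-N, N] ^ n` contained in `D`. -/
noncomputable def innerCells (D : Set (Fin n → ℝ)) (N : ℕ) : Finset (Fin n → ℕ) :=
  {k ∈ Fintype.piFinset fun _ => Finset.range (2 * N * N + 1) | gridCell N (fun i => k i) ⊆ D}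

theorem mem_innerCells {D : Set (Fin n → ℝ)} {N : ℕ} {k : Fin n → ℕ} :
    k ∈ innerCells D N ↔ (∀ i, k i ≤ 2 * N * N) ∧ gridCell N (fun i => k i) ⊆ D := by
  simp only [innerCells, Finset.mem_filter, Fintype.mem_piFinset, Finset.mem_range_succ_iff]

theorem gridCell_eq_pi {N : ℝ} (hN : 0 < N) (k : Fin n → ℝ) :
    gridCell N k = Set.univ.pi fun i => Set.Ico (k i / N - N) ((k i + 1) / N - N) := by
  ext y
  simp only [gridCell, Set.mem_ofPred_eq, Set.mem_univ_pi, Set.mem_Ico, sub_le_iff_le_add,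
    lt_sub_iff_add_lt, div_le_iff₀' hN, lt_div_iff₀' hN]

theorem measurableSet_gridCell {N : ℝ} (hN : 0 < N) (k : Fin n → ℝ) :
    MeasurableSet (gridCell N k) := by
  rw [gridCell_eq_pi hN]
  exact .univ_pi fun i => measurableSet_Ico

theorem volume_gridCell {N : ℝ} (hN : 0 < N) (k : Fin n → ℝ) :
    volume (gridCell N k) = ENNReal.ofReal (1 / N ^ n) := by
  have hside (i : Fin n) : (k i + 1) / N - N - (k i / N - N) = 1 / N := by ring
  simp only [gridCell_eq_pi hN, Real.volume_pi_Ico, hside, Finset.prod_const, Finset.card_univ,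
    Fintype.card_fin]
  rw [← ENNReal.ofReal_pow (by positivity), one_div_pow]

theorem pairwise_disjoint_gridCell (N : ℝ) :
    Pairwise (Function.onFun Disjoint fun k : Fin n → ℕ => gridCell N fun i => (k i : ℝ)) := by
  refine fun k l hkl => Set.disjoint_left.mpr fun y hk hl => hkl (funext fun i => ?_)
  have hkl : (k i : ℝ) < l i + 1 := (hk i).1.trans_lt (hl i).2
  have hlk : (l i : ℝ) < k i + 1 := (hl i).1.trans_lt (hk i).2
  norm_cast at hkl hlk
  lia

theorem volume_biUnion_gridCell {N : ℝ} (hN : 0 < N) (s : Finset (Fin n → ℕ)) :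
    volume (⋃ k ∈ s, gridCell N fun i => (k i : ℝ)) = ENNReal.ofReal (s.card / N ^ n) := by
  rw [measure_biUnion_finset ((pairwise_disjoint_gridCell N).set_pairwise _)
    fun k _ => measurableSet_gridCell hN _]
  simp only [volume_gridCell hN, Finset.sum_const, nsmul_eq_mul]
  rw [← ENNReal.ofReal_natCast, ← ENNReal.ofReal_mul (by positivity), mul_one_div]

theorem biUnion_innerCells_subset (D : Set (Fin n → ℝ)) (N : ℕ) :
    ⋃ k ∈ innerCells D N, gridCell N (fun i => (k i : ℝ)) ⊆ D :=
  Set.iUnion₂_subset fun _ hk => (mem_innerCells.mp hk).2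

theorem core_subset_biUnion_innerCells (D : Set (Fin n → ℝ)) (N : ℕ) :
    core D N ⊆ ⋃ k ∈ innerCells D N, gridCell N (fun i => (k i : ℝ)) := by
  rintro x ⟨hbox, hball⟩
  have hnonneg (i : Fin n) : 0 ≤ (N : ℝ) * (x i + N) :=
    mul_nonneg N.cast_nonneg (by linarith [(abs_lt.mp (hbox i)).1])
  let k (i : Fin n) : ℕ := ⌊(N : ℝ) * (x i + N)⌋₊
  have hxk : x ∈ gridCell N fun i => (k i : ℝ) :=
    fun i => ⟨Nat.floor_le (hnonneg i), Nat.lt_floor_add_one _⟩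
  refine Set.mem_iUnion₂.mpr ⟨k, mem_innerCells.mpr
    ⟨fun i => Nat.floor_le_of_le ?_, fun y hy => hball y fun i => ?_⟩, hxk⟩
  · have hle : x i + N ≤ 2 * N := by linarith [(abs_lt.mp (hbox i)).2]
    calc (N : ℝ) * (x i + N) ≤ N * (2 * N) := by gcongr
      _ = (2 * N * N : ℕ) := by push_cast; ring
  · rw [abs_le]
    constructor <;> linarith [(hxk i).1, (hxk i).2, (hy i).1, (hy i).2]

theorem exists_abs_card_innerCells_sub_le {D : Set (Fin n → ℝ)} (hD : IsSemialg (· ∈ D))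
    (hopen : IsOpen D) (hfin : volume D ≠ ⊤) :
    ∃ C : ℝ, ∀ᶠ j : ℕ in atTop,
      |((innerCells D (2 ^ j)).card : ℝ) / (2 ^ j) ^ n - (volume D).toReal| ≤ C / j := by
  obtain ⟨C, hC⟩ := exists_volume_le_volume_core_add hD hopen hfin
  refine ⟨C, hC.mono fun j hj => ?_⟩
  have hcore := measure_mono (μ := volume) (core_subset_biUnion_innerCells D (2 ^ j))
  have hsub := measure_mono (μ := volume) (biUnion_innerCells_subset D (2 ^ j))
  push_cast at hcore hsub
  rw [volume_biUnion_gridCell (by positivity)] at hcore hsub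
  have hle : ((innerCells D (2 ^ j)).card : ℝ) / (2 ^ j) ^ n ≤ (volume D).toReal :=
    (ENNReal.ofReal_le_iff_le_toReal hfin).mp hsub
  have hge : (volume D).toReal ≤ (innerCells D (2 ^ j)).card / (2 ^ j) ^ n + C / j := by
    refine ENNReal.toReal_le_of_le_ofReal (by positivity) ?_
    rw [ENNReal.ofReal_add (by positivity) (by positivity)]
    exact hj.trans (by gcongr)
  exact abs_sub_le_iff.mpr ⟨(sub_nonpos.mpr hle).trans (by positivity), by linarith⟩

theorem IsSemialg.gridCell_subset {D : Set (Fin n → ℝ)} (hD : IsSemialg (· ∈ D)) :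
    IsSemialg fun z : ℕ → ℝ => gridCell (z n) (fun i => z i) ⊆ D := by
  have hmid (i : Fin n) : IsPoly fun z : ℕ → ℝ => z (n + n) * (z i + z (n + n)) :=
    .mul (.coord _) (.add (.coord (i : ℕ)) (.coord _))
  have hcell : IsSemialg fun z : ℕ → ℝ =>
      (∀ i : Fin n, z (i + n) ≤ z (n + n) * (z i + z (n + n)) ∧
        z (n + n) * (z i + z (n + n)) < z (i + n) + 1) → (fun i : Fin n => z i) ∈ D :=
    .imp (.all fun i => .and (.le (.coord _) (hmid i)) (.lt (hmid i) (.add (.coord _) .one)))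
      (hD.comp fun i => .coord (i : ℕ))
  have h := hcell.forall_append (n := n)
  simp only [append_add, append_val] at h
  exact h

end Grid

section Elementary

/-- Elementary functions of a sequence of natural numbers, of which only finitely many terms are
used. Sequences spare the bookkeeping of arities. -/
def IsElem (f : (ℕ → ℕ) → ℕ) : Prop :=
  ∃ (m : ℕ) (g : (Fin m → ℕ) → ℕ), Elem g ∧ ∀ ρ, f ρ = g fun i => ρ i

theorem isElem_of_elem1 {f : ℕ → ℕ} (hf : Elem1 f) : IsElem fun ρ => f (ρ 0) :=
  ⟨1, _, hf, fun _ => rfl⟩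

namespace IsElem

variable {f g b : (ℕ → ℕ) → ℕ}

theorem elem1 (hf : IsElem f) : Elem1 fun x => f fun _ => x := by
  obtain ⟨m, g, hg, hfg⟩ := hf
  simp only [hfg]
  exact .comp hg fun _ => .proj 0

theorem exists_of_le (hf : IsElem f) :
    ∃ m, ∀ M ≥ m, ∃ g : (Fin M → ℕ) → ℕ, Elem g ∧ ∀ ρ, f ρ = g fun i => ρ i := by
  obtain ⟨m, g, hg, hfg⟩ := hf
  exact ⟨m, fun M hM => ⟨_, .comp hg fun i => .proj (i.castLE hM), hfg⟩⟩

theorem comp {e : ℕ → (ℕ → ℕ) → ℕ} (hf : IsElem f) (he : ∀ i, IsElem (e i)) :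
    IsElem fun ρ => f fun i => e i ρ := by
  obtain ⟨m, g, hg, hfg⟩ := hf
  choose k hk using fun i => (he i).exists_of_le
  choose e' he' hee' using fun i : Fin m =>
    hk i _ (Finset.le_sup (f := fun i : Fin m => k i) (Finset.mem_univ i))
  exact ⟨_, _, .comp hg he', fun ρ => by simp only [hfg, hee']⟩

theorem coord (i : ℕ) : IsElem fun ρ => ρ i := ⟨i + 1, _, .proj (.last i), fun _ => rfl⟩

theorem cons {e₀ : (ℕ → ℕ) → ℕ} {e : ℕ → (ℕ → ℕ) → ℕ} (h₀ : IsElem e₀) (he : ∀ i, IsElem (e i))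
    (i : ℕ) : IsElem fun ρ => ElementaryPeriods.cons (e₀ ρ) (fun j => e j ρ) i := by
  cases i with
  | zero => exact h₀
  | succ i => exact he i

theorem add (hf : IsElem f) (hg : IsElem g) : IsElem fun ρ => f ρ + g ρ :=
  comp (f := fun ρ => ρ 0 + ρ 1) ⟨2, _, .add, fun _ => rfl⟩ (hf.cons fun _ => hg)

theorem mul (hf : IsElem f) (hg : IsElem g) : IsElem fun ρ => f ρ * g ρ :=
  comp (f := fun ρ => ρ 0 * ρ 1) ⟨2, _, .mul, fun _ => rfl⟩ (hf.cons fun _ => hg)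

theorem tsub (hf : IsElem f) (hg : IsElem g) : IsElem fun ρ => f ρ - g ρ :=
  comp (f := fun ρ => ρ 0 - ρ 1) ⟨2, _, .tsub, fun _ => rfl⟩ (hf.cons fun _ => hg)

theorem const (c : ℕ) : IsElem fun _ => c := by
  induction c with
  | zero => exact ⟨0, _, .zero, fun _ => rfl⟩
  | succ c ih => exact comp (f := fun ρ => ρ 0 + 1) ⟨1, _, .succ, fun _ => rfl⟩ fun _ => ih

theorem pow (hf : IsElem f) (n : ℕ) : IsElem fun ρ => f ρ ^ n := by
  induction n with
  | zero => simpa only [pow_zero] using const 1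
  | succ n ih => simpa only [pow_succ] using ih.mul hf

theorem exists_cons (hf : IsElem f) :
    ∃ (m : ℕ) (g : (Fin (m + 1) → ℕ) → ℕ), Elem g ∧
      ∀ t ρ, f (ElementaryPeriods.cons t ρ) = g (Fin.cons t fun i : Fin m => ρ i) := by
  obtain ⟨m, hm⟩ := hf.exists_of_le
  obtain ⟨g, hg, hfg⟩ := hm (m + 1) m.le_succ
  refine ⟨m, g, hg, fun t ρ => (hfg _).trans (congrArg g (funext fun i => ?_))⟩
  cases i using Fin.cases <;> rfl

theorem bsum (hf : IsElem f) (hb : IsElem b) :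
    IsElem fun ρ => ∑ t ∈ Finset.range (b ρ + 1), f (ElementaryPeriods.cons t ρ) := by
  obtain ⟨m, g, hg, hfg⟩ := hf.exists_cons
  have hsum : IsElem fun ρ =>
      ∑ t ∈ Finset.range (ρ 0 + 1), f (ElementaryPeriods.cons t (tail ρ)) :=
    ⟨m + 1, _, .bsum hg, fun ρ => Finset.sum_congr rfl fun t _ => hfg t _⟩
  exact hsum.comp (hb.cons coord)

theorem bprod (hf : IsElem f) (hb : IsElem b) :
    IsElem fun ρ => ∏ t ∈ Finset.range (b ρ + 1), f (ElementaryPeriods.cons t ρ) := by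
  obtain ⟨m, g, hg, hfg⟩ := hf.exists_cons
  have hprod : IsElem fun ρ =>
      ∏ t ∈ Finset.range (ρ 0 + 1), f (ElementaryPeriods.cons t (tail ρ)) :=
    ⟨m + 1, _, .bprod hg, fun ρ => Finset.prod_congr rfl fun t _ => hfg t _⟩
  exact hprod.comp (hb.cons coord)

theorem two_pow (hf : IsElem f) : IsElem fun ρ => 2 ^ f ρ := by
  have h := ((const 2).tsub ((const 1).tsub (coord 0))).bprod hf
  simpa [Finset.prod_range_succ'] using h

theorem boxSum (n : ℕ) (hf : IsElem f) (hb : IsElem b) :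
    IsElem fun ρ =>
      ∑ k ∈ Fintype.piFinset fun _ : Fin n => Finset.range (b ρ + 1), f (append k ρ) := by
  induction n generalizing f with
  | zero => simpa using hf
  | succ n ih =>
    have hinner : IsElem fun ρ =>
        ∑ t ∈ Finset.range (b (fun i => ρ (i + n)) + 1), f (ElementaryPeriods.cons t ρ) :=
      hf.bsum (hb.comp fun i => coord (i + n))
    convert ih hinner using 2 with ρ
    simp only [append_add]
    rw [← Finset.sum_product']
    refine Finset.sum_bij' (fun k _ => (Fin.tail k, k 0)) (fun v _ => Fin.cons v.2 v.1)
      (fun k hk => ?_) (fun v hv => ?_) (fun k _ => Fin.cons_self_tail k) (fun v _ => rfl)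
      fun k _ => rfl
    · rw [Fintype.mem_piFinset] at hk
      exact Finset.mk_mem_product (Fintype.mem_piFinset.mpr fun i => hk i.succ) (hk 0)
    · obtain ⟨hv₁, hv₂⟩ := Finset.mem_product.mp hv
      exact Fintype.mem_piFinset.mpr (Fin.cases hv₂ (Fintype.mem_piFinset.mp hv₁))

end IsElem

open MvPolynomial in
theorem exists_isElem_aeval_natCast (f : MvPolynomial ℕ ℚ) :
    ∃ (d : ℕ) (p q : (ℕ → ℕ) → ℕ), 0 < d ∧ IsElem p ∧ IsElem q ∧
      ∀ ρ : ℕ → ℕ, (d : ℝ) * aeval (fun i => (ρ i : ℝ)) f = p ρ - q ρ := by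
  induction f using MvPolynomial.induction_on with
  | C c =>
    refine ⟨c.den, fun _ => c.num.toNat, fun _ => (-c.num).toNat, c.den_pos, .const _, .const _,
      fun ρ => ?_⟩
    have hnum : (c.num.toNat : ℝ) - ((-c.num).toNat : ℝ) = c.num :=
      mod_cast c.num.toNat_sub_toNat_neg
    have hden : (c.den : ℝ) * c = c.num := mod_cast Rat.den_mul_eq_num c
    rw [hnum, aeval_C, eq_ratCast, hden]
  | add f g hf hg =>
    obtain ⟨d, p, q, hd, hp, hq, hpq⟩ := hf
    obtain ⟨d', p', q', hd', hp', hq', hpq'⟩ := hg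
    refine ⟨d * d', _, _, Nat.mul_pos hd hd',
      ((IsElem.const d').mul hp).add ((IsElem.const d).mul hp'),
      ((IsElem.const d').mul hq).add ((IsElem.const d).mul hq'), fun ρ => ?_⟩
    push_cast
    rw [map_add]
    linear_combination (d' : ℝ) * hpq ρ + (d : ℝ) * hpq' ρ
  | mul_X f i hf =>
    obtain ⟨d, p, q, hd, hp, hq, hpq⟩ := hf
    refine ⟨d, _, _, hd, hp.mul (.coord i), hq.mul (.coord i), fun ρ => ?_⟩
    push_cast
    rw [map_mul, aeval_X]
    linear_combination (ρ i : ℝ) * hpq ρ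

open Classical in
theorem IsSemialg.isElem_ite {p : (ℕ → ℝ) → Prop} (hp : IsSemialg p) :
    IsElem fun ρ => if p fun i => ρ i then 1 else 0 := by
  refine IsSemialg.induction (motive := fun p => IsElem fun ρ => if p fun i => ρ i then 1 else 0)
    (fun f => ?_) (fun p hp => ?_) (fun p q hp hq => ?_) hp
  · obtain ⟨d, p, q, hd, hp, hq, hpq⟩ := exists_isElem_aeval_natCast f
    convert (IsElem.const 1).tsub ((IsElem.const 1).tsub (hp.tsub hq)) using 2 with ρ
    have hpos : 0 < MvPolynomial.aeval (fun i => (ρ i : ℝ)) f ↔ q ρ < p ρ := by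
      rw [← mul_pos_iff_of_pos_left (Nat.cast_pos.mpr hd : (0 : ℝ) < d), hpq, sub_pos, Nat.cast_lt]
    simp only [hpos]
    split_ifs <;> lia
  · convert (IsElem.const 1).tsub hp using 2 with ρ
    by_cases h : p fun i => (ρ i : ℝ) <;> simp [h]
  · convert hp.mul hq using 2 with ρ
    by_cases h : p fun i => (ρ i : ℝ) <;> simp [h]

end Elementary

section ElementaryReals

open MeasureTheory Filter

theorem elemReal_of_eventually_le {a b : ℕ → ℕ} {α C : ℝ} (ha : Elem1 a) (hb : Elem1 b)
    (h : ∀ᶠ x : ℕ in atTop, |(a x : ℝ) / (b x + 1) - α| ≤ C / x) : ElemReal α := by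
  obtain ⟨x₀, hx₀⟩ := eventually_atTop.mp h
  obtain ⟨M, hM⟩ := exists_nat_gt (max C 0)
  obtain ⟨hCM, hM0⟩ := max_lt_iff.mp hM
  refine ⟨a, b, fun k => M * k + x₀, ha, hb,
    (((IsElem.const M).mul (.coord 0)).add (.const x₀)).elem1, fun k hk x hx => ?_⟩
  have hk0 : (0 : ℝ) < k := mod_cast hk
  have hMx : (M : ℝ) * k ≤ x := mod_cast (Nat.le_add_right _ _).trans hx
  refine (hx₀ x ((Nat.le_add_left _ _).trans hx)).trans_lt ?_
  rw [div_lt_div_iff₀ ((mul_pos hM0 hk0).trans_le hMx) hk0, one_mul]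
  exact (mul_lt_mul_of_pos_right hCM hk0).trans_le hMx

theorem natCast_tsub_eq_max (m n : ℕ) : ((m - n : ℕ) : ℝ) = max (m - n : ℝ) 0 := by
  rw [eq_sub_of_add_eq (mod_cast Nat.sub_add_eq_max m n : ((m - n : ℕ) : ℝ) + n = max (m : ℝ) n),
    ← max_sub_sub_right, sub_self]

theorem abs_tsub_div_sub_le {a a' d d' : ℕ} {α β : ℝ} (hd : 0 < d) (hd' : 0 < d') (hβα : β ≤ α) :
    |((a * d' - a' * d : ℕ) : ℝ) / (d * d') - (α - β)| ≤
      |(a : ℝ) / d - α| + |(a' : ℝ) / d' - β| := by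
  have hd0 : (0 : ℝ) < d := Nat.cast_pos.mpr hd
  have hd0' : (0 : ℝ) < d' := Nat.cast_pos.mpr hd'
  have hdiv : ((a * d' - a' * d : ℕ) : ℝ) / (d * d') = max ((a : ℝ) / d - a' / d') 0 := by
    rw [natCast_tsub_eq_max, ← max_div_div_right (mul_pos hd0 hd0').le, zero_div,
      div_sub_div _ _ hd0.ne' hd0'.ne']
    push_cast
    ring_nf
  calc |((a * d' - a' * d : ℕ) : ℝ) / (d * d') - (α - β)|
      = |max ((a : ℝ) / d - a' / d') 0 - max (α - β) 0| := by
        rw [hdiv, max_eq_left (sub_nonneg.mpr hβα)]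
    _ ≤ |(a : ℝ) / d - a' / d' - (α - β)| := abs_max_sub_max_le_abs ..
    _ ≤ |(a : ℝ) / d - α| + |(a' : ℝ) / d' - β| := by
        rw [sub_sub_sub_comm]
        exact abs_sub _ _

theorem elemReal_sub {α β : ℝ} (hα : ElemReal α) (hβ : ElemReal β) (hβα : β ≤ α) :
    ElemReal (α - β) := by
  obtain ⟨a, b, c, ha, hb, hc, h⟩ := hα
  obtain ⟨a', b', c', ha', hb', hc', h'⟩ := hβ
  have hA := isElem_of_elem1 ha
  have hA' := isElem_of_elem1 ha'
  have hB := (isElem_of_elem1 hb).add (.const 1)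
  have hB' := (isElem_of_elem1 hb').add (.const 1)
  have hdouble (i : ℕ) : IsElem fun ρ => 2 * ρ i := (IsElem.const 2).mul (.coord i)
  refine ⟨_, _, _, ((hA.mul hB').tsub (hA'.mul hB)).elem1,
    ((hB.mul hB').tsub (.const 1)).elem1,
    (((isElem_of_elem1 hc).comp hdouble).add ((isElem_of_elem1 hc').comp hdouble)).elem1,
    fun k hk x hx => ?_⟩
  have hden : (((b x + 1) * (b' x + 1) - 1 : ℕ) : ℝ) + 1 = (b x + 1 : ℕ) * (b' x + 1 : ℕ) := by
    exact_mod_cast Nat.sub_add_cancel (Nat.mul_pos (b x).succ_pos (b' x).succ_pos)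
  have hax := h (2 * k) (by lia) x ((Nat.le_add_right _ _).trans hx)
  have hax' := h' (2 * k) (by lia) x ((Nat.le_add_left _ _).trans hx)
  rw [hden]
  calc _ ≤ |(a x : ℝ) / (b x + 1 : ℕ) - α| + |(a' x : ℝ) / (b' x + 1 : ℕ) - β| :=
        abs_tsub_div_sub_le (b x).succ_pos (b' x).succ_pos hβα
    _ < 1 / (2 * k : ℕ) + 1 / (2 * k : ℕ) := by
        push_cast at hax hax' ⊢
        exact add_lt_add hax hax'
    _ = 1 / k := by
        push_cast
        ring

theorem isElem_card_innerCells {n : ℕ} {D : Set (Fin n → ℝ)} (hD : IsSemialg (· ∈ D))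
    {f : (ℕ → ℕ) → ℕ} (hf : IsElem f) : IsElem fun ρ => (innerCells D (f ρ)).card := by
  classical
  have hbound := ((IsElem.const 2).mul (.coord 0)).mul (.coord 0)
  have hcard := (hD.gridCell_subset.isElem_ite.boxSum n hbound).comp fun _ => hf
  simpa only [innerCells, Finset.card_filter, append_self, append_val] using hcard

theorem elemReal_volume {n : ℕ} {D : Set (Fin n → ℝ)} (hD : IsSemialg (· ∈ D))
    (hopen : IsOpen D) (hfin : volume D ≠ ⊤) : ElemReal (volume D).toReal := by
  obtain ⟨C, hC⟩ := exists_abs_card_innerCells_sub_le hD hopen hfin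
  have hscale := IsElem.two_pow (.coord 0)
  refine elemReal_of_eventually_le (C := C) (isElem_card_innerCells hD hscale).elem1
    ((hscale.pow n).tsub (.const 1)).elem1 (hC.mono fun x hx => ?_)
  have hden : (((2 ^ x) ^ n - 1 : ℕ) : ℝ) + 1 = (2 ^ x) ^ n := by
    exact_mod_cast Nat.sub_add_cancel (Nat.one_le_pow _ _ (by positivity))
  rwa [hden]

end ElementaryReals

section Region

open MeasureTheory MvPolynomial

variable {ℓ q : ℕ} (G : Fin q → MvPolynomial (Fin ℓ) ℚ) (P Q : MvPolynomial (Fin ℓ) ℚ)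

/-- The region below the graph of `P / Q` over the set where all `G i` are positive, the value
being the coordinate `0`. Writing `v 0 < P / Q` as `v 0 * Q ^ 2 < P * Q` makes it visibly
semialgebraic and open. -/
def hypograph : Set (Fin (ℓ + 1) → ℝ) :=
  {v | (∀ i, 0 < aeval (Fin.tail v) (G i)) ∧ 0 < v 0 ∧
    v 0 * aeval (Fin.tail v) Q ^ 2 < aeval (Fin.tail v) P * aeval (Fin.tail v) Q}

theorem isSemialg_hypograph : IsSemialg (· ∈ hypograph G P Q) := by
  have htail (f : MvPolynomial (Fin ℓ) ℚ) :
      IsPoly fun v : Fin (ℓ + 1) → ℝ => aeval (Fin.tail v) f :=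
    (IsPoly.aeval f).comp fun i => .coord i.succ
  exact .and (.all fun i => (htail (G i)).pos) (.and (IsPoly.coord 0).pos
    (.lt ((IsPoly.coord 0).mul ((htail Q).pow 2)) ((htail P).mul (htail Q))))

theorem isOpen_setOf_forall_aeval_pos :
    IsOpen {x : Fin ℓ → ℝ | ∀ i, 0 < aeval x (G i)} := by
  simp only [Set.ofPred_forall]
  exact isOpen_iInter_of_finite fun i => isOpen_lt continuous_const (continuous_aeval _)

theorem isOpen_hypograph : IsOpen (hypograph G P Q) := by
  have htail : Continuous (Fin.tail : (Fin (ℓ + 1) → ℝ) → Fin ℓ → ℝ) := by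
    unfold Fin.tail; fun_prop
  have hcont (f : MvPolynomial (Fin ℓ) ℚ) := (continuous_aeval f).comp htail
  exact ((isOpen_setOf_forall_aeval_pos G).preimage htail).inter
    ((isOpen_lt continuous_const (continuous_apply 0)).inter
      (isOpen_lt ((continuous_apply 0).mul ((hcont Q).pow 2)) ((hcont P).mul (hcont Q))))

variable {G Q}

theorem hypograph_eq_preimage (hQ : ∀ x : Fin ℓ → ℝ, (∀ i, 0 < aeval x (G i)) → aeval x Q ≠ 0) :
    hypograph G P Q = (fun v => (Fin.tail v, v 0)) ⁻¹'
      regionBetween 0 (fun x : Fin ℓ → ℝ => aeval x P / aeval x Q)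
        {x | ∀ i, 0 < aeval x (G i)} := by
  ext v
  refine and_congr_right fun hG => and_congr_right fun _ => ?_
  have hq := hQ _ hG
  rw [← lt_div_iff₀ (by positivity), pow_two, mul_div_mul_right _ _ hq]

theorem volume_hypograph (hQ : ∀ x : Fin ℓ → ℝ, (∀ i, 0 < aeval x (G i)) → aeval x Q ≠ 0) :
    volume (hypograph G P Q) = ∫⁻ x in {x : Fin ℓ → ℝ | ∀ i, 0 < aeval x (G i)},
      ENNReal.ofReal (aeval x P / aeval x Q) := by
  have hpres : MeasurePreserving (fun v : Fin (ℓ + 1) → ℝ => (Fin.tail v, v 0)) volume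
      ((volume : Measure (Fin ℓ → ℝ)).prod volume) :=
    Measure.measurePreserving_swap.comp
      (volume_preserving_piFinSuccAbove (fun _ : Fin (ℓ + 1) => ℝ) 0)
  have hmeas : Measurable fun x : Fin ℓ → ℝ => (aeval x P / aeval x Q : ℝ) :=
    (continuous_aeval P).measurable.div (continuous_aeval Q).measurable
  have hD := (isOpen_setOf_forall_aeval_pos G).measurableSet
  rw [hypograph_eq_preimage P hQ, hpres.measure_preimage
    (measurableSet_regionBetween measurable_zero hmeas hD).nullMeasurableSet,
    volume_regionBetween_eq_lintegral' measurable_zero hmeas hD]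
  simp only [sub_zero]

theorem setIntegral_eq_volume_hypograph_sub
    (hQ : ∀ x : Fin ℓ → ℝ, (∀ i, 0 < aeval x (G i)) → aeval x Q ≠ 0)
    (hint : IntegrableOn (fun x : Fin ℓ → ℝ => (aeval x P / aeval x Q : ℝ))
      {x | ∀ i, 0 < aeval x (G i)}) :
    ∫ x in {x : Fin ℓ → ℝ | ∀ i, 0 < aeval x (G i)}, (aeval x P / aeval x Q : ℝ) =
      (volume (hypograph G P Q)).toReal - (volume (hypograph G (-P) Q)).toReal := by
  simp only [integral_eq_lintegral_pos_part_sub_lintegral_neg_part hint, volume_hypograph _ hQ,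
    map_neg, neg_div]

theorem elemReal_volume_hypograph
    (hQ : ∀ x : Fin ℓ → ℝ, (∀ i, 0 < aeval x (G i)) → aeval x Q ≠ 0)
    (hint : IntegrableOn (fun x : Fin ℓ → ℝ => (aeval x P / aeval x Q : ℝ))
      {x | ∀ i, 0 < aeval x (G i)}) :
    ElemReal (volume (hypograph G P Q)).toReal :=
  elemReal_volume (isSemialg_hypograph G P Q) (isOpen_hypograph G P Q)
    (volume_hypograph P hQ ▸ hint.lintegral_lt_top.ne)

end Region

end ElementaryPeriods

/-- If `D = {x ∈ ℝ^ℓ | G₁(x) > 0, …, G_q(x) > 0}` with rational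
coefficient polynomials `Gᵢ`, `P, Q` are rational-coefficient polynomials with
`Q` nonvanishing on `D`, and `∫_D P/Q` is absolutely convergent with
nonnegative value `α`, then `α` is an elementary real number. -/
theorem period_elemReal
    (ℓ q : ℕ) (G : Fin q → MvPolynomial (Fin ℓ) ℚ)
    (P Q : MvPolynomial (Fin ℓ) ℚ)
    (D : Set (Fin ℓ → ℝ))
    (hD : D = {x : Fin ℓ → ℝ | ∀ i, 0 < MvPolynomial.aeval x (G i)})
    (hQ : ∀ x ∈ D, MvPolynomial.aeval x Q ≠ 0)
    (hint : MeasureTheory.IntegrableOn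
      (fun x => MvPolynomial.aeval x P / MvPolynomial.aeval x Q) D)
    (α : ℝ)
    (hα : α = ∫ x in D, MvPolynomial.aeval x P / MvPolynomial.aeval x Q)
    (hα0 : 0 ≤ α) :
    ElemReal α := by
  subst hD
  have hint_neg : MeasureTheory.IntegrableOn
      (fun x => MvPolynomial.aeval x (-P) / MvPolynomial.aeval x Q)
      {x : Fin ℓ → ℝ | ∀ i, 0 < MvPolynomial.aeval x (G i)} := by
    simp only [map_neg, neg_div]
    exact hint.neg
  rw [ElementaryPeriods.setIntegral_eq_volume_hypograph_sub P hQ hint] at hα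
  rw [hα, sub_nonneg] at hα0
  rw [hα]
  exact ElementaryPeriods.elemReal_sub (ElementaryPeriods.elemReal_volume_hypograph P hQ hint)
    (ElementaryPeriods.elemReal_volume_hypograph (-P) hQ hint_neg) hα0
end

section
/- There exists a computable real number that is not an elementary real number: there exist computable functions a, b, c : ℕ → ℕ and a nonnegative real number α such that |a(x)/(b(x)+1) − α| < 1/k for all k ≥ 1 and all x ≥ c(k), yet α ∉ R_Elem. -/
/-! Every elementary function is primitive recursive, and the primitive recursive functions
`ℕ → ℕ` are the rows of a single computable function `U`. Cantor's argument, made effective,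
produces from a computable sequence of rationals `q m` a computable real `α` with
`|q m - α| ≥ 4⁻⁽ᵐ⁺¹⁾` for all `m`: the `m`-th base-`4` digit of `α` is `0` or `3`, whichever keeps
`α` away from `q m`. Take for `q m` the value that the `m`-th triple of rows of `U` prescribes for
a real with precision `4⁻⁽ᵐ⁺¹⁾`; then no triple of rows approximates `α`. -/

section PrimrecClosure

variable {α σ : Type*} [Primcodable α] [Primcodable σ]

theorem primrec_pi_fin {n : ℕ} {f : α → Fin n → σ} (hf : ∀ i, Primrec fun a => f a i) :
    Primrec f :=
  Primrec.fin_curry.2 (Primrec.fin_curry₁.2 hf).swap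

theorem primrec_fin_cons {n : ℕ} {g : α → σ} {h : α → Fin n → σ} (hg : Primrec g)
    (hh : Primrec h) : Primrec fun a => (Fin.cons (g a) (h a) : Fin (n + 1) → σ) :=
  have coord (i : Fin n) : Primrec fun a => h a i := Primrec.fin_app.comp hh (Primrec.const i)
  primrec_pi_fin (Fin.cases hg coord)

@[to_additive]
theorem primrec_prod_range {M : Type*} [CommMonoid M] [Primcodable M]
    (hmul : Primrec₂ ((· * ·) : M → M → M)) {f : α → ℕ → M} (hf : Primrec₂ f) {g : α → ℕ}
    (hg : Primrec g) : Primrec fun a => ∏ t ∈ Finset.range (g a), f a t := by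
  have hstep : Primrec₂ fun (a : α) (p : ℕ × M) => p.2 * f a p.1 :=
    hmul.comp (Primrec.snd.comp Primrec.snd)
      (hf.comp Primrec.fst (Primrec.fst.comp Primrec.snd))
  refine (Primrec.nat_rec' hg (Primrec.const 1) hstep).of_eq fun a => ?_
  induction g a with
  | zero => rfl
  | succ n ih => simp only [Finset.prod_range_succ, ih]

theorem primrec₂_nat_pow : Primrec₂ ((· ^ ·) : ℕ → ℕ → ℕ) :=
  Primrec₂.unpaired'.1 Nat.Primrec.pow

end PrimrecClosure

theorem Elem.primrec {n : ℕ} {f : (Fin n → ℕ) → ℕ} (hf : Elem f) : Primrec f := by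
  have coord {n : ℕ} (i : Fin n) : Primrec fun x : Fin n → ℕ => x i :=
    Primrec.fin_app.comp Primrec.id (Primrec.const i)
  have consTail {n : ℕ} : Primrec fun p : (Fin (n + 1) → ℕ) × ℕ =>
      (Fin.cons p.2 (fun i => p.1 i.succ) : Fin (n + 1) → ℕ) :=
    primrec_fin_cons Primrec.snd (primrec_pi_fin fun i => (coord i.succ).comp Primrec.fst)
  induction hf with
  | zero => exact Primrec.const 0
  | succ => exact Primrec.succ.comp (coord 0)
  | proj i => exact coord i
  | add => exact Primrec.nat_add.comp (coord 0) (coord 1)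
  | mul => exact Primrec.nat_mul.comp (coord 0) (coord 1)
  | tsub => exact Primrec.nat_sub.comp (coord 0) (coord 1)
  | comp _ _ hf hg => exact hf.comp (primrec_pi_fin hg)
  | bsum _ hf =>
    exact primrec_sum_range Primrec.nat_add (hf.comp consTail).to₂
      (Primrec.succ.comp (coord 0))
  | bprod _ hf =>
    exact primrec_prod_range Primrec.nat_mul (hf.comp consTail).to₂
      (Primrec.succ.comp (coord 0))

theorem Elem1.primrec {f : ℕ → ℕ} (hf : Elem1 f) : Primrec f :=
  (Elem.primrec hf).comp (primrec_pi_fin fun _ => Primrec.id)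

section UniversalFunction

open Nat.Partrec (Code)

/-- Replaces every unbounded search in a code by the zero function. What remains computes precisely
the primitive recursive functions, so it can be evaluated without testing for totality. -/
def eraseSearch : Code → Code
  | .zero => .zero
  | .succ => .succ
  | .left => .left
  | .right => .right
  | .pair c d => .pair (eraseSearch c) (eraseSearch d)
  | .comp c d => .comp (eraseSearch c) (eraseSearch d)
  | .prec c d => .prec (eraseSearch c) (eraseSearch d)
  | .rfind' _ => .zero

theorem primrec_eraseSearch : Primrec eraseSearch := by
  have hc : Primrec fun p : Code × Code × Code × Code × Code => p.2.2.2.1 :=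
    Primrec.fst.comp (Primrec.snd.comp (Primrec.snd.comp Primrec.snd))
  have hd : Primrec fun p : Code × Code × Code × Code × Code => p.2.2.2.2 :=
    Primrec.snd.comp (Primrec.snd.comp (Primrec.snd.comp Primrec.snd))
  have hrec := Code.primrec_recOn (α := Code) (σ := Code) Primrec.id (Primrec.const Code.zero)
    (Primrec.const Code.succ) (Primrec.const Code.left) (Primrec.const Code.right)
    (pr := fun _ _ _ c d => .pair c d) (Code.primrec₂_pair.comp hc hd)
    (co := fun _ _ _ c d => .comp c d) (Code.primrec₂_comp.comp hc hd)
    (pc := fun _ _ _ c d => .prec c d) (Code.primrec₂_prec.comp hc hd)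
    (rf := fun _ _ _ => .zero) (Primrec.const Code.zero)
  refine hrec.of_eq fun c => ?_
  induction c <;> simp_all [eraseSearch]

theorem eval_eraseSearch_dom (c : Code) (n : ℕ) : ((eraseSearch c).eval n).Dom := by
  induction c generalizing n with
  | zero | succ | left | right | rfind' => trivial
  | pair c d hc hd => exact ⟨hc n, hd n⟩
  | comp c d hc hd => exact ⟨hd n, hc _⟩
  | prec c d hc hd =>
    rw [← Nat.pair_unpair n]
    induction n.unpair.2 with
    | zero => simpa only [eraseSearch, Code.eval_prec_zero] using hc n.unpair.1
    | succ k ih =>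
      rw [eraseSearch, Code.eval_prec_succ]
      exact ⟨ih, hd _⟩

theorem exists_eval_eraseSearch_eq {f : ℕ → ℕ} (hf : Nat.Primrec f) :
    ∃ c, (eraseSearch c).eval = f := by
  induction hf with
  | zero => exact ⟨.zero, rfl⟩
  | succ => exact ⟨.succ, rfl⟩
  | left => exact ⟨.left, rfl⟩
  | right => exact ⟨.right, rfl⟩
  | pair _ _ hf hg =>
    obtain ⟨c, hc⟩ := hf
    obtain ⟨d, hd⟩ := hg
    exact ⟨.pair c d, funext fun n => by simp [eraseSearch, Code.eval, hc, hd, Seq.seq]⟩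
  | comp _ _ hf hg =>
    obtain ⟨c, hc⟩ := hf
    obtain ⟨d, hd⟩ := hg
    refine ⟨.comp c d, funext fun n => ?_⟩
    simp only [eraseSearch, Code.eval, hc, hd]
    exact Part.bind_some _ _
  | prec _ _ hf hg =>
    obtain ⟨c, hc⟩ := hf
    obtain ⟨d, hd⟩ := hg
    refine ⟨.prec c d, funext fun n => ?_⟩
    simp only [eraseSearch, Code.eval, hc, hd, Nat.unpaired, PFun.coe_val]
    induction n.unpair.2 with
    | zero => rfl
    | succ k ih =>
      simp only [ih]
      exact Part.bind_some _ _

theorem exists_computable₂_forall_primrec_eq_row :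
    ∃ U : ℕ → ℕ → ℕ, Computable₂ U ∧ ∀ f : ℕ → ℕ, Primrec f → ∃ m, U m = f := by
  let code (m : ℕ) : Code := eraseSearch (Denumerable.ofNat Code m)
  have hcode : Computable code := primrec_eraseSearch.to_comp.comp (Computable.ofNat Code)
  refine ⟨fun m n => ((code m).eval n).get (eval_eraseSearch_dom _ n),
    (Code.eval_part.comp (hcode.comp Computable.fst) Computable.snd).of_eq_tot
      fun p => Part.get_mem _, fun f hf => ?_⟩
  obtain ⟨c, hc⟩ := exists_eval_eraseSearch_eq (Primrec.nat_iff.1 hf)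
  refine ⟨Encodable.encode c, funext fun n => ?_⟩
  simp only [code, Denumerable.ofNat_encode, hc, PFun.coe_val, Part.get_some]

end UniversalFunction

/-- The sequence of rationals `a x / (b x + 1)` converges to `α` with modulus of convergence `c`. -/
def ApproximatesWith (a b c : ℕ → ℕ) (α : ℝ) : Prop :=
  ∀ k : ℕ, 1 ≤ k → ∀ x : ℕ, c k ≤ x → |(a x : ℝ) / ((b x : ℝ) + 1) - α| < 1 / (k : ℝ)

/-- The `F`-computable reals, for a class `F` of functions `ℕ → ℕ`; `ElemReal` is the case
`F = Elem1`. -/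
def RealIn (F : (ℕ → ℕ) → Prop) (α : ℝ) : Prop :=
  ∃ a b c : ℕ → ℕ, F a ∧ F b ∧ F c ∧ ApproximatesWith a b c α

theorem RealIn.mono {F G : (ℕ → ℕ) → Prop} (hFG : ∀ f, F f → G f) {α : ℝ} :
    RealIn F α → RealIn G α :=
  fun ⟨a, b, c, ha, hb, hc, h⟩ => ⟨a, b, c, hFG a ha, hFG b hb, hFG c hc, h⟩

section Expansions

open Set

variable {β : ℕ} {N : ℕ → ℕ}

theorem exists_mem_Icc_div_pow (hle : ∀ n, β * N n ≤ N (n + 1))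
    (hlt : ∀ n, N (n + 1) < β * (N n + 1)) :
    ∃ α : ℝ, ∀ n, α ∈ Icc ((N n : ℝ) / β ^ n) ((N n + 1) / β ^ n) := by
  have hβ : (0 : ℝ) < β :=
    Nat.cast_pos.2 (Nat.pos_of_ne_zero fun h => by simpa [h] using hlt 0)
  have hmono : Monotone fun n => (N n : ℝ) / β ^ n := monotone_nat_of_le_succ fun n => by
    rw [pow_succ', ← mul_div_mul_left (N n : ℝ) _ hβ.ne']
    gcongr
    exact_mod_cast hle n
  have hanti : Antitone fun n => ((N n : ℝ) + 1) / β ^ n := antitone_nat_of_succ_le fun n => by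
    rw [pow_succ', ← mul_div_mul_left ((N n : ℝ) + 1) _ hβ.ne']
    gcongr
    exact_mod_cast hlt n
  exact ⟨_, mem_iInter.1 (hmono.ciSup_mem_iInter_Icc_of_antitone hanti fun n => by
    dsimp only; gcongr; linarith)⟩

theorem realIn_computable_of_mem_Icc_div_pow (hβ : 1 < β) (hN : Computable N) {α : ℝ}
    (hα : ∀ n, α ∈ Icc ((N n : ℝ) / β ^ n) ((N n + 1) / β ^ n)) : RealIn Computable α := by
  have hden : Primrec fun n => β ^ n - 1 :=
    Primrec.pred.comp (primrec₂_nat_pow.comp (Primrec.const β) Primrec.id)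
  refine ⟨N, fun n => β ^ n - 1, id, hN, hden.to_comp, Computable.id, fun k hk x hx => ?_⟩
  have hcast : ((β ^ x - 1 : ℕ) : ℝ) + 1 = β ^ x := by
    exact_mod_cast Nat.sub_add_cancel (Nat.one_le_pow _ _ (by lia))
  have hkx : (k : ℝ) < β ^ x := by exact_mod_cast hx.trans_lt (Nat.lt_pow_self hβ)
  obtain ⟨hlo, hhi⟩ := hα x
  rw [add_div] at hhi
  calc |(N x : ℝ) / (((β ^ x - 1 : ℕ) : ℝ) + 1) - α| ≤ 1 / β ^ x := by
        rw [hcast, abs_le]; constructor <;> linarith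
    _ < 1 / k := one_div_lt_one_div_of_lt (by exact_mod_cast hk) hkx

end Expansions

section Diagonalization

variable {a b : ℕ → ℕ}

/-- The first `m` base-`4` digits, read as an integer, of a real in `[0, 1]` that avoids all the
rationals `a m / (b m + 1)`. Each new digit, `0` or `3`, selects the outer quarter of the current
interval on the other side of its midpoint from `a m / (b m + 1)`. -/
def avoidingPrefix (a b : ℕ → ℕ) : ℕ → ℕ
  | 0 => 0
  | m + 1 => 4 * avoidingPrefix a b m +
      if a m * 4 ^ (m + 1) < (4 * avoidingPrefix a b m + 2) * (b m + 1) then 3 else 0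

theorem computable_avoidingPrefix (ha : Computable a) (hb : Computable b) :
    Computable (avoidingPrefix a b) := by
  have hmul {γ : Type} [Primcodable γ] {f g : γ → ℕ} (hf : Computable f) (hg : Computable g) :
      Computable fun x => f x * g x := Primrec.nat_mul.to_comp.comp hf hg
  have hm : Computable fun p : ℕ × ℕ × ℕ => p.2.1 := Computable.fst.comp Computable.snd
  have hs : Computable fun p : ℕ × ℕ × ℕ => 4 * p.2.2 :=
    hmul (Computable.const 4) (Computable.snd.comp Computable.snd)
  have hlhs : Computable fun p : ℕ × ℕ × ℕ => a p.2.1 * 4 ^ (p.2.1 + 1) :=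
    hmul (ha.comp hm) (primrec₂_nat_pow.to_comp.comp (Computable.const 4)
      (Computable.succ.comp hm))
  have hrhs : Computable fun p : ℕ × ℕ × ℕ => (4 * p.2.2 + 2) * (b p.2.1 + 1) :=
    hmul (Computable.succ.comp (Computable.succ.comp hs)) (Computable.succ.comp (hb.comp hm))
  have hdigit : Computable fun p : ℕ × ℕ × ℕ =>
      if a p.2.1 * 4 ^ (p.2.1 + 1) < (4 * p.2.2 + 2) * (b p.2.1 + 1) then 3 else 0 :=
    (Computable.cond (Primrec.nat_lt.decide.to_comp.comp hlhs hrhs) (Computable.const 3)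
      (Computable.const 0)).of_eq fun p => Bool.cond_decide ..
  refine (Computable.nat_rec Computable.id (Computable.const 0)
    (Primrec.nat_add.to_comp.comp hs hdigit).to₂).of_eq fun n => ?_
  induction n with
  | zero => rfl
  | succ m ih => simp only [id, avoidingPrefix] at ih ⊢; simp only [ih]

theorem le_abs_sub_of_mem_Icc_avoidingPrefix {α : ℝ} {m : ℕ}
    (hα : α ∈ Set.Icc ((avoidingPrefix a b (m + 1) : ℝ) / 4 ^ (m + 1))
      ((avoidingPrefix a b (m + 1) + 1) / 4 ^ (m + 1))) :
    1 / 4 ^ (m + 1) ≤ |(a m : ℝ) / (b m + 1) - α| := by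
  obtain ⟨hlo, hhi⟩ := hα
  set s := avoidingPrefix a b m
  have hb : (0 : ℝ) < b m + 1 := by positivity
  have hpow : (0 : ℝ) < 4 ^ (m + 1) := by positivity
  rw [avoidingPrefix] at hlo hhi
  split_ifs at hlo hhi with hcase
  · have hq : (a m : ℝ) / (b m + 1) < (4 * s + 2) / 4 ^ (m + 1) := by
      rw [div_lt_div_iff₀ hb hpow]
      exact_mod_cast hcase
    calc (1 : ℝ) / 4 ^ (m + 1)
        = ((4 * s + 3 : ℕ) : ℝ) / 4 ^ (m + 1) - (4 * s + 2) / 4 ^ (m + 1) := by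
          push_cast; ring
      _ ≤ α - a m / (b m + 1) := by linarith
      _ ≤ |a m / (b m + 1) - α| := by rw [abs_sub_comm]; exact le_abs_self _
  · have hq : (4 * s + 2 : ℝ) / 4 ^ (m + 1) ≤ a m / (b m + 1) := by
      rw [div_le_div_iff₀ hpow hb]
      exact_mod_cast not_lt.1 hcase
    calc (1 : ℝ) / 4 ^ (m + 1)
        = (4 * s + 2) / 4 ^ (m + 1) - (((4 * s + 0 : ℕ) : ℝ) + 1) / 4 ^ (m + 1) := by
          push_cast; ring
      _ ≤ a m / (b m + 1) - α := by linarith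
      _ ≤ |a m / (b m + 1) - α| := le_abs_self _

theorem exists_realIn_computable_avoiding (ha : Computable a) (hb : Computable b) :
    ∃ α : ℝ, 0 ≤ α ∧ RealIn Computable α ∧
      ∀ m, 1 / 4 ^ (m + 1) ≤ |(a m : ℝ) / (b m + 1) - α| := by
  obtain ⟨α, hα⟩ := exists_mem_Icc_div_pow (β := 4) (N := avoidingPrefix a b)
    (fun m => by rw [avoidingPrefix]; lia) (fun m => by rw [avoidingPrefix]; split_ifs <;> lia)
  refine ⟨α, ?_, realIn_computable_of_mem_Icc_div_pow (by simp)
    (computable_avoidingPrefix ha hb) hα, fun m => ?_⟩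
  · exact le_trans (by positivity) (hα 0).1
  · exact le_abs_sub_of_mem_Icc_avoidingPrefix (by exact_mod_cast hα (m + 1))

theorem exists_realIn_computable_not_approximatesWith_rows {U : ℕ → ℕ → ℕ} (hU : Computable₂ U) :
    ∃ α : ℝ, 0 ≤ α ∧ RealIn Computable α ∧ ∀ i j k, ¬ ApproximatesWith (U i) (U j) (U k) α := by
  let index (m : ℕ) : ℕ × ℕ × ℕ := Denumerable.ofNat (ℕ × ℕ × ℕ) m
  let point (m : ℕ) : ℕ := U (index m).2.2 (4 ^ (m + 1))
  have hindex : Computable index := Computable.ofNat (ℕ × ℕ × ℕ)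
  have hpoint : Computable point :=
    hU.comp (Computable.snd.comp (Computable.snd.comp hindex))
      (primrec₂_nat_pow.to_comp.comp (Computable.const 4) Computable.succ)
  obtain ⟨α, hα₀, hα, havoid⟩ := exists_realIn_computable_avoiding
    (hU.comp (Computable.fst.comp hindex) hpoint)
    (hU.comp (Computable.fst.comp (Computable.snd.comp hindex)) hpoint)
  refine ⟨α, hα₀, hα, fun i j k happrox => ?_⟩
  obtain ⟨m, hm⟩ : ∃ m, index m = (i, j, k) :=
    ⟨Encodable.encode (i, j, k), Denumerable.ofNat_encode _⟩
  have hclose := happrox (4 ^ (m + 1)) (Nat.one_le_pow _ _ (by simp)) (point m)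
    (by simp [point, hm])
  have hfar := havoid m
  simp only [hm] at hfar
  push_cast at hclose
  exact hfar.not_gt hclose

end Diagonalization

theorem exists_computable_real_not_elemReal_general :
    ∃ α : ℝ, 0 ≤ α ∧ RealIn Computable α ∧ ¬ RealIn Primrec α := by
  obtain ⟨U, hU, hrow⟩ := exists_computable₂_forall_primrec_eq_row
  obtain ⟨α, hα₀, hα, hne⟩ := exists_realIn_computable_not_approximatesWith_rows hU
  refine ⟨α, hα₀, hα, ?_⟩
  rintro ⟨a, b, c, ha, hb, hc, happrox⟩
  obtain ⟨i, rfl⟩ := hrow a ha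
  obtain ⟨j, rfl⟩ := hrow b hb
  obtain ⟨k, rfl⟩ := hrow c hc
  exact hne i j k happrox

/-- There is a computable real number which is not an elementary
real number: computable functions `a, b, c` approximating a nonnegative real
`α` in the required sense, with `α ∉ ℝ_Elem`. -/
theorem exists_computable_real_not_elemReal :
    ∃ (a b c : ℕ → ℕ) (α : ℝ),
      Computable a ∧ Computable b ∧ Computable c ∧ 0 ≤ α ∧
      (∀ k : ℕ, 1 ≤ k → ∀ x : ℕ, c k ≤ x →
        |(a x : ℝ) / ((b x : ℝ) + 1) - α| < 1 / (k : ℝ)) ∧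
      ¬ ElemReal α := by
  obtain ⟨α, hα₀, ⟨a, b, c, ha, hb, hc, happrox⟩, hα⟩ :=
    exists_computable_real_not_elemReal_general
  exact ⟨a, b, c, α, ha, hb, hc, hα₀, happrox, mt (RealIn.mono fun _ => Elem1.primrec) hα⟩
end
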